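/- arXiv:2407.01341 — 2 statements merged into one kernel-verified Lean document; each statement's English description precedes it below -/
import Mathlib

section
/- If μ₁(I_π, p) = 3 for a positive log-concave weight p ∈ L¹(I_π) such that ψ_p ∈ 𝒜(I_π), then ψ_p(x) = tan x and p(x) = k cos²x for some positive constant k. -/
open MeasureTheory Real Set Filter
open scoped ENNReal

noncomputable section

/-- Test class for the Dirichlet eigenvalue with measure potential on `(a,b)`:
`C¹` functions vanishing outside the open interval (a core of `H¹₀`). -/
def TestFun (a b : ℝ) (v : ℝ → ℝ) : Prop :=
  ContDiff ℝ 1 v ∧ ∀ x ∉ Ioo a b, v x = 0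

/-- Rayleigh quotient for the Dirichlet eigenvalue with (nonnegative, possibly infinite)
measure potential `q` on the interval `(a,b)`. -/
def dirRQ (a b : ℝ) (q : Measure ℝ) (v : ℝ → ℝ) : ℝ≥0∞ :=
  ((∫⁻ x in Ioo a b, ENNReal.ofReal ((deriv v x) ^ 2)) +
      ∫⁻ x in Ioo a b, ENNReal.ofReal ((v x) ^ 2) ∂q) /
    ∫⁻ x in Ioo a b, ENNReal.ofReal ((v x) ^ 2)

/-- `λ₁((a,b), q)`, the first Dirichlet eigenvalue with measure potential `q`. -/
def lam1 (a b : ℝ) (q : Measure ℝ) : ℝ≥0∞ :=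
  ⨅ (v : ℝ → ℝ)
    (_ : TestFun a b v ∧ (∫⁻ x in Ioo a b, ENNReal.ofReal ((v x) ^ 2)) ≠ 0),
    dirRQ a b q v

/-- The class `𝒜(I_π)`: an increasing function `psi` with finiteness domain `dom ⊆ I_π`
(an interval), satisfying the improved-monotonicity gap condition, together with the
measure `nu` representing its distributional derivative `ψ'` on `dom`. -/
structure PsiA where
  dom : Set ℝ
  domSub : dom ⊆ Ioo (-(π / 2)) (π / 2)
  domConn : dom.OrdConnected
  psi : ℝ → ℝ
  mono : MonotoneOn psi dom
  gap : ∀ ⦃x⦄, x ∈ dom → ∀ ⦃y⦄, y ∈ dom → x < y →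
    2 * tan ((y - x) / 2) ≤ psi y - psi x
  nu : Measure ℝ
  nu_eq : ∀ ⦃x⦄, x ∈ dom → ∀ ⦃y⦄, y ∈ dom → x ≤ y →
    nu (Ioc x y) = ENNReal.ofReal (psi y - psi x)

/-- The measure `ψ'`, extended by `+∞` on `I_π \ dom ψ`. -/
def PsiA.derivM (P : PsiA) : Measure ℝ :=
  P.nu.restrict P.dom + (∞ : ℝ≥0∞) • volume.restrict (Ioo (-(π / 2)) (π / 2) \ P.dom)

/-- The measure `ψ² dx`, extended by `+∞` on `I_π \ dom ψ`. -/
def PsiA.sqM (P : PsiA) : Measure ℝ :=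
  (volume.restrict P.dom).withDensity (fun x => ENNReal.ofReal ((P.psi x) ^ 2)) +
    (∞ : ℝ≥0∞) • volume.restrict (Ioo (-(π / 2)) (π / 2) \ P.dom)

/-- The measure `q = ψ' + ψ²`, extended by `+∞` on `I_π \ dom ψ`. -/
def PsiA.qM (P : PsiA) : Measure ℝ :=
  P.nu.restrict P.dom +
    (volume.restrict P.dom).withDensity (fun x => ENNReal.ofReal ((P.psi x) ^ 2)) +
    (∞ : ℝ≥0∞) • volume.restrict (Ioo (-(π / 2)) (π / 2) \ P.dom)

/-- The function `cos² x` on `I_π`, extended by zero. -/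
def cosSq : ℝ → ℝ := fun x => if x ∈ Ioo (-(π / 2)) (π / 2) then cos x ^ 2 else 0

/-- The measure with density `1 + 2 tan² x` on `I_π`. -/
def tanWeight : Measure ℝ :=
  (volume.restrict (Ioo (-(π / 2)) (π / 2))).withDensity
    fun x => ENNReal.ofReal (1 + 2 * tan x ^ 2)

/-- Rayleigh quotient for the weighted Neumann eigenvalue on `(a,b)` with weight `p`. -/
def neuRQ (a b : ℝ) (p v : ℝ → ℝ) : ℝ≥0∞ :=
  (∫⁻ x in Ioo a b, ENNReal.ofReal ((deriv v x) ^ 2 * p x)) /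
    ∫⁻ x in Ioo a b, ENNReal.ofReal ((v x) ^ 2 * p x)

/-- Admissibility for the weighted Neumann eigenvalue on `(a,b)`:
`v ∈ H¹_loc ∩ L²(p dx)` with zero `p`-mean. -/
def neuAdm (a b : ℝ) (p v : ℝ → ℝ) : Prop :=
  ContDiffOn ℝ 1 v (Ioo a b) ∧
    (∫⁻ x in Ioo a b, ENNReal.ofReal ((v x) ^ 2 * p x)) ≠ 0 ∧
    (∫⁻ x in Ioo a b, ENNReal.ofReal ((v x) ^ 2 * p x)) ≠ ∞ ∧
    (∫ x in Ioo a b, v x * p x) = 0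

/-- `μ₁((a,b), p)`, the first nontrivial weighted Neumann eigenvalue. -/
def mu1 (a b : ℝ) (p : ℝ → ℝ) : ℝ≥0∞ :=
  ⨅ (v : ℝ → ℝ) (_ : neuAdm a b p v), neuRQ a b p v

noncomputable section
open MeasureTheory Real Set Filter
open scoped ENNReal Topology NNReal

/-- the open interval `(-π/2, π/2)` -/
def Ipi : Set ℝ := Ioo (-(π / 2)) (π / 2)

/-- Working hypotheses on the weight. -/
structure Su (p ψ : ℝ → ℝ) : Prop where
  pos : ∀ x ∈ Ipi, 0 < p x
  cont : ContinuousOn p Ipi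
  tang : ∀ y ∈ Ipi, ∀ z ∈ Ipi, p z ≤ p y * exp (-2 * ψ y * (z - y))
  mono : MonotoneOn ψ Ipi
  gap : ∀ x ∈ Ipi, ∀ y ∈ Ipi, x < y → 2 * tan ((y - x) / 2) ≤ ψ y - ψ x

/-- Right-hand side of the Pruefer equation. -/
def prF (p : ℝ → ℝ) (x θ : ℝ) : ℝ := cos θ ^ 2 / p x + 3 * p x * sin θ ^ 2

/-- Pruefer solutions. -/
def Sol (p θ : ℝ → ℝ) : Prop := ∀ x ∈ Ipi, HasDerivAt θ (prF p x (θ x)) x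

lemma Ipi_neg {x : ℝ} (h : x ∈ Ipi) : -x ∈ Ipi := by
  unfold Ipi at *; constructor <;> linarith [h.1, h.2]

lemma zero_mem_Ipi : (0 : ℝ) ∈ Ipi := by
  unfold Ipi; constructor <;> linarith [pi_pos]

lemma Ipi_nhds {x : ℝ} (h : x ∈ Ipi) : Ipi ∈ 𝓝 x := Ioo_mem_nhds h.1 h.2

lemma Icc_sub_Ipi {a b : ℝ} (ha : a ∈ Ipi) (hb : b ∈ Ipi) : Icc a b ⊆ Ipi :=
  fun _ hx => ⟨lt_of_lt_of_le ha.1 hx.1, lt_of_le_of_lt hx.2 hb.2⟩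

lemma Su.refl {p ψ : ℝ → ℝ} (h : Su p ψ) : Su (fun x => p (-x)) (fun x => -ψ (-x)) where
  pos x hx := h.pos _ (Ipi_neg hx)
  cont := h.cont.comp continuous_neg.continuousOn (fun x hx => Ipi_neg hx)
  tang y hy z hz := by
    have := h.tang _ (Ipi_neg hy) _ (Ipi_neg hz)
    refine this.trans (le_of_eq ?_)
    congr 2; ring
  mono x hx y hy hxy := by
    have := h.mono (Ipi_neg hy) (Ipi_neg hx) (by linarith)
    simpa using this
  gap x hx y hy hxy := by
    have := h.gap _ (Ipi_neg hy) _ (Ipi_neg hx) (by linarith)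
    have e : (-x - -y) / 2 = (y - x) / 2 := by ring
    rw [e] at this
    linarith

lemma Sol.refl {p θ : ℝ → ℝ} (h : Sol p θ) : Sol (fun x => p (-x)) (fun x => -θ (-x)) := by
  intro x hx
  have h1 : HasDerivAt (fun x => θ (-x)) (prF p (-x) (θ (-x)) * (-1)) x :=
    HasDerivAt.comp x (h _ (Ipi_neg hx)) (hasDerivAt_neg x)
  have h2 : HasDerivAt (fun x => -θ (-x)) (-(prF p (-x) (θ (-x)) * (-1))) x := h1.neg
  refine h2.congr_deriv ?_
  simp [prF]

lemma prF_pos {p ψ : ℝ → ℝ} (h : Su p ψ) {x : ℝ} (hx : x ∈ Ipi) (θ : ℝ) : 0 < prF p x θ := by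
  have hp := h.pos x hx
  unfold prF
  rcases eq_or_ne (sin θ) 0 with h0 | h0
  · have : cos θ ^ 2 = 1 := by have := sin_sq_add_cos_sq θ; rw [h0] at this; linarith
    rw [h0, this]; simp; exact hp
  · have : 0 < sin θ ^ 2 := by positivity
    positivity

lemma Sol.cont {p θ : ℝ → ℝ} (h : Sol p θ) : ContinuousOn θ Ipi :=
  fun x hx => (h x hx).continuousAt.continuousWithinAt

lemma convex_Ipi : Convex ℝ Ipi := convex_Ioo _ _

lemma Sol.strictMono {p ψ θ : ℝ → ℝ} (hs : Su p ψ) (h : Sol p θ) : StrictMonoOn θ Ipi := by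
  apply strictMonoOn_of_deriv_pos convex_Ipi h.cont
  intro x hx
  have hx' : x ∈ Ipi := interior_subset hx
  rw [(h x hx').deriv]
  exact prF_pos hs hx' _

lemma prF_lip {p : ℝ → ℝ} {x K : ℝ} (hx : 0 < p x) (hK : 1 / p x + 3 * p x ≤ K) (a b : ℝ) :
    |prF p x a - prF p x b| ≤ 2 * K * |a - b| := by
  have e : prF p x a - prF p x b = (3 * p x - 1 / p x) * ((sin a - sin b) * (sin a + sin b)) := by
    unfold prF
    rw [cos_sq', cos_sq']; field_simp; ring
  rw [e, abs_mul, abs_mul]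
  have h1 : |sin a - sin b| ≤ |a - b| := by
    have := Real.lipschitzWith_sin.dist_le_mul a b
    simpa [Real.dist_eq] using this
  have h2 : |sin a + sin b| ≤ 2 := by
    rw [abs_le]; constructor <;>
    linarith [sin_le_one a, sin_le_one b, neg_one_le_sin a, neg_one_le_sin b]
  have h3 : |3 * p x - 1 / p x| ≤ K := by
    have : 0 < 1 / p x := by positivity
    rw [abs_le]; constructor <;> linarith
  have h0 : 0 ≤ K := (abs_nonneg _).trans h3
  calc _ ≤ K * (|a - b| * 2) := by gcongr
    _ = _ := by ring

lemma prF_bd {p : ℝ → ℝ} {x K : ℝ} (hx : 0 < p x) (hK : 1 / p x + 3 * p x ≤ K) (a : ℝ) :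
    |prF p x a| ≤ K := by
  have h1 := cos_sq_le_one a
  have h2 := sin_sq_le_one a
  have h0 : 0 ≤ prF p x a := by unfold prF; positivity
  rw [abs_of_nonneg h0]
  refine le_trans ?_ hK
  unfold prF
  have h3 : cos a ^ 2 / p x ≤ 1 / p x := div_le_div_of_nonneg_right h1 hx.le
  nlinarith

lemma Su.bd {p ψ : ℝ → ℝ} (h : Su p ψ) {a b : ℝ} (ha : a ∈ Ipi) (hb : b ∈ Ipi) :
    ∃ K : ℝ, 0 ≤ K ∧ ∀ x ∈ Icc a b, 1 / p x + 3 * p x ≤ K := by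
  have hs := Icc_sub_Ipi ha hb
  have hc : ContinuousOn (fun x => 1 / p x + 3 * p x) (Icc a b) :=
    (continuousOn_const.div (h.cont.mono hs) (fun x hx => (h.pos x (hs hx)).ne')).add
      (continuousOn_const.mul (h.cont.mono hs))
  obtain ⟨K, hK⟩ := isCompact_Icc.bddAbove_image hc
  refine ⟨max K 0, le_max_right _ _, fun x hx => le_max_of_le_left (hK ⟨x, hx, rfl⟩)⟩

lemma Sol.unique_Ioo {p ψ θ φ : ℝ → ℝ} (hs : Su p ψ) {a b : ℝ} (ha : a ∈ Ipi) (hb : b ∈ Ipi)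
    (h : ∀ x ∈ Ioo a b, HasDerivAt θ (prF p x (θ x)) x)
    (h' : ∀ x ∈ Ioo a b, HasDerivAt φ (prF p x (φ x)) x)
    {x : ℝ} (hx : x ∈ Ioo a b) (he : θ x = φ x) : EqOn θ φ (Ioo a b) := by
  obtain ⟨K, hK0, hK⟩ := hs.bd ha hb
  refine ODE_solution_unique_of_mem_Ioo (v := prF p) (s := fun _ => univ) (K := (⟨2 * K, by positivity⟩ : ℝ≥0))
    ?_ hx (fun t ht => ⟨h t ht, trivial⟩) (fun t ht => ⟨h' t ht, trivial⟩) he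
  intro t ht
  apply LipschitzWith.lipschitzOnWith
  apply LipschitzWith.of_dist_le_mul
  intro c d
  simp only [Real.dist_eq]
  exact prF_lip (hs.pos t (Icc_sub_Ipi ha hb ⟨ht.1.le, ht.2.le⟩)) (hK t ⟨ht.1.le, ht.2.le⟩) c d

lemma exists_big {x y : ℝ} (hx : x ∈ Ipi) (hy : y ∈ Ipi) :
    ∃ b, b ∈ Ipi ∧ -b ∈ Ipi ∧ x ∈ Ioo (-b) b ∧ y ∈ Ioo (-b) b := by
  have h : max |x| |y| < π / 2 := max_lt (abs_lt.2 hx) (abs_lt.2 hy)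
  obtain ⟨b, h1, h2⟩ := exists_between h
  have h3 : |x| < b := (le_max_left _ _).trans_lt h1
  have h4 : |y| < b := (le_max_right _ _).trans_lt h1
  have hb : b ∈ Ipi := ⟨by linarith [abs_nonneg x, pi_pos], h2⟩
  exact ⟨b, hb, Ipi_neg hb, abs_lt.1 h3, abs_lt.1 h4⟩

lemma Sol.unique {p ψ θ φ : ℝ → ℝ} (hs : Su p ψ) (h : Sol p θ) (h' : Sol p φ)
    {x : ℝ} (hx : x ∈ Ipi) (he : θ x = φ x) : EqOn θ φ Ipi := by
  intro y hy
  obtain ⟨b, hb, hb', hxb, hyb⟩ := exists_big hx hy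
  have hss : Ioo (-b) b ⊆ Ipi := Ioo_subset_Icc_self.trans (Icc_sub_Ipi hb' hb)
  exact Sol.unique_Ioo hs hb' hb (fun t ht => h t (hss ht)) (fun t ht => h' t (hss ht)) hxb he hyb

lemma exists_local {p ψ : ℝ → ℝ} (hs : Su p ψ) {x₀ b : ℝ} (θ₀ : ℝ) (hb : b ∈ Ipi)
    (hb' : -b ∈ Ipi) (hx : x₀ ∈ Ioo (-b) b) :
    ∃ θ : ℝ → ℝ, θ x₀ = θ₀ ∧ ∀ x ∈ Ioo (-b) b, HasDerivAt θ (prF p x (θ x)) x := by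
  obtain ⟨K, hK0, hK⟩ := hs.bd hb' hb
  have hss := Icc_sub_Ipi hb' hb
  have hPL : IsPicardLindelof (prF p) (tmin := -b) (tmax := b) ⟨x₀, hx.1.le, hx.2.le⟩ θ₀
      (⟨K * (2 * b), by have := hx.1.trans hx.2; nlinarith⟩ : ℝ≥0) 0 ⟨K, hK0⟩ ⟨2 * K, by positivity⟩ := by
    constructor
    · intro t ht
      apply LipschitzWith.lipschitzOnWith
      apply LipschitzWith.of_dist_le_mul
      intro c d
      simp only [Real.dist_eq]
      exact prF_lip (hs.pos t (hss ht)) (hK t ht) c d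
    · intro x _
      unfold prF
      exact (continuousOn_const.div (hs.cont.mono hss) (fun x hx => (hs.pos x (hss hx)).ne')).add
        ((continuousOn_const.mul (hs.cont.mono hss)).mul continuousOn_const)
    · intro t ht x _
      exact prF_bd (hs.pos t (hss ht)) (hK t ht) x
    · simp only [NNReal.coe_mk, NNReal.coe_zero, sub_zero]
      apply mul_le_mul_of_nonneg_left _ hK0
      apply max_le <;> linarith [hx.1, hx.2]
  obtain ⟨θ, h1, h2⟩ := hPL.exists_eq_forall_mem_Icc_hasDerivWithinAt₀
  exact ⟨θ, h1, fun x hx => (h2 x ⟨hx.1.le, hx.2.le⟩).hasDerivAt (Icc_mem_nhds hx.1 hx.2)⟩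

lemma exists_sol {p ψ : ℝ → ℝ} (hs : Su p ψ) {x₀ : ℝ} (hx₀ : x₀ ∈ Ipi) (θ₀ : ℝ) :
    ∃ θ : ℝ → ℝ, θ x₀ = θ₀ ∧ Sol p θ := by
  classical
  choose! B hB hB' hB1 hB2 using fun (y : ℝ) (hy : y ∈ Ipi) => exists_big hx₀ hy
  choose! S hS1 hS2 using fun (y : ℝ) (hy : y ∈ Ipi) =>
    exists_local hs θ₀ (hB y hy) (hB' y hy) (hB1 y hy)
  have key : ∀ y ∈ Ipi, ∀ z ∈ Ipi, z ∈ Ioo (-(B y)) (B y) → S z z = S y z := by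
    intro y hy z hz hzy
    set m := min (B y) (B z) with hm
    have hmI : m ∈ Ipi := by rcases min_choice (B y) (B z) with h | h <;> rw [hm, h]
                             · exact hB y hy
                             · exact hB z hz
    have my : m ≤ B y := min_le_left _ _
    have mz : m ≤ B z := min_le_right _ _
    have hmem : ∀ t, t ∈ Ioo (-(B y)) (B y) → t ∈ Ioo (-(B z)) (B z) → t ∈ Ioo (-m) m := by
      intro t h1 h2
      have a := abs_lt.2 h1
      have b := abs_lt.2 h2
      exact abs_lt.1 (lt_min a b)
    refine Sol.unique_Ioo hs (Ipi_neg hmI) hmI (x := x₀) ?_ ?_ ?_ ?_ ?_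
    · intro t ht; exact hS2 z hz t ⟨by linarith [ht.1], by linarith [ht.2]⟩
    · intro t ht; exact hS2 y hy t ⟨by linarith [ht.1], by linarith [ht.2]⟩
    · exact hmem _ (hB1 y hy) (hB1 z hz)
    · rw [hS1 z hz, hS1 y hy]
    · exact hmem _ hzy (hB2 z hz)
  refine ⟨fun z => S z z, hS1 x₀ hx₀, fun y hy => ?_⟩
  have h1 := hS2 y hy y (hB2 y hy)
  refine h1.congr_of_eventuallyEq ?_
  filter_upwards [Ioo_mem_nhds (hB2 y hy).1 (hB2 y hy).2, Ipi_nhds hy] with z hz hzI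
  exact key y hy z hzI hz

lemma Sol.lt_of_lt {p ψ θ φ : ℝ → ℝ} (hs : Su p ψ) (h : Sol p θ) (h' : Sol p φ)
    {x y : ℝ} (hx : x ∈ Ipi) (hy : y ∈ Ipi) (hlt : θ x < φ x) : θ y < φ y := by
  by_contra hcon
  push Not at hcon
  have hc : ContinuousOn (fun t => φ t - θ t) Ipi := h'.cont.sub h.cont
  have := convex_Ipi.isPreconnected.intermediate_value hy hx hc
  obtain ⟨z, hz, hz0⟩ := this (show (0:ℝ) ∈ Icc _ _ from ⟨by linarith, by linarith⟩)
  have := Sol.unique hs h h' hz (by simpa using (sub_eq_zero.1 hz0).symm) hx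
  linarith

end

noncomputable section
open MeasureTheory Real Set Filter
open scoped ENNReal Topology NNReal

lemma dini {f g : ℝ → ℝ} {x g' r : ℝ} (hg : HasDerivAt g g' x) (he : f x = g x)
    (hle : ∀ᶠ z in 𝓝[>] x, f z ≤ g z) (hr : g' < r) : ∃ᶠ z in 𝓝[>] x, slope f x z < r := by
  apply Eventually.frequently
  have h1 : Tendsto (slope g x) (𝓝[>] x) (𝓝 g') :=
    (hasDerivAt_iff_tendsto_slope.1 hg).mono_left (nhdsWithin_mono _ (fun z hz => ne_of_gt hz))
  filter_upwards [h1.eventually (gt_mem_nhds hr), hle, self_mem_nhdsWithin] with z h1 h2 h3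
  refine lt_of_le_of_lt ?_ h1
  rw [slope_def_field, slope_def_field, he]
  have : 0 < z - x := sub_pos.2 h3
  gcongr

lemma Sol.dtan {p ψ θ : ℝ → ℝ} (hs : Su p ψ) (h : Sol p θ) {x : ℝ} (hx : x ∈ Ipi)
    (hc : cos (θ x) ≠ 0) :
    HasDerivAt (fun z => tan (θ z)) (1 / p x + 3 * p x * tan (θ x) ^ 2) x := by
  have h1 := (Real.hasDerivAt_tan hc).comp x (h x hx)
  have hp := (hs.pos x hx).ne'
  refine h1.congr_deriv ?_
  rw [tan_eq_sin_div_cos]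
  unfold prF
  field_simp

lemma Sol.maj {p ψ θ : ℝ → ℝ} (hs : Su p ψ) (h : Sol p θ) {x : ℝ} (hx : x ∈ Ipi)
    (hc : cos (θ x) ≠ 0) :
    HasDerivAt (fun z => p x * exp (-2 * ψ x * (z - x)) * tan (θ z))
      (1 + 3 * (p x * tan (θ x)) ^ 2 - 2 * ψ x * (p x * tan (θ x))) x := by
  have h1 : HasDerivAt (fun z => -2 * ψ x * (z - x)) (-2 * ψ x * 1) x :=
    ((hasDerivAt_id x).sub_const x).const_mul _
  have h2 := (h1.exp.const_mul (p x)).mul (h.dtan hs hx hc)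
  refine h2.congr_deriv ?_
  have hp := (hs.pos x hx).ne'
  simp only [sub_self, mul_zero, exp_zero]
  field_simp
  ring

lemma cos_ne_of {a : ℝ} (h1 : -(π / 2) < a) (h2 : a < π / 2) : cos a ≠ 0 :=
  (cos_pos_of_mem_Ioo ⟨h1, h2⟩).ne'

lemma mem_right {x : ℝ} (hx : x ∈ Ipi) : Ipi ∈ 𝓝[>] x := mem_nhdsWithin_of_mem_nhds (Ipi_nhds hx)

lemma E0_core {p ψ : ℝ → ℝ} (hs : Su p ψ) {A : ℝ} (hA : 0 ≤ A) :
    ∃ y1, 0 ≤ y1 ∧ y1 < π / 2 ∧ ∀ y, y1 < y → y < π / 2 → ∀ φ, Sol p φ → 0 ≤ φ y → φ y < π / 2 →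
      p y * tan (φ y) ≤ A → ∀ x ∈ Ipi, φ x < π / 2 := by
  set K := |ψ 0| with hK
  set C := 1 + 3 * (A + 1) ^ 2 + 2 * K * (A + 1) + 1 with hC
  have hK0 : 0 ≤ K := abs_nonneg _
  have hC0 : 1 ≤ C := by rw [hC]; nlinarith [mul_nonneg hK0 hA, sq_nonneg (A + 1)]
  refine ⟨max 0 (π / 2 - 1 / C), le_max_left _ _, ?_, ?_⟩
  · have : 0 < 1 / C := by positivity
    apply max_lt <;> linarith [pi_pos]
  intro y hy1 hy2 φ hφ hy0 hyp hyA
  have hy0' : 0 < y := (le_max_left _ _).trans_lt hy1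
  have hyC : π / 2 - 1 / C < y := (le_max_right _ _).trans_lt hy1
  have hyI : y ∈ Ipi := ⟨by linarith [pi_pos], hy2⟩
  by_contra hcon
  push Not at hcon
  obtain ⟨x, hxI, hx⟩ := hcon
  have hsm := hφ.strictMono hs
  have hyx : y < x := by
    by_contra hle
    push Not at hle
    have := hsm.monotoneOn hxI hyI hle
    linarith
  obtain ⟨z, ⟨hz1, hz2⟩, hz⟩ := intermediate_value_Icc hyx.le (hφ.cont.mono (Icc_sub_Ipi hyI hxI))
    (show π / 2 ∈ Icc (φ y) (φ x) from ⟨hyp.le, hx⟩)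
  have hzI : z ∈ Ipi := Icc_sub_Ipi hyI hxI ⟨hz1, hz2⟩
  have hyz : y < z := lt_of_le_of_ne hz1 (by rintro rfl; linarith)
  have hrange : ∀ w, y ≤ w → w < z → w ∈ Ipi ∧ 0 ≤ φ w ∧ φ w < π / 2 := by
    intro w h1 h2
    have hwI := Icc_sub_Ipi hyI hzI ⟨h1, h2.le⟩
    exact ⟨hwI, hy0.trans (hsm.monotoneOn hyI hwI h1), hz ▸ hsm hwI hzI h2⟩
  have hcos : ∀ w, y ≤ w → w < z → 0 < cos (φ w) := fun w h1 h2 =>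
    cos_pos_of_mem_Ioo ⟨by linarith [pi_pos, (hrange w h1 h2).2.1], (hrange w h1 h2).2.2⟩
  have main : ∀ b, y < b → b < z → p b * tan (φ b) ≤ A + 1 := by
    intro b hyb hbz
    have hC' : (b - y) * C ≤ 1 := by
      have : b - y ≤ 1 / C := by linarith [hzI.2]
      calc (b - y) * C ≤ 1 / C * C := by gcongr
        _ = 1 := by field_simp
    have hBle : ∀ x ∈ Icc y b, A + (x - y) * C ≤ A + 1 := by
      intro x hx
      have : (x - y) * C ≤ (b - y) * C := by gcongr; exact hx.2
      linarith
    have := image_le_of_liminf_slope_right_lt_deriv_boundary' (f := fun w => p w * tan (φ w))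
      (f' := fun x => 1 + 3 * (p x * tan (φ x)) ^ 2 - 2 * ψ x * (p x * tan (φ x)))
      (a := y) (b := b) (B := fun x => A + (x - y) * C) (B' := fun _ => C) ?_ ?_ ?_ ?_ ?_ ?_
      (x := b) ⟨hyb.le, le_rfl⟩
    · exact this.trans (hBle b ⟨hyb.le, le_rfl⟩)
    · intro w hw
      obtain ⟨hwI, h1, h2⟩ := hrange w hw.1 (hw.2.trans_lt hbz)
      have hsub : Icc y b ⊆ Ipi := Icc_sub_Ipi hyI ⟨by linarith [pi_pos], by linarith [hzI.2]⟩
      exact ((hs.cont.mono hsub) w hw).mul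
        (hφ.dtan hs hwI (hcos w hw.1 (hw.2.trans_lt hbz)).ne').continuousAt.continuousWithinAt
    · intro x hx r hr
      obtain ⟨hxI, h1, h2⟩ := hrange x hx.1 (hx.2.trans hbz)
      refine dini (hφ.maj hs hxI (hcos x hx.1 (hx.2.trans hbz)).ne') (by simp) ?_ hr
      have hbb : ∀ᶠ t in 𝓝[>] x, t < b := mem_nhdsWithin_of_mem_nhds (Iio_mem_nhds hx.2)
      filter_upwards [mem_right hxI, self_mem_nhdsWithin, hbb] with t ht hxt htb
      obtain ⟨_, h1, h2⟩ := hrange t (hx.1.trans (le_of_lt hxt)) (htb.trans hbz)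
      exact mul_le_mul_of_nonneg_right (hs.tang x hxI t ht) (tan_nonneg_of_nonneg_of_le_pi_div_two h1 h2.le)
    · simpa using hyA
    · fun_prop
    · intro x hx
      have : HasDerivAt (fun x => A + (x - y) * C) (1 * C) x :=
        (((hasDerivAt_id x).sub_const y).mul_const C).const_add A
      rw [one_mul] at this
      exact this.hasDerivWithinAt
    · intro x hx he
      obtain ⟨hxI, h1, h2⟩ := hrange x hx.1 (hx.2.trans hbz)
      have hu : 0 ≤ p x * tan (φ x) :=
        mul_nonneg (hs.pos x hxI).le (tan_nonneg_of_nonneg_of_le_pi_div_two h1 h2.le)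
      have hu2 : p x * tan (φ x) ≤ A + 1 := by
        have := hBle x ⟨hx.1, hx.2.le⟩
        linarith
      have hψ : -ψ x ≤ K := by
        have := hs.mono zero_mem_Ipi hxI (by linarith [hx.1])
        linarith [neg_abs_le (ψ 0)]
      generalize p x * tan (φ x) = r at *
      have e1 : -ψ x * r ≤ K * (A + 1) := by
        calc -ψ x * r ≤ K * r := by gcongr
          _ ≤ K * (A + 1) := by gcongr
      have e2 : r ^ 2 ≤ (A + 1) ^ 2 := by gcongr

      rw [hC]; nlinarith
  -- contradiction at z
  have hev : ∀ᶠ w in 𝓝[<] z, p w * sin (φ w) ≤ (A + 1) * cos (φ w) := by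
    filter_upwards [Ioo_mem_nhdsLT hyz] with w hw
    have h1 := main w hw.1 hw.2
    have h2 := hcos w hw.1.le hw.2
    rw [tan_eq_sin_div_cos, ← mul_div_assoc, div_le_iff₀ h2] at h1
    exact h1
  have hcz : ContinuousAt φ z := (hφ z hzI).continuousAt
  have hpz : ContinuousAt p z := hs.cont.continuousAt (Ipi_nhds hzI)
  have t1 : Tendsto (fun w => p w * sin (φ w)) (𝓝[<] z) (𝓝 (p z * sin (φ z))) :=
    (hpz.mul (continuous_sin.continuousAt.comp hcz)).tendsto.mono_left nhdsWithin_le_nhds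
  have t2 : Tendsto (fun w => (A + 1) * cos (φ w)) (𝓝[<] z) (𝓝 ((A + 1) * cos (φ z))) :=
    (continuousAt_const.mul (continuous_cos.continuousAt.comp hcz)).tendsto.mono_left
      nhdsWithin_le_nhds
  have := le_of_tendsto_of_tendsto t1 t2 hev
  rw [hz, sin_pi_div_two, cos_pi_div_two] at this
  linarith [hs.pos z hzI]

lemma E0 {p ψ : ℝ → ℝ} (hs : Su p ψ) {A : ℝ} (hA : 0 ≤ A) :
    ∃ y1, 0 ≤ y1 ∧ y1 < π / 2 ∧ ∀ y, y1 < y → y < π / 2 → ∀ φ, Sol p φ → -(π / 2) < φ y →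
      φ y < π / 2 → p y * tan (φ y) ≤ A → ∀ x ∈ Ipi, φ x < π / 2 := by
  obtain ⟨y1, h0, h1, h⟩ := E0_core hs hA
  refine ⟨y1, h0, h1, ?_⟩
  intro y hy1 hy2 φ hφ ha hb hA' x hxI
  rcases le_or_gt 0 (φ y) with h3 | h3
  · exact h y hy1 hy2 φ hφ h3 hb hA' x hxI
  have hyI : y ∈ Ipi := ⟨by linarith [pi_pos], hy2⟩
  by_contra hcon
  push Not at hcon
  have hsm := hφ.strictMono hs
  have hyx : y ≤ x := by
    by_contra hle
    push Not at hle
    have := hsm.monotoneOn hxI hyI hle.le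
    linarith
  obtain ⟨c, hc, hc0⟩ := intermediate_value_Icc hyx (hφ.cont.mono (Icc_sub_Ipi hyI hxI))
    (show 0 ∈ Icc (φ y) (φ x) from ⟨h3.le, by linarith [pi_pos]⟩)
  have := h c (by linarith [hc.1]) (by linarith [hc.2, hxI.2]) φ hφ hc0.ge
    (by rw [hc0]; linarith [pi_pos]) (by rw [hc0]; simpa using hA) x hxI
  linarith

/-- right principal solution -/
structure PS (p θ : ℝ → ℝ) : Prop where
  sol : Sol p θ
  lt : ∀ x ∈ Ipi, θ x < π / 2
  maxi : ∀ φ, Sol p φ → ∀ y ∈ Ipi, θ y < φ y → ∃ z ∈ Ipi, π / 2 ≤ φ z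

lemma exists_PS {p ψ : ℝ → ℝ} (hs : Su p ψ) : ∃ θ, PS p θ := by
  set S := {s : ℝ | ∃ σ, Sol p σ ∧ σ 0 = s ∧ ∀ x ∈ Ipi, σ x < π / 2} with hS
  have hne : S.Nonempty := by
    obtain ⟨y1, h0, h1, h⟩ := E0 hs le_rfl
    obtain ⟨y, hy1, hy2⟩ := exists_between h1
    obtain ⟨φ, e, hφ⟩ := exists_sol hs (x₀ := y) ⟨by linarith [pi_pos], hy2⟩ 0
    exact ⟨φ 0, φ, hφ, rfl, h y hy1 hy2 φ hφ (by rw [e]; linarith [pi_pos])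
      (by rw [e]; linarith [pi_pos]) (by simp [e])⟩
  have hbd : BddAbove S := ⟨π / 2, by rintro s ⟨σ, h1, rfl, h2⟩; exact (h2 0 zero_mem_Ipi).le⟩
  obtain ⟨θ, e, hθ⟩ := exists_sol hs zero_mem_Ipi (sSup S)
  refine ⟨θ, hθ, ?_, ?_⟩
  · intro z hz
    by_contra hcon
    push Not at hcon
    obtain ⟨z', h1, h2⟩ := exists_between hz.2
    have hz' : z' ∈ Ipi := ⟨hz.1.trans h1, h2⟩
    have h3 : π / 2 < θ z' := hcon.trans_lt (hθ.strictMono hs hz hz' h1)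
    obtain ⟨φ, e2, hφ⟩ := exists_sol hs hz' ((π / 2 + θ z') / 2)
    have h4 : φ 0 < θ 0 := hφ.lt_of_lt hs hθ hz' zero_mem_Ipi (by rw [e2]; linarith)
    rw [e] at h4
    obtain ⟨s, ⟨σ, hσ, rfl, hσ2⟩, hs2⟩ := exists_lt_of_lt_csSup hne h4
    have := hφ.lt_of_lt hs hσ zero_mem_Ipi hz' hs2
    have := hσ2 z' hz'
    linarith
  · intro φ hφ y hy hlt
    by_contra hcon
    push Not at hcon
    have h0 := hθ.lt_of_lt hs hφ hy zero_mem_Ipi hlt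
    have : φ 0 ≤ sSup S := le_csSup hbd ⟨φ, hφ, rfl, hcon⟩
    linarith

lemma PS.E {p ψ θ : ℝ → ℝ} (hs : Su p ψ) (h : PS p θ) (A : ℝ) :
    ∃ y1 ∈ Ipi, 0 ≤ y1 ∧ ∀ y ∈ Ipi, y1 < y → 0 < θ y ∧ A ≤ p y * tan (θ y) := by
  obtain ⟨y1, h0, h1, hE⟩ := E0 hs (show 0 ≤ max A 0 + 1 by positivity)
  refine ⟨y1, ⟨by linarith [pi_pos], h1⟩, h0, ?_⟩
  intro y hyI hy
  have hp := hs.pos y hyI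
  have key : arctan ((max A 0 + 1) / p y) ≤ θ y := by
    by_contra hcon
    push Not at hcon
    obtain ⟨φ, e, hφ⟩ := exists_sol hs hyI (arctan ((max A 0 + 1) / p y))
    obtain ⟨z, hz, hz2⟩ := h.maxi φ hφ y hyI (by rw [e]; exact hcon)
    have := hE y hy hyI.2 φ hφ (by rw [e]; exact neg_pi_div_two_lt_arctan _)
      (by rw [e]; exact arctan_lt_pi_div_two _) (by rw [e, tan_arctan]; field_simp; rfl) z hz
    linarith
  have hpos : 0 < arctan ((max A 0 + 1) / p y) := by rw [arctan_pos]; positivity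
  refine ⟨hpos.trans_le key, ?_⟩
  have h2 : (max A 0 + 1) / p y ≤ tan (θ y) := by
    rw [← tan_arctan ((max A 0 + 1) / p y)]
    exact strictMonoOn_tan.monotoneOn ⟨by linarith [pi_pos], arctan_lt_pi_div_two _⟩
      ⟨by linarith [pi_pos], h.lt y hyI⟩ key
  rw [div_le_iff₀ hp] at h2
  linarith [le_max_left A 0]

end

noncomputable section
open MeasureTheory Real Set Filter
open scoped ENNReal Topology NNReal

/-- points where the Pruefer angle is in the principal range -/
def Jset (φ : ℝ → ℝ) : Set ℝ := Ipi ∩ φ ⁻¹' Ioo (-(π / 2)) (π / 2)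

/-- the Riccati variable -/
def ric (p φ : ℝ → ℝ) (t : ℝ) : ℝ := p t * tan (φ t)

lemma Jset_open {p φ : ℝ → ℝ} (h : Sol p φ) : IsOpen (Jset φ) :=
  h.cont.isOpen_inter_preimage isOpen_Ioo isOpen_Ioo

lemma Jset_ord {p ψ φ : ℝ → ℝ} (hs : Su p ψ) (h : Sol p φ) : (Jset φ).OrdConnected := by
  constructor
  intro x hx y hy z hz
  have hzI := Icc_sub_Ipi hx.1 hy.1 hz
  have hm := (h.strictMono hs).monotoneOn
  exact ⟨hzI, hx.2.1.trans_le (hm hx.1 hzI hz.1), (hm hzI hy.1 hz.2).trans_lt hy.2.2⟩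

lemma Jset_cos {φ : ℝ → ℝ} {x : ℝ} (h : x ∈ Jset φ) : 0 < cos (φ x) :=
  cos_pos_of_mem_Ioo h.2

lemma ric_cont {p ψ φ : ℝ → ℝ} (hs : Su p ψ) (h : Sol p φ) : ContinuousOn (ric p φ) (Jset φ) := by
  intro x hx
  exact ((hs.cont.continuousAt (Ipi_nhds hx.1)).mul
    (h.dtan hs hx.1 (Jset_cos hx).ne').continuousAt).continuousWithinAt

lemma ric_contAt {p ψ φ : ℝ → ℝ} (hs : Su p ψ) (h : Sol p φ) {x : ℝ} (hx : x ∈ Jset φ) :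
    ContinuousAt (ric p φ) x := (ric_cont hs h).continuousAt ((Jset_open h).mem_nhds hx)

lemma prim {p ψ φ : ℝ → ℝ} (hs : Su p ψ) (h : Sol p φ) {a b : ℝ} (ha : a ∈ Jset φ)
    (hb : b ∈ Jset φ) : HasDerivAt (fun y => ∫ t in a..y, ric p φ t) (ric p φ b) b := by
  refine intervalIntegral.integral_hasDerivAt_right ?_ ?_ ?_
  · exact ((ric_cont hs h).mono ((Jset_ord hs h).uIcc_subset ha hb)).intervalIntegrable
  · exact (ric_cont hs h).stronglyMeasurableAtFilter (Jset_open h) b hb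
  · exact ric_contAt hs h hb

lemma ric_pos {p ψ φ : ℝ → ℝ} (hs : Su p ψ) {x : ℝ} (hx : x ∈ Jset φ) (h0 : 0 < φ x) :
    0 < ric p φ x := mul_pos (hs.pos x hx.1) (tan_pos_of_pos_of_lt_pi_div_two h0 hx.2.2)

lemma ric_neg {p ψ φ : ℝ → ℝ} (hs : Su p ψ) {x : ℝ} (hx : x ∈ Jset φ) (h0 : φ x < 0) :
    ric p φ x < 0 := mul_neg_of_pos_of_neg (hs.pos x hx.1) (tan_neg_of_neg_of_pi_div_two_lt h0 hx.2.1)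

/-- continuity of inverses -/
lemma inv_cont {H K G : ℝ → ℝ} {a b : ℝ} {s : Set ℝ} (hH : StrictAntiOn H (Icc a b))
    (hK : ∀ t ∈ s, K t ∈ Icc a b) (hHK : ∀ t ∈ s, H (K t) = G t) (hG : ContinuousOn G s) :
    ContinuousOn K s := by
  intro t ht
  refine tendsto_order.2 ⟨?_, ?_⟩
  · intro c hc
    rcases lt_or_ge c a with h | h
    · filter_upwards [self_mem_nhdsWithin] with z hz
      exact h.trans_le (hK z hz).1
    have hcm : c ∈ Icc a b := ⟨h, hc.le.trans (hK t ht).2⟩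
    have h1 := hH hcm (hK t ht) hc
    rw [hHK t ht] at h1
    filter_upwards [self_mem_nhdsWithin, (hG t ht).eventually (gt_mem_nhds h1)] with z hz hz2
    rw [← hHK z hz] at hz2
    exact (hH.lt_iff_gt (hK z hz) hcm).1 hz2
  · intro c hc
    rcases lt_or_ge b c with h | h
    · filter_upwards [self_mem_nhdsWithin] with z hz
      exact (hK z hz).2.trans_lt h
    have hcm : c ∈ Icc a b := ⟨(hK t ht).1.trans hc.le, h⟩
    have h1 := hH (hK t ht) hcm hc
    rw [hHK t ht] at h1
    filter_upwards [self_mem_nhdsWithin, (hG t ht).eventually (lt_mem_nhds h1)] with z hz hz2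
    rw [← hHK z hz] at hz2
    exact (hH.lt_iff_gt hcm (hK z hz)).1 hz2

/-- abstract curve of matched points -/
lemma exists_X {G H R r : ℝ → ℝ} {y0 ye xe x0 : ℝ} (hy : y0 < ye) (hx : xe < x0)
    (hG : ContinuousOn G (Icc y0 ye)) (hG' : ∀ y ∈ Ioo y0 ye, HasDerivAt G (R y) y)
    (hR : ∀ y ∈ Ioo y0 ye, 0 < R y)
    (hH : ContinuousOn H (Icc xe x0)) (hH' : ∀ x ∈ Ioo xe x0, HasDerivAt H (r x) x)
    (hr : ∀ x ∈ Ioo xe x0, r x < 0) (h0 : G y0 = H x0) (he : G ye = H xe) :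
    ∃ X : ℝ → ℝ, ContinuousOn X (Icc y0 ye) ∧ X y0 = x0 ∧ X ye = xe ∧
      (∀ y ∈ Icc y0 ye, X y ∈ Icc xe x0) ∧
      ∀ y ∈ Ioo y0 ye, X y ∈ Ioo xe x0 ∧ G y = H (X y) ∧ HasDerivAt X (R y / r (X y)) y := by
  have hHa : StrictAntiOn H (Icc xe x0) := by
    apply strictAntiOn_of_deriv_neg (convex_Icc _ _) hH
    intro x hx
    rw [interior_Icc] at hx
    rw [(hH' x hx).deriv]; exact hr x hx
  have hGm : StrictMonoOn G (Icc y0 ye) := by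
    apply strictMonoOn_of_deriv_pos (convex_Icc _ _) hG
    intro x hx
    rw [interior_Icc] at hx
    rw [(hG' x hx).deriv]; exact hR x hx
  have hxe : xe ∈ Icc xe x0 := ⟨le_rfl, hx.le⟩
  have hx0 : x0 ∈ Icc xe x0 := ⟨hx.le, le_rfl⟩
  have hye : ye ∈ Icc y0 ye := ⟨hy.le, le_rfl⟩
  have hy0 : y0 ∈ Icc y0 ye := ⟨le_rfl, hy.le⟩
  have hex : ∀ t ∈ Icc (H x0) (H xe), ∃ x ∈ Icc xe x0, H x = t := fun t ht =>
    intermediate_value_Icc' hx.le hH ht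
  choose! K hK1 hK2 using hex
  have hKc : ContinuousOn K (Icc (H x0) (H xe)) := inv_cont hHa hK1 hK2 continuousOn_id
  have hGI : ∀ y ∈ Icc y0 ye, G y ∈ Icc (H x0) (H xe) := fun y hy => by
    rw [← h0, ← he]; exact ⟨hGm.monotoneOn hy0 hy hy.1, hGm.monotoneOn hy hye hy.2⟩
  have hGIo : ∀ y ∈ Ioo y0 ye, G y ∈ Ioo (H x0) (H xe) := fun y hy => by
    rw [← h0, ← he]
    exact ⟨hGm hy0 ⟨hy.1.le, hy.2.le⟩ hy.1, hGm ⟨hy.1.le, hy.2.le⟩ hye hy.2⟩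
  refine ⟨fun y => K (G y), hKc.comp hG hGI, ?_, ?_, fun y hy => hK1 _ (hGI y hy), ?_⟩
  · exact hHa.injOn (hK1 _ (hGI y0 hy0)) hx0 (by rw [hK2 _ (hGI y0 hy0), h0])
  · exact hHa.injOn (hK1 _ (hGI ye hye)) hxe (by rw [hK2 _ (hGI ye hye), he])
  · intro y hy
    have hy' : y ∈ Icc y0 ye := ⟨hy.1.le, hy.2.le⟩
    have hm := hK1 _ (hGI y hy')
    have e := hK2 _ (hGI y hy')
    have hm2 : K (G y) ∈ Ioo xe x0 := by
      have := hGIo y hy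
      rw [← e] at this
      exact ⟨(hHa.lt_iff_gt hm hxe).1 this.2, (hHa.lt_iff_gt hx0 hm).1 this.1⟩
    refine ⟨hm2, e.symm, ?_⟩
    have hnh : Icc (H x0) (H xe) ∈ 𝓝 (G y) := Icc_mem_nhds (hGIo y hy).1 (hGIo y hy).2
    have hd : HasDerivAt K (r (K (G y)))⁻¹ (G y) := by
      refine HasDerivAt.of_local_left_inverse (f := H) (hKc.continuousAt hnh) (hH' _ hm2)
        (hr _ hm2).ne ?_
      filter_upwards [hnh] with t ht using hK2 t ht
    have := hd.comp y (hG' y hy)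
    refine this.congr_deriv ?_
    rw [div_eq_mul_inv, mul_comm]

/-- configuration of right and left solutions -/
structure Cfg (p φR φL : ℝ → ℝ) (x1 x0 y0 y1 : ℝ) : Prop where
  solR : Sol p φR
  solL : Sol p φL
  hx : x1 < x0
  hxy : x0 ≤ y0
  hy : y0 < y1
  hx1 : -(π / 2) ≤ x1
  hy1 : y1 ≤ π / 2
  R0 : 0 ≤ φR y0
  Rlt : ∀ y ∈ Ioo y0 y1, φR y < π / 2
  L0 : φL x0 ≤ 0
  Lgt : ∀ x ∈ Ioo x1 x0, -(π / 2) < φL x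

section
variable {p ψ φR φL : ℝ → ℝ} {x1 x0 y0 y1 : ℝ}

lemma Cfg.y0I (c : Cfg p φR φL x1 x0 y0 y1) : y0 ∈ Ipi :=
  ⟨by linarith [c.hx, c.hxy, c.hx1], by linarith [c.hy, c.hy1]⟩
lemma Cfg.x0I (c : Cfg p φR φL x1 x0 y0 y1) : x0 ∈ Ipi :=
  ⟨by linarith [c.hx, c.hxy, c.hx1], by linarith [c.hy, c.hy1, c.hxy]⟩
lemma Cfg.yI (c : Cfg p φR φL x1 x0 y0 y1) {y : ℝ} (h : y ∈ Ico y0 y1) : y ∈ Ipi :=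
  ⟨by linarith [c.hx, c.hxy, c.hx1, h.1], by linarith [c.hy1, h.2]⟩
lemma Cfg.xI (c : Cfg p φR φL x1 x0 y0 y1) {x : ℝ} (h : x ∈ Ioc x1 x0) : x ∈ Ipi :=
  ⟨by linarith [c.hx1, h.1], by linarith [c.hy1, h.2, c.hxy, c.hy]⟩

lemma Cfg.Rpos (c : Cfg p φR φL x1 x0 y0 y1) (hs : Su p ψ) {y : ℝ} (h : y ∈ Ioo y0 y1) :
    0 < φR y :=
  c.R0.trans_lt (c.solR.strictMono hs c.y0I (c.yI ⟨h.1.le, h.2⟩) h.1)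
lemma Cfg.Lneg (c : Cfg p φR φL x1 x0 y0 y1) (hs : Su p ψ) {x : ℝ} (h : x ∈ Ioo x1 x0) :
    φL x < 0 :=
  (c.solL.strictMono hs (c.xI ⟨h.1, h.2.le⟩) c.x0I h.2).trans_le c.L0

lemma Cfg.JR (c : Cfg p φR φL x1 x0 y0 y1) (hs : Su p ψ) {y : ℝ} (h : y ∈ Ico y0 y1) :
    y ∈ Jset φR := by
  refine ⟨c.yI h, ?_, ?_⟩
  · rcases eq_or_lt_of_le h.1 with e | e
    · subst e; linarith [c.R0, pi_pos]
    · linarith [c.Rpos hs ⟨e, h.2⟩, pi_pos]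
  · obtain ⟨z, h1, h2⟩ := exists_between h.2
    have hz : z ∈ Ioo y0 y1 := ⟨h.1.trans_lt h1, h2⟩
    exact (c.solR.strictMono hs (c.yI h) (c.yI ⟨hz.1.le, hz.2⟩) h1).trans (c.Rlt z hz)
lemma Cfg.JL (c : Cfg p φR φL x1 x0 y0 y1) (hs : Su p ψ) {x : ℝ} (h : x ∈ Ioc x1 x0) :
    x ∈ Jset φL := by
  refine ⟨c.xI h, ?_, ?_⟩
  · obtain ⟨z, h1, h2⟩ := exists_between h.1
    have hz : z ∈ Ioo x1 x0 := ⟨h1, h2.trans_le h.2⟩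
    exact (c.Lgt z hz).trans (c.solL.strictMono hs (c.xI ⟨hz.1, hz.2.le⟩) (c.xI h) h2)
  · rcases eq_or_lt_of_le h.2 with e | e
    · subst e; linarith [c.L0, pi_pos]
    · linarith [c.Lneg hs ⟨h.1, e⟩, pi_pos]

/-- matched pairs -/
def Mat (p φR φL : ℝ → ℝ) (x0 y0 x y : ℝ) : Prop :=
  (∫ t in y0..y, ric p φR t) = ∫ t in x0..x, ric p φL t

lemma Cfg.exX (c : Cfg p φR φL x1 x0 y0 y1) (hs : Su p ψ) {xe ye : ℝ} (hye : ye ∈ Ioo y0 y1)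
    (hxe : xe ∈ Ioo x1 x0) (hm : Mat p φR φL x0 y0 xe ye) :
    ∃ X : ℝ → ℝ, ContinuousOn X (Icc y0 ye) ∧ X y0 = x0 ∧ X ye = xe ∧
      (∀ y ∈ Icc y0 ye, X y ∈ Icc xe x0) ∧
      ∀ y ∈ Ioo y0 ye, X y ∈ Ioo xe x0 ∧ Mat p φR φL x0 y0 (X y) y ∧
        HasDerivAt X (ric p φR y / ric p φL (X y)) y := by
  have hyJ : ∀ y ∈ Icc y0 ye, y ∈ Jset φR := fun y hy => c.JR hs ⟨hy.1, hy.2.trans_lt hye.2⟩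
  have hxJ : ∀ x ∈ Icc xe x0, x ∈ Jset φL := fun x hx => c.JL hs ⟨hxe.1.trans_le hx.1, hx.2⟩
  have hy0 := hyJ y0 ⟨le_rfl, hye.1.le⟩
  have hx0 := hxJ x0 ⟨hxe.2.le, le_rfl⟩
  refine exists_X (G := fun y => ∫ t in y0..y, ric p φR t) (H := fun x => ∫ t in x0..x, ric p φL t)
    hye.1 hxe.2 ?_ ?_ ?_ ?_ ?_ ?_ (by simp) hm
  · exact fun y hy => (prim hs c.solR hy0 (hyJ y hy)).continuousAt.continuousWithinAt
  · exact fun y hy => (prim hs c.solR hy0 (hyJ y ⟨hy.1.le, hy.2.le⟩))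
  · exact fun y hy => ric_pos hs (hyJ y ⟨hy.1.le, hy.2.le⟩) (c.Rpos hs ⟨hy.1, hy.2.trans hye.2⟩)
  · exact fun y hy => (prim hs c.solL hx0 (hxJ y hy)).continuousAt.continuousWithinAt
  · exact fun y hy => (prim hs c.solL hx0 (hxJ y ⟨hy.1.le, hy.2.le⟩))
  · exact fun y hy => ric_neg hs (hxJ y ⟨hy.1.le, hy.2.le⟩) (c.Lneg hs ⟨hxe.1.trans hy.1, hy.2⟩)

lemma alg_curve {R r T ψx ψy : ℝ} (hR : 0 < R) (hr : r < 0) (hg : 2 * T ≤ ψy - ψx) :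
    (1 + 3 * R ^ 2 - 2 * ψy * R) - (1 + 3 * r ^ 2 - 2 * ψx * r) * (R / r)
      - (1 + T ^ 2) * (1 - R / r) ≤ 4 * R * (R - r - 2 * T) := by
  obtain ⟨L, rfl⟩ : ∃ L, r = -L := ⟨-r, by ring⟩
  have hL : 0 < L := by linarith
  have e : (1 + 3 * R ^ 2 - 2 * ψy * R) - (1 + 3 * (-L) ^ 2 - 2 * ψx * (-L)) * (R / (-L))
      - (1 + T ^ 2) * (1 - R / (-L)) = 3 * R * (R + L) - 2 * (ψy - ψx) * R - T ^ 2 * ((R + L) / L) := by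
    field_simp; ring
  rw [e]
  have h1 : 2 * (2 * T) * R ≤ 2 * (ψy - ψx) * R := by gcongr
  have h2 : 0 ≤ R * (R + L) - 4 * T * R + T ^ 2 * ((R + L) / L) := by
    have : R * (R + L) - 4 * T * R + T ^ 2 * ((R + L) / L) =
      (((R + L) * T - 2 * R * L) ^ 2 + R * L * (R - L) ^ 2) / ((R + L) * L) := by
      field_simp; ring
    rw [this]; positivity
  nlinarith

lemma Cfg.curve (c : Cfg p φR φL x1 x0 y0 y1) (hs : Su p ψ) {xe ye : ℝ} (hye : ye ∈ Ioo y0 y1)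
    (hxe : xe ∈ Ioo x1 x0) (hm : Mat p φR φL x0 y0 xe ye)
    (hi : ric p φR y0 - ric p φL x0 ≤ 2 * tan ((y0 - x0) / 2)) :
    ric p φR ye - ric p φL xe ≤ 2 * tan ((ye - xe) / 2) := by
  obtain ⟨X, hXc, hX0, hXe, hXm, hX⟩ := c.exX hs hye hxe hm
  have hyJ : ∀ y ∈ Icc y0 ye, y ∈ Jset φR := fun y hy => c.JR hs ⟨hy.1, hy.2.trans_lt hye.2⟩
  have hxJ : ∀ x ∈ Icc xe x0, x ∈ Jset φL := fun x hx => c.JL hs ⟨hxe.1.trans_le hx.1, hx.2⟩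
  have hy0 := hyJ y0 ⟨le_rfl, hye.1.le⟩
  have hcosT : ∀ y ∈ Icc y0 ye, cos ((y - X y) / 2) ≠ 0 := by
    intro y hy
    have h1 := hXm y hy
    have h2 := (hyJ y hy).1
    have h3 := (hxJ _ h1).1
    apply cos_ne_of <;> linarith [h1.2, hy.1, c.hxy, h2.2, h3.1, pi_pos]
  set f : ℝ → ℝ := fun y => ric p φR y - ric p φL (X y) - 2 * tan ((y - X y) / 2) with hf
  have hfc : ContinuousOn f (Icc y0 ye) := by
    apply ContinuousOn.sub
    · apply ContinuousOn.sub
      · exact (ric_cont hs c.solR).mono hyJ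
      · exact (ric_cont hs c.solL).comp hXc (fun y hy => hxJ _ (hXm y hy))
    · apply continuousOn_const.mul
      intro y hy
      exact (continuousAt_tan.2 (hcosT y hy)).comp_continuousWithinAt
        (f := fun y => (y - X y) / 2) ((continuousWithinAt_id.sub (hXc y hy)).div_const 2)
  set G : ℝ → ℝ := fun y => ∫ t in y0..y, ric p φR t with hG
  have hGd : ∀ y ∈ Icc y0 ye, HasDerivAt G (ric p φR y) y := fun y hy =>
    prim hs c.solR hy0 (hyJ y hy)
  have key : ∀ η > 0, f ye ≤ η * exp (4 * G ye + (ye - y0)) := by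
    intro η hη
    -- starting point
    have hf0 : f y0 ≤ 0 := by
      simp only [hf, hX0]; linarith
    have hG0 : G y0 = 0 := by simp [hG]
    have hB0 : ContinuousWithinAt (fun y => f y - η * exp (4 * G y + (y - y0))) (Icc y0 ye) y0 := by
      have hg : ContinuousWithinAt (fun y => η * exp (4 * G y + (y - y0))) (Icc y0 ye) y0 := by
        have hgg : ContinuousAt G y0 := (hGd y0 ⟨le_rfl, hye.1.le⟩).continuousAt
        have : ContinuousAt (fun y => η * exp (4 * G y + (y - y0))) y0 := by fun_prop
        exact this.continuousWithinAt
      exact (hfc y0 ⟨le_rfl, hye.1.le⟩).sub hg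
    have hev : ∀ᶠ y in 𝓝[Icc y0 ye] y0, f y - η * exp (4 * G y + (y - y0)) < 0 := by
      apply hB0.eventually (gt_mem_nhds _)
      simp only [hG0]; simp; linarith
    rw [nhdsWithin_Icc_eq_nhdsGE hye.1] at hev
    have hev2 : ∀ᶠ y in 𝓝[>] y0, f y - η * exp (4 * G y + (y - y0)) < 0 :=
      hev.filter_mono (nhdsWithin_mono _ Ioi_subset_Ici_self)
    obtain ⟨a, ha1, ha2⟩ := (hev2.and (Ioo_mem_nhdsGT hye.1)).exists
    have hsub : Icc a ye ⊆ Icc y0 ye := Icc_subset_Icc_left ha2.1.le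
    have hio : ∀ y ∈ Ico a ye, y ∈ Ioo y0 ye := fun y hy => ⟨ha2.1.trans_le hy.1, hy.2⟩
    have hBd : ∀ y ∈ Icc y0 ye, HasDerivAt (fun y => η * exp (4 * G y + (y - y0)))
        ((4 * ric p φR y + 1) * (η * exp (4 * G y + (y - y0)))) y := by
      intro y hy
      have := ((((hGd y hy).const_mul 4).add ((hasDerivAt_id y).sub_const y0)).exp).const_mul η
      refine this.congr_deriv ?_
      simp only [Pi.add_apply, id]
      ring
    refine image_le_of_liminf_slope_right_lt_deriv_boundary' (f := f)
      (f' := fun y => (1 + 3 * ric p φR y ^ 2 - 2 * ψ y * ric p φR y)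
        - (1 + 3 * ric p φL (X y) ^ 2 - 2 * ψ (X y) * ric p φL (X y)) * (ric p φR y / ric p φL (X y))
        - (1 + tan ((y - X y) / 2) ^ 2) * (1 - ric p φR y / ric p φL (X y)))
      (a := a) (b := ye) (B := fun y => η * exp (4 * G y + (y - y0)))
      (B' := fun y => (4 * ric p φR y + 1) * (η * exp (4 * G y + (y - y0)))) ?_ ?_ ?_ ?_ ?_ ?_
      (x := ye) ⟨ha2.2.le, le_rfl⟩
    · exact hfc.mono hsub
    · intro y hy r hr
      have hyo := hio y hy
      obtain ⟨hXo, -, hXd⟩ := hX y hyo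
      have hyJ' := hyJ y ⟨hyo.1.le, hyo.2.le⟩
      have hxJ' := hxJ _ ⟨hXo.1.le, hXo.2.le⟩
      have d1 := c.solR.maj hs hyJ'.1 (Jset_cos hyJ').ne'
      have d2 := (c.solL.maj hs hxJ'.1 (Jset_cos hxJ').ne').comp y hXd
      have d3 := ((Real.hasDerivAt_tan (hcosT y ⟨hyo.1.le, hyo.2.le⟩)).comp y
        (((hasDerivAt_id y).sub hXd).div_const 2)).const_mul 2
      refine dini ((d1.sub d2).sub d3) (by simp [hf, ric]) ?_ (lt_of_le_of_lt (le_of_eq ?_) hr)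
      · filter_upwards [Ioo_mem_nhdsGT hyo.2] with z hz
        have hzo : z ∈ Ioo y0 ye := ⟨hyo.1.trans hz.1, hz.2⟩
        obtain ⟨hXz, -, -⟩ := hX z hzo
        have hzJ := hyJ z ⟨hzo.1.le, hzo.2.le⟩
        have hxz := hxJ _ ⟨hXz.1.le, hXz.2.le⟩
        have a1 : 0 ≤ tan (φR z) := tan_nonneg_of_nonneg_of_le_pi_div_two
          (c.Rpos hs ⟨hzo.1, hzo.2.trans hye.2⟩).le hzJ.2.2.le
        have a2 : tan (φL (X z)) ≤ 0 := tan_nonpos_of_nonpos_of_neg_pi_div_two_le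
          (c.Lneg hs ⟨hxe.1.trans hXz.1, hXz.2⟩).le hxz.2.1.le
        have b1 := mul_le_mul_of_nonneg_right (hs.tang y hyJ'.1 z hzJ.1) a1
        have b2 := mul_le_mul_of_nonpos_right (hs.tang (X y) hxJ'.1 (X z) hxz.1) a2
        simp only [hf, ric, Pi.sub_apply, Function.comp_apply, id]
        linarith
      · have hc := hcosT y ⟨hyo.1.le, hyo.2.le⟩
        have := Real.inv_one_add_tan_sq hc
        have e : 1 / cos ((y - X y) / 2) ^ 2 = 1 + tan ((y - X y) / 2) ^ 2 := by
          rw [← this]; simp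
        simp only [ric, Function.comp_apply, Pi.sub_apply, id]
        rw [e]
        ring
    · linarith
    · exact fun y hy => (hBd y (hsub hy)).continuousAt.continuousWithinAt
    · exact fun y hy => (hBd y (hsub ⟨hy.1, hy.2.le⟩)).hasDerivWithinAt
    · intro y hy he
      have hyo := hio y hy
      obtain ⟨hXo, -, hXd⟩ := hX y hyo
      have hyJ' := hyJ y ⟨hyo.1.le, hyo.2.le⟩
      have hxJ' := hxJ _ ⟨hXo.1.le, hXo.2.le⟩
      have hR := ric_pos hs hyJ' (c.Rpos hs ⟨hyo.1, hyo.2.trans hye.2⟩)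
      have hr := ric_neg hs hxJ' (c.Lneg hs ⟨hxe.1.trans hXo.1, hXo.2⟩)
      have hg := hs.gap _ hxJ'.1 _ hyJ'.1 (by linarith [hXo.2, c.hxy, hyo.1])
      have h1 := alg_curve hR hr hg
      refine lt_of_le_of_lt h1 ?_
      have h2 : ric p φR y - ric p φL (X y) - 2 * tan ((y - X y) / 2)
        = η * exp (4 * G y + (y - y0)) := he
      rw [h2]
      have : 0 < η * exp (4 * G y + (y - y0)) := by positivity
      linarith
  have hle : f ye ≤ 0 := by
    apply le_of_forall_pos_le_add
    intro ε hε
    have := key (ε / exp (4 * G ye + (ye - y0))) (by positivity)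
    rw [div_mul_cancel₀ _ (exp_pos _).ne'] at this
    linarith
  simp only [hf, hXe] at hle
  linarith

lemma Cfg.dich (c : Cfg p φR φL x1 x0 y0 y1) (hs : Su p ψ) :
    (∀ y ∈ Ioo y0 y1, ∃ x ∈ Ioo x1 x0, Mat p φR φL x0 y0 x y) ∨
    (∀ x ∈ Ioo x1 x0, ∃ y ∈ Ioo y0 y1, Mat p φR φL x0 y0 x y) := by
  by_contra hcon
  push Not at hcon
  obtain ⟨⟨ys, hys, h1⟩, ⟨xs, hxs, h2⟩⟩ := hcon
  set G : ℝ → ℝ := fun y => ∫ t in y0..y, ric p φR t with hG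
  set H : ℝ → ℝ := fun y => ∫ t in x0..y, ric p φL t with hH
  have hyJ : ∀ y ∈ Icc y0 ys, y ∈ Jset φR := fun y hy => c.JR hs ⟨hy.1, hy.2.trans_lt hys.2⟩
  have hxJ : ∀ x ∈ Icc xs x0, x ∈ Jset φL := fun x hx => c.JL hs ⟨hxs.1.trans_le hx.1, hx.2⟩
  have hy0 := hyJ y0 ⟨le_rfl, hys.1.le⟩
  have hx0 := hxJ x0 ⟨hxs.2.le, le_rfl⟩
  have hGc : ContinuousOn G (Icc y0 ys) :=
    fun y hy => (prim hs c.solR hy0 (hyJ y hy)).continuousAt.continuousWithinAt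
  have hHc : ContinuousOn H (Icc xs x0) :=
    fun y hy => (prim hs c.solL hx0 (hxJ y hy)).continuousAt.continuousWithinAt
  have hG0 : G y0 = 0 := by simp [hG]
  have hH0 : H x0 = 0 := by simp [hH]
  have hGp : 0 < G ys := by
    rw [← hG0]
    refine strictMonoOn_of_deriv_pos (convex_Icc _ _) hGc ?_ ⟨le_rfl, hys.1.le⟩ ⟨hys.1.le, le_rfl⟩ hys.1
    intro y hy
    rw [interior_Icc] at hy
    rw [(prim hs c.solR hy0 (hyJ y ⟨hy.1.le, hy.2.le⟩)).deriv]
    exact ric_pos hs (hyJ y ⟨hy.1.le, hy.2.le⟩) (c.Rpos hs ⟨hy.1, hy.2.trans hys.2⟩)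
  have hHp : 0 < H xs := by
    rw [← hH0]
    refine strictAntiOn_of_deriv_neg (convex_Icc _ _) hHc ?_ ⟨le_rfl, hxs.2.le⟩ ⟨hxs.2.le, le_rfl⟩ hxs.2
    intro y hy
    rw [interior_Icc] at hy
    rw [(prim hs c.solL hx0 (hxJ y ⟨hy.1.le, hy.2.le⟩)).deriv]
    exact ric_neg hs (hxJ y ⟨hy.1.le, hy.2.le⟩) (c.Lneg hs ⟨hxs.1.trans hy.1, hy.2⟩)
  rcases le_total (G ys) (H xs) with h | h
  · obtain ⟨x, hx, e⟩ := intermediate_value_Icc' hxs.2.le hHc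
      (show G ys ∈ Icc (H x0) (H xs) from ⟨by rw [hH0]; exact hGp.le, h⟩)
    refine h1 x ⟨hxs.1.trans_le hx.1, lt_of_le_of_ne hx.2 ?_⟩ e.symm
    rintro rfl
    rw [← e, hH0] at hGp; exact lt_irrefl _ hGp
  · obtain ⟨y, hy, e⟩ := intermediate_value_Icc hys.1.le hGc
      (show H xs ∈ Icc (G y0) (G ys) from ⟨by rw [hG0]; exact hHp.le, h⟩)
    refine h2 y ⟨lt_of_le_of_ne hy.1 ?_, hy.2.trans_lt hys.2⟩ e
    rintro rfl
    rw [← e, hG0] at hHp; exact lt_irrefl _ hHp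

end

lemma blow_unbdd {p ψ φ : ℝ → ℝ} (hs : Su p ψ) (hφ : Sol p φ) {y z C : ℝ} (hyz : y < z)
    (hzI : z ∈ Ipi) (hz : φ z = π / 2) (hc : ∀ w ∈ Ioo y z, 0 < cos (φ w))
    (hb : ∀ w ∈ Ioo y z, ric p φ w ≤ C) : False := by
  have hev : ∀ᶠ w in 𝓝[<] z, p w * sin (φ w) ≤ C * cos (φ w) := by
    filter_upwards [Ioo_mem_nhdsLT hyz] with w hw
    have h1 := hb w hw
    have h2 := hc w hw
    rw [ric, tan_eq_sin_div_cos, ← mul_div_assoc, div_le_iff₀ h2] at h1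
    exact h1
  have hcz : ContinuousAt φ z := (hφ z hzI).continuousAt
  have hpz : ContinuousAt p z := hs.cont.continuousAt (Ipi_nhds hzI)
  have t1 : Tendsto (fun w => p w * sin (φ w)) (𝓝[<] z) (𝓝 (p z * sin (φ z))) :=
    (hpz.mul (continuous_sin.continuousAt.comp hcz)).tendsto.mono_left nhdsWithin_le_nhds
  have t2 : Tendsto (fun w => C * cos (φ w)) (𝓝[<] z) (𝓝 (C * cos (φ z))) :=
    (continuousAt_const.mul (continuous_cos.continuousAt.comp hcz)).tendsto.mono_left
      nhdsWithin_le_nhds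
  have := le_of_tendsto_of_tendsto t1 t2 hev
  rw [hz, sin_pi_div_two, cos_pi_div_two] at this
  linarith [hs.pos z hzI]

lemma ric_refl (p φ : ℝ → ℝ) (t : ℝ) :
    ric (fun x => p (-x)) (fun x => -φ (-x)) t = -ric p φ (-t) := by simp [ric]

lemma Cfg.blow {p ψ φR φL : ℝ → ℝ} {x1 x0 y0 y1 : ℝ} (c : Cfg p φR φL x1 x0 y0 y1)
    (hs : Su p ψ) (hx1 : x1 ∈ Ipi) (hy1 : y1 ∈ Ipi) (hR : φR y1 = π / 2) (hL : φL x1 = -(π / 2))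
    (hi : ric p φR y0 - ric p φL x0 ≤ 2 * tan ((y0 - x0) / 2)) : False := by
  have hbd : ∀ y ∈ Ioo y0 y1, ∀ x ∈ Ioo x1 x0, Mat p φR φL x0 y0 x y →
      ric p φR y ≤ 2 * tan ((y1 - x1) / 2) ∧ -ric p φL x ≤ 2 * tan ((y1 - x1) / 2) := by
    intro y hy x hx hm
    have h1 := c.curve hs hy hx hm hi
    have h2 : tan ((y - x) / 2) ≤ tan ((y1 - x1) / 2) := by
      apply strictMonoOn_tan.monotoneOn
      · constructor <;> linarith [hy.1, hy.2, hx.1, hx.2, c.hxy, hx1.1, hy1.2, pi_pos]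
      · constructor <;> linarith [hy.1, hy.2, hx.1, hx.2, c.hxy, hx1.1, hy1.2, pi_pos]
      · linarith [hy.2, hx.1]
    have h3 := ric_pos hs (c.JR hs ⟨hy.1.le, hy.2⟩) (c.Rpos hs hy)
    have h4 := ric_neg hs (c.JL hs ⟨hx.1, hx.2.le⟩) (c.Lneg hs hx)
    constructor <;> linarith
  rcases c.dich hs with h | h
  · refine blow_unbdd hs c.solR c.hy hy1 hR (fun w hw => Jset_cos (c.JR hs ⟨hw.1.le, hw.2⟩))
      (C := 2 * tan ((y1 - x1) / 2)) ?_
    intro w hw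
    obtain ⟨x, hx, hm⟩ := h w hw
    exact (hbd w hw x hx hm).1
  · refine blow_unbdd hs.refl c.solL.refl (y := -x0) (z := -x1) (by linarith [c.hx]) (Ipi_neg hx1)
      (by simp [hL]) ?_ (C := 2 * tan ((y1 - x1) / 2)) ?_
    · intro w hw
      have := Jset_cos (c.JL hs (x := -w) ⟨by linarith [hw.2], by linarith [hw.1]⟩)
      simpa using this
    · intro w hw
      have hw' : -w ∈ Ioo x1 x0 := ⟨by linarith [hw.2], by linarith [hw.1]⟩
      obtain ⟨y, hy, hm⟩ := h (-w) hw'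
      rw [ric_refl]
      exact (hbd y hy _ hw' hm).2

end

noncomputable section
open MeasureTheory Real Set Filter
open scoped ENNReal Topology NNReal

/-- left principal solution -/
structure PSL (p θ : ℝ → ℝ) : Prop where
  sol : Sol p θ
  gt : ∀ x ∈ Ipi, -(π / 2) < θ x
  mini : ∀ φ, Sol p φ → ∀ y ∈ Ipi, φ y < θ y → ∃ z ∈ Ipi, φ z ≤ -(π / 2)

lemma Sol.refl2 {p θ : ℝ → ℝ} (h : Sol (fun x => p (-x)) θ) : Sol p (fun x => -θ (-x)) := by
  have := h.refl
  simpa using this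

lemma PS.toL {p θ : ℝ → ℝ} (h : PS (fun x => p (-x)) θ) : PSL p (fun x => -θ (-x)) where
  sol := h.sol.refl2
  gt x hx := by have := h.lt _ (Ipi_neg hx); linarith
  mini φ hφ y hy hlt := by
    obtain ⟨z, hz, h2⟩ := h.maxi _ hφ.refl (-y) (Ipi_neg hy) (by simp; linarith)
    exact ⟨-z, Ipi_neg hz, by linarith⟩

lemma PSL.toR {p θ : ℝ → ℝ} (h : PSL p θ) : PS (fun x => p (-x)) (fun x => -θ (-x)) where
  sol := h.sol.refl
  lt x hx := by have := h.gt _ (Ipi_neg hx); linarith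
  maxi φ hφ y hy hlt := by
    obtain ⟨z, hz, h2⟩ := h.mini _ hφ.refl2 (-y) (Ipi_neg hy) (by simp; linarith)
    exact ⟨-z, Ipi_neg hz, by linarith⟩

lemma exists_PSL {p ψ : ℝ → ℝ} (hs : Su p ψ) : ∃ θ, PSL p θ := by
  obtain ⟨θ, h⟩ := exists_PS hs.refl
  exact ⟨_, h.toL⟩

lemma PSL.E {p ψ θ : ℝ → ℝ} (hs : Su p ψ) (h : PSL p θ) (A : ℝ) :
    ∃ x1 ∈ Ipi, x1 ≤ 0 ∧ ∀ x ∈ Ipi, x < x1 → θ x < 0 ∧ p x * tan (θ x) ≤ -A := by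
  obtain ⟨y1, h1, h2, h3⟩ := h.toR.E hs.refl A
  refine ⟨-y1, Ipi_neg h1, by linarith, fun x hx hlt => ?_⟩
  have := h3 (-x) (Ipi_neg hx) (by linarith)
  simp only [neg_neg, tan_neg] at this
  constructor <;> linarith [this.1, this.2]

lemma blow2 {p ψ φR φL : ℝ → ℝ} {x0 y0 : ℝ} (hs : Su p ψ) (hR : Sol p φR) (hL : Sol p φL)
    (hx0 : x0 ∈ Ipi) (hy0 : y0 ∈ Ipi) (hxy : x0 ≤ y0) (hR0 : 0 ≤ φR y0) (hR1 : φR y0 < π / 2)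
    (hL0 : φL x0 ≤ 0) (hL1 : -(π / 2) < φL x0) (hRz : ∃ z ∈ Ipi, π / 2 ≤ φR z)
    (hLz : ∃ z ∈ Ipi, φL z ≤ -(π / 2))
    (hi : ric p φR y0 - ric p φL x0 ≤ 2 * tan ((y0 - x0) / 2)) : False := by
  obtain ⟨z, hz, hz2⟩ := hRz
  obtain ⟨w, hw, hw2⟩ := hLz
  have mR := hR.strictMono hs
  have mL := hL.strictMono hs
  have h1 : y0 < z := (mR.lt_iff_lt hy0 hz).1 (by linarith)
  have h2 : w < x0 := (mL.lt_iff_lt hw hx0).1 (by linarith)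
  obtain ⟨y1, hy1, e1⟩ := intermediate_value_Icc h1.le (hR.cont.mono (Icc_sub_Ipi hy0 hz))
    (show π / 2 ∈ Icc (φR y0) (φR z) from ⟨hR1.le, hz2⟩)
  obtain ⟨x1, hx1, e2⟩ := intermediate_value_Icc h2.le (hL.cont.mono (Icc_sub_Ipi hw hx0))
    (show -(π / 2) ∈ Icc (φL w) (φL x0) from ⟨hw2, hL1.le⟩)
  have hy1I := Icc_sub_Ipi hy0 hz hy1
  have hx1I := Icc_sub_Ipi hw hx0 hx1
  have h3 : y0 < y1 := (mR.lt_iff_lt hy0 hy1I).1 (by linarith)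
  have h4 : x1 < x0 := (mL.lt_iff_lt hx1I hx0).1 (by linarith)
  have c : Cfg p φR φL x1 x0 y0 y1 := by
    refine ⟨hR, hL, h4, hxy, h3, hx1I.1.le, hy1I.2.le, hR0, ?_, hL0, ?_⟩
    · intro y hy
      rw [← e1]
      exact mR (Icc_sub_Ipi hy0 hy1I ⟨hy.1.le, hy.2.le⟩) hy1I hy.2
    · intro x hx
      rw [← e2]
      exact mL hx1I (Icc_sub_Ipi hx1I hx0 ⟨hx.1.le, hx.2.le⟩) hx.1
  exact c.blow hs hx1I hy1I e1 e2 hi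

lemma PSL_le_PS {p ψ θl θr : ℝ → ℝ} (hs : Su p ψ) (hl : PSL p θl) (hr : PS p θr) :
    ∀ x ∈ Ipi, θl x ≤ θr x := by
  intro y hy
  by_contra hcon
  push Not at hcon
  obtain ⟨s, h1, h2⟩ := exists_between hcon
  obtain ⟨φ, e, hφ⟩ := exists_sol hs hy s
  obtain ⟨z, hz, hz2⟩ := hr.maxi φ hφ y hy (by rw [e]; exact h1)
  obtain ⟨w, hw, hw2⟩ := hl.mini φ hφ y hy (by rw [e]; exact h2)
  have := convex_Ipi.isPreconnected.intermediate_value hw hz hφ.cont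
  obtain ⟨c, hc, hc0⟩ := this (show (0:ℝ) ∈ Icc _ _ from ⟨by linarith [pi_pos], by linarith [pi_pos]⟩)
  refine blow2 hs hφ hφ hc hc le_rfl hc0.ge (by linarith [pi_pos]) hc0.le (by linarith [pi_pos])
    ⟨z, hz, hz2⟩ ⟨w, hw, hw2⟩ (by simp [ric, hc0])

/-- half Poincare inequality -/
lemma poin_half {p W W' v v' : ℝ → ℝ} {c b μ : ℝ} (hcb : c ≤ b) (hp : ∀ x ∈ Icc c b, 0 < p x)
    (hpc : ContinuousOn p (Icc c b)) (hW : ∀ x ∈ Icc c b, HasDerivAt W (W' x) x)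
    (hμ : 0 < μ) (hW' : ∀ x ∈ Icc c b, 1 / p x + μ * p x * W x ^ 2 ≤ W' x) (hc : W c = 0)
    (hv : ∀ x ∈ Icc c b, HasDerivAt v (v' x) x) (hv' : ContinuousOn v' (Icc c b)) :
    μ * ∫ x in c..b, (v x - v c) ^ 2 * p x ≤ ∫ x in c..b, v' x ^ 2 * p x := by
  have hpos' : ∀ x ∈ Icc c b, 0 < W' x := fun x hx => by
    have := hp x hx
    refine lt_of_lt_of_le ?_ (hW' x hx)
    positivity
  have hWm : StrictMonoOn W (Icc c b) := by
    apply strictMonoOn_of_deriv_pos (convex_Icc _ _)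
      (fun x hx => (hW x hx).continuousAt.continuousWithinAt)
    intro x hx
    have hx := interior_subset hx
    rw [(hW x hx).deriv]; exact hpos' x hx
  have hcm : c ∈ Icc c b := ⟨le_rfl, hcb⟩
  have hWpos : ∀ x ∈ Ioc c b, 0 < W x := fun x hx => by
    have := hWm hcm ⟨hx.1.le, hx.2⟩ hx.1
    rwa [hc] at this
  have hvc : ContinuousOn v (Icc c b) := fun x hx => (hv x hx).continuousAt.continuousWithinAt
  set g : ℝ → ℝ := fun x => (v x - v c) ^ 2 / W x with hg
  have hgd : ∀ x ∈ Ioc c b, HasDerivAt g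
      ((2 * (v x - v c) * v' x * W x - (v x - v c) ^ 2 * W' x) / W x ^ 2) x := by
    intro x hx
    have hx' : x ∈ Icc c b := ⟨hx.1.le, hx.2⟩
    have := (((hv x hx').sub_const (v c)).pow 2).div (hW x hx') (hWpos x hx).ne'
    refine this.congr_deriv ?_
    simp
  have hg0 : ContinuousWithinAt g (Icc c b) c := by
    have hsl : Tendsto (fun x => (slope v c x) ^ 2 / slope W c x * (x - c)) (𝓝[≠] c)
        (𝓝 ((v' c) ^ 2 / W' c * 0)) := by
      refine Tendsto.mul (Tendsto.div ((hasDerivAt_iff_tendsto_slope.1 (hv c hcm)).pow 2)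
        (hasDerivAt_iff_tendsto_slope.1 (hW c hcm)) (hpos' c hcm).ne') ?_
      have : Tendsto (fun x => x - c) (𝓝 c) (𝓝 (c - c)) :=
        (continuous_id.sub continuous_const).tendsto c
      rw [sub_self] at this
      exact this.mono_left nhdsWithin_le_nhds
    have hgt : Tendsto g (𝓝[≠] c) (𝓝 (g c)) := by
      have e : g c = (v' c) ^ 2 / W' c * 0 := by simp [hg]
      rw [e]
      refine hsl.congr' ?_
      filter_upwards [self_mem_nhdsWithin] with x hx
      have hx : x - c ≠ 0 := sub_ne_zero.2 hx
      simp only [hg, slope_def_field, hc, sub_zero]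
      rcases eq_or_ne (W x) 0 with h | h
      · simp [h]
      · field_simp
    exact (continuousAt_iff_punctured_nhds.2 hgt).continuousWithinAt
  have hgc : ContinuousOn g (Icc c b) := by
    intro x hx
    rcases eq_or_lt_of_le hx.1 with e | e
    · rw [← e]; exact hg0
    · exact (hgd x ⟨e, hx.2⟩).continuousAt.continuousWithinAt
  have i1 : ContinuousOn (fun x => v' x ^ 2 * p x) (Icc c b) := (hv'.pow 2).mul hpc
  have i2 : ContinuousOn (fun x => (v x - v c) ^ 2 * p x) (Icc c b) :=
    ((hvc.sub continuousOn_const).pow 2).mul hpc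
  have key := intervalIntegral.sub_le_integral_of_hasDeriv_right_of_le (g := g)
    (g' := fun x => (2 * (v x - v c) * v' x * W x - (v x - v c) ^ 2 * W' x) / W x ^ 2)
    (φ := fun x => v' x ^ 2 * p x - μ * ((v x - v c) ^ 2 * p x)) hcb hgc
    (fun x hx => (hgd x ⟨hx.1, hx.2.le⟩).hasDerivWithinAt)
    ((i1.sub (continuousOn_const.mul i2)).integrableOn_Icc) ?_
  · rw [intervalIntegral.integral_sub, intervalIntegral.integral_const_mul] at key
    · have h1 : g c = 0 := by simp [hg]
      have h2 : 0 ≤ g b := by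
        rcases eq_or_lt_of_le hcb with e | e
        · rw [← e, h1]
        · exact div_nonneg (sq_nonneg _) (hWpos b ⟨e, le_rfl⟩).le
      linarith
    · exact ContinuousOn.intervalIntegrable (by rwa [uIcc_of_le hcb])
    · exact ContinuousOn.intervalIntegrable (by rw [uIcc_of_le hcb]; exact continuousOn_const.mul i2)
  · intro x hx
    have hx' : x ∈ Icc c b := ⟨hx.1.le, hx.2.le⟩
    have hWx := hWpos x ⟨hx.1, hx.2.le⟩
    have hpx := hp x hx'
    have hW'x := hW' x hx'
    generalize v x - v c = w at *
    rw [div_le_iff₀ (by positivity)]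
    have e1 : w ^ 2 * (1 / p x + μ * p x * W x ^ 2) ≤ w ^ 2 * W' x := by gcongr
    have e2 : 2 * w * v' x * W x ≤ v' x ^ 2 * p x * W x ^ 2 + w ^ 2 * (1 / p x) := by
      have : v' x ^ 2 * p x * W x ^ 2 + w ^ 2 * (1 / p x) - 2 * w * v' x * W x
        = (v' x * p x * W x - w) ^ 2 / p x := by field_simp; ring
      have h3 : 0 ≤ (v' x * p x * W x - w) ^ 2 / p x := by positivity
      linarith
    nlinarith

lemma poin_full {p W W' v v' : ℝ → ℝ} {c b μ : ℝ} (hcb : c ∈ Icc (-b) b)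
    (hp : ∀ x ∈ Icc (-b) b, 0 < p x)
    (hpc : ContinuousOn p (Icc (-b) b)) (hW : ∀ x ∈ Icc (-b) b, HasDerivAt W (W' x) x)
    (hμ : 0 < μ) (hW' : ∀ x ∈ Icc (-b) b, 1 / p x + μ * p x * W x ^ 2 ≤ W' x) (hc : W c = 0)
    (hv : ∀ x ∈ Icc (-b) b, HasDerivAt v (v' x) x) (hv' : ContinuousOn v' (Icc (-b) b)) :
    μ * ∫ x in (-b)..b, (v x - v c) ^ 2 * p x ≤ ∫ x in (-b)..b, v' x ^ 2 * p x := by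
  have s1 : Icc c b ⊆ Icc (-b) b := Icc_subset_Icc_left hcb.1
  have s2 : Icc (-b) c ⊆ Icc (-b) b := Icc_subset_Icc_right hcb.2
  have hn : ∀ x ∈ Icc (-c) b, -x ∈ Icc (-b) b := fun x hx =>
    ⟨by linarith [hx.2], by linarith [hx.1, hcb.2]⟩
  have h1 := poin_half (p := p) (v := v) (v' := v') hcb.2 (fun x hx => hp x (s1 hx)) (hpc.mono s1)
    (fun x hx => hW x (s1 hx)) hμ (fun x hx => hW' x (s1 hx)) hc (fun x hx => hv x (s1 hx))
    (hv'.mono s1)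
  have dneg : ∀ {f f' : ℝ → ℝ}, (∀ x ∈ Icc (-b) b, HasDerivAt f (f' x) x) →
      ∀ x ∈ Icc (-c) b, HasDerivAt (fun x => f (-x)) (-f' (-x)) x := by
    intro f f' h x hx
    have := HasDerivAt.comp x (h _ (hn x hx)) (hasDerivAt_neg x)
    refine this.congr_deriv ?_
    ring
  have h2 := poin_half (p := fun x => p (-x)) (W := fun x => -W (-x)) (W' := fun x => W' (-x))
    (v := fun x => v (-x)) (v' := fun x => -v' (-x)) (c := -c) (b := b) (μ := μ) (by linarith [hcb.1])
    (fun x hx => hp _ (hn x hx)) (hpc.comp continuous_neg.continuousOn hn)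
    (fun x hx => ((dneg hW x hx).neg).congr_deriv (by simp)) hμ
    (fun x hx => by simpa using hW' _ (hn x hx)) (by simp [hc]) (dneg hv)
    ((hv'.comp continuous_neg.continuousOn hn).neg)
  simp only [neg_neg, neg_sq] at h2
  rw [intervalIntegral.integral_comp_neg (fun x => (v x - v c) ^ 2 * p x),
    intervalIntegral.integral_comp_neg (fun x => v' x ^ 2 * p x)] at h2
  simp only [neg_neg] at h2
  have hvc : ContinuousOn v (Icc (-b) b) := fun x hx => (hv x hx).continuousAt.continuousWithinAt
  have i1 : ContinuousOn (fun x => v' x ^ 2 * p x) (Icc (-b) b) := (hv'.pow 2).mul hpc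
  have i2 : ContinuousOn (fun x => (v x - v c) ^ 2 * p x) (Icc (-b) b) :=
    ((hvc.sub continuousOn_const).pow 2).mul hpc
  have ii : ∀ {f : ℝ → ℝ}, ContinuousOn f (Icc (-b) b) →
      (∫ x in (-b)..b, f x) = (∫ x in (-b)..c, f x) + ∫ x in c..b, f x := by
    intro f hf
    rw [intervalIntegral.integral_add_adjacent_intervals]
    · exact ContinuousOn.intervalIntegrable (by rw [uIcc_of_le hcb.1]; exact hf.mono s2)
    · exact ContinuousOn.intervalIntegrable (by rw [uIcc_of_le hcb.2]; exact hf.mono s1)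
  rw [ii i1, ii i2]
  linarith

end

noncomputable section
open MeasureTheory Real Set Filter
open scoped ENNReal Topology NNReal

lemma poin_lint {p W W' v : ℝ → ℝ} {c μ : ℝ} (hcI : c ∈ Ipi)
    (hp : ∀ x ∈ Ipi, 0 < p x) (hpc : ContinuousOn p Ipi)
    (hW : ∀ x ∈ Ipi, HasDerivAt W (W' x) x)
    (hμ : 0 < μ) (hW' : ∀ x ∈ Ipi, 1 / p x + μ * p x * W x ^ 2 ≤ W' x) (hc : W c = 0)
    (hv : ContDiffOn ℝ 1 v Ipi) :
    ENNReal.ofReal μ * (∫⁻ x in Ipi, ENNReal.ofReal ((v x - v c) ^ 2 * p x)) ≤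
      ∫⁻ x in Ipi, ENNReal.ofReal ((deriv v x) ^ 2 * p x) := by
  have ho : IsOpen Ipi := isOpen_Ioo
  have hv' : ContinuousOn (deriv v) Ipi := hv.continuousOn_deriv_of_isOpen ho le_rfl
  have hvd : ∀ x ∈ Ipi, HasDerivAt v (deriv v x) x := fun x hx =>
    ((hv.differentiableOn (by norm_num)).differentiableAt (ho.mem_nhds hx)).hasDerivAt
  have hvc : ContinuousOn v Ipi := hv.continuousOn
  have hstep : ∀ b, b ∈ Ipi → c ∈ Icc (-b) b →
      ENNReal.ofReal μ * (∫⁻ x in Ioc (-b) b, ENNReal.ofReal ((v x - v c) ^ 2 * p x)) ≤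
      ∫⁻ x in Ipi, ENNReal.ofReal ((deriv v x) ^ 2 * p x) := by
    intro b hb hcb
    have hss := Icc_sub_Ipi (Ipi_neg hb) hb
    have hle : -b ≤ b := hcb.1.trans hcb.2
    have h := poin_full (p := p) (v := v) (v' := deriv v) hcb (fun x hx => hp x (hss hx))
      (hpc.mono hss) (fun x hx => hW x (hss hx)) hμ (fun x hx => hW' x (hss hx)) hc
      (fun x hx => hvd x (hss hx)) (hv'.mono hss)
    have i1 : IntegrableOn (fun x => deriv v x ^ 2 * p x) (Ioc (-b) b) :=
      (((hv'.mono hss).pow 2).mul (hpc.mono hss)).integrableOn_Icc.mono_set Ioc_subset_Icc_self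
    have i2 : IntegrableOn (fun x => (v x - v c) ^ 2 * p x) (Ioc (-b) b) :=
      ((((hvc.mono hss).sub continuousOn_const).pow 2).mul (hpc.mono hss)).integrableOn_Icc.mono_set
        Ioc_subset_Icc_self
    have n1 : 0 ≤ᵐ[volume.restrict (Ioc (-b) b)] fun x => deriv v x ^ 2 * p x :=
      (ae_restrict_iff' measurableSet_Ioc).2 (Eventually.of_forall fun x hx =>
        mul_nonneg (sq_nonneg _) (hp x (hss ⟨hx.1.le, hx.2⟩)).le)
    have n2 : 0 ≤ᵐ[volume.restrict (Ioc (-b) b)] fun x => (v x - v c) ^ 2 * p x :=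
      (ae_restrict_iff' measurableSet_Ioc).2 (Eventually.of_forall fun x hx =>
        mul_nonneg (sq_nonneg _) (hp x (hss ⟨hx.1.le, hx.2⟩)).le)
    rw [intervalIntegral.integral_of_le hle, intervalIntegral.integral_of_le hle] at h
    rw [← ofReal_integral_eq_lintegral_ofReal i2 n2, ← ENNReal.ofReal_mul hμ.le]
    refine (ENNReal.ofReal_le_ofReal h).trans ?_
    rw [ofReal_integral_eq_lintegral_ofReal i1 n1]
    exact lintegral_mono_set (fun x hx => hss ⟨hx.1.le, hx.2⟩)
  -- exhaustion
  have hcabs : |c| < π / 2 := abs_lt.2 hcI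
  obtain ⟨u, hu1, hu2, hu3⟩ := exists_seq_strictMono_tendsto' hcabs
  have hU : Ipi = ⋃ n, Ioc (-(u n)) (u n) := by
    ext x
    simp only [mem_iUnion]
    constructor
    · intro hx
      obtain ⟨n, hn⟩ := (hu3.eventually (lt_mem_nhds (abs_lt.2 hx))).exists
      exact ⟨n, (abs_lt.1 hn).1, (abs_lt.1 hn).2.le⟩
    · rintro ⟨n, hn⟩
      exact ⟨by linarith [hn.1, (hu2 n).2], by linarith [hn.2, (hu2 n).2]⟩
  have hdir : Directed (· ⊆ ·) (fun n => Ioc (-(u n)) (u n)) := by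
    apply Monotone.directed_le (f := fun n => Ioc (-(u n)) (u n))
    intro m n hmn
    have := hu1.monotone hmn
    exact Ioc_subset_Ioc (by linarith) this
  have e : (∫⁻ x in Ipi, ENNReal.ofReal ((v x - v c) ^ 2 * p x)) =
      ⨆ n, ∫⁻ x in Ioc (-(u n)) (u n), ENNReal.ofReal ((v x - v c) ^ 2 * p x) := by
    conv_lhs => rw [hU]
    exact setLIntegral_iUnion_of_directed _ hdir
  rw [e, ENNReal.mul_iSup]
  refine iSup_le fun n => hstep (u n) ?_ ?_
  · exact ⟨by linarith [(hu2 n).1, abs_nonneg c], (hu2 n).2⟩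
  · exact abs_le.1 (hu2 n).1.le

lemma mu1_ge {p W W' : ℝ → ℝ} {c μ : ℝ} (hcI : c ∈ Ipi)
    (hp : ∀ x ∈ Ipi, 0 < p x) (hpc : ContinuousOn p Ipi) (hint : IntegrableOn p Ipi)
    (hW : ∀ x ∈ Ipi, HasDerivAt W (W' x) x)
    (hμ : 0 < μ) (hW' : ∀ x ∈ Ipi, 1 / p x + μ * p x * W x ^ 2 ≤ W' x) (hc : W c = 0) :
    ENNReal.ofReal μ ≤ mu1 (-(π / 2)) (π / 2) p := by
  unfold mu1
  refine le_iInf₂ fun v hadm => ?_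
  obtain ⟨hv, h0, hfin, hz⟩ := hadm
  unfold neuRQ
  rw [ENNReal.le_div_iff_mul_le (Or.inl h0) (Or.inl hfin)]
  refine le_trans ?_ (poin_lint hcI hp hpc hW hμ hW' hc hv)
  gcongr 1
  change (∫⁻ x in Ipi, ENNReal.ofReal ((v x) ^ 2 * p x)) ≤ _
  have hm : MeasurableSet Ipi := measurableSet_Ioo
  have hvc : ContinuousOn v Ipi := hv.continuousOn
  have n2 : 0 ≤ᵐ[volume.restrict Ipi] fun x => (v x) ^ 2 * p x :=
    (ae_restrict_iff' hm).2 (Eventually.of_forall fun x hx =>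
      mul_nonneg (sq_nonneg _) (hp x hx).le)
  have n3 : 0 ≤ᵐ[volume.restrict Ipi] fun x => (v x - v c) ^ 2 * p x :=
    (ae_restrict_iff' hm).2 (Eventually.of_forall fun x hx =>
      mul_nonneg (sq_nonneg _) (hp x hx).le)
  have i2 : IntegrableOn (fun x => (v x) ^ 2 * p x) Ipi := by
    refine (lintegral_ofReal_ne_top_iff_integrable ?_ n2).1 hfin
    exact ((hvc.pow 2).mul hpc).aestronglyMeasurable hm
  have i1 : IntegrableOn (fun x => v x * p x) Ipi := by
    refine Integrable.mono' (i2.add hint) ((hvc.mul hpc).aestronglyMeasurable hm) ?_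
    refine (ae_restrict_iff' hm).2 (Eventually.of_forall fun x hx => ?_)
    have := hp x hx
    simp only [Pi.add_apply, norm_eq_abs, abs_mul, abs_of_pos this]
    have h2 : |v x| ≤ v x ^ 2 + 1 := by
      rw [← sq_abs]; nlinarith [sq_nonneg (|v x| - 1), abs_nonneg (v x)]
    nlinarith
  have e : (fun x => (v x - v c) ^ 2 * p x) =
      fun x => (v x ^ 2 * p x - 2 * v c * (v x * p x)) + v c ^ 2 * p x := by
    funext x; ring
  have i3 : IntegrableOn (fun x => (v x - v c) ^ 2 * p x) Ipi := by
    rw [e]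
    exact (i2.sub (i1.const_mul _)).add (hint.const_mul _)
  rw [← ofReal_integral_eq_lintegral_ofReal i2 n2, ← ofReal_integral_eq_lintegral_ofReal i3 n3]
  apply ENNReal.ofReal_le_ofReal
  have i4 : Integrable (fun x => v x ^ 2 * p x - 2 * v c * (v x * p x)) (volume.restrict Ipi) :=
    i2.sub (i1.const_mul _)
  rw [e, integral_add i4 (hint.const_mul _),
    integral_sub i2 (i1.const_mul _), integral_const_mul, integral_const_mul]
  have hz' : (∫ x in Ipi, v x * p x) = 0 := hz
  rw [hz']
  have : 0 ≤ ∫ x in Ipi, p x := setIntegral_nonneg hm (fun x hx => (hp x hx).le)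
  nlinarith [sq_nonneg (v c), mul_nonneg (sq_nonneg (v c)) this]

/-- strict case -/
lemma strict_case {p ψ θl θr : ℝ → ℝ} (hs : Su p ψ) (hint : IntegrableOn p Ipi)
    (hl : PSL p θl) (hr : PS p θr)
    (hlt : ∀ x ∈ Ipi, θl x < θr x) : 3 < mu1 (-(π / 2)) (π / 2) p := by
  have hJl : ∀ x ∈ Ipi, x ∈ Jset θl := fun x hx => ⟨hx, hl.gt x hx, (hlt x hx).trans (hr.lt x hx)⟩
  have hJr : ∀ x ∈ Ipi, x ∈ Jset θr := fun x hx => ⟨hx, (hl.gt x hx).trans (hlt x hx), hr.lt x hx⟩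
  set a : ℝ → ℝ := fun x => tan (θl x) with ha
  set b : ℝ → ℝ := fun x => tan (θr x) with hb
  have had : ∀ x ∈ Ipi, HasDerivAt a (1 / p x + 3 * p x * a x ^ 2) x := fun x hx =>
    hl.sol.dtan hs hx (Jset_cos (hJl x hx)).ne'
  have hbd : ∀ x ∈ Ipi, HasDerivAt b (1 / p x + 3 * p x * b x ^ 2) x := fun x hx =>
    hr.sol.dtan hs hx (Jset_cos (hJr x hx)).ne'
  have hab : ∀ x ∈ Ipi, a x < b x := fun x hx =>
    strictMonoOn_tan (hJl x hx).2 (hJr x hx).2 (hlt x hx)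
  obtain ⟨xa', hxa', hxa0, hxa⟩ := hl.E hs 2
  obtain ⟨xb', hxb', hxb0, hxb⟩ := hr.E hs 2
  obtain ⟨xa, h1, h2⟩ := exists_between hxa'.1
  obtain ⟨xb, h3, h4⟩ := exists_between hxb'.2
  have hxaI : xa ∈ Ipi := ⟨h1, by linarith [hxa'.2]⟩
  have hxbI : xb ∈ Ipi := ⟨by linarith [hxb'.1], h4⟩
  have hd : 0 < xb - xa := by linarith
  set lam : ℝ → ℝ := fun x => Real.smoothTransition ((x - xa) / (xb - xa)) with hlam
  have hlamd : Differentiable ℝ lam := by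
    have : Differentiable ℝ Real.smoothTransition :=
      (Real.smoothTransition.contDiff (n := 1)).differentiable (by norm_num)
    exact this.comp (by fun_prop)
  have hlamm : Monotone lam := by
    intro x y hxy
    apply Real.smoothTransition.monotone
    gcongr
  have hlam' : ∀ x, 0 ≤ deriv lam x := fun x => hlamm.deriv_nonneg
  have hl0 : ∀ x, 0 ≤ lam x := fun x => Real.smoothTransition.nonneg _
  have hl1 : ∀ x, lam x ≤ 1 := fun x => Real.smoothTransition.le_one _
  set U : ℝ → ℝ := fun x => a x + lam x * (b x - a x) with hU
  set gain : ℝ → ℝ := fun x => deriv lam x * (b x - a x) + 3 * p x * lam x * (1 - lam x) * (b x - a x) ^ 2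
    with hgain
  have hUd : ∀ x ∈ Ipi, HasDerivAt U (1 / p x + 3 * p x * U x ^ 2 + gain x) x := by
    intro x hx
    have := (had x hx).add ((hlamd x).hasDerivAt.mul ((hbd x hx).sub (had x hx)))
    refine this.congr_deriv ?_
    simp only [hU, hgain, Pi.sub_apply]
    ring
  set g0 : ℝ → ℝ := fun x => p x * (3 * p x * lam x * (1 - lam x) * (b x - a x) ^ 2) with hg0
  have hac : ContinuousOn a Ipi := fun x hx => (had x hx).continuousAt.continuousWithinAt
  have hbc : ContinuousOn b Ipi := fun x hx => (hbd x hx).continuousAt.continuousWithinAt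
  have hUc : ContinuousOn U Ipi := fun x hx => (hUd x hx).continuousAt.continuousWithinAt
  have hlc : ContinuousOn lam Ipi := hlamd.continuous.continuousOn
  have hg0c : ContinuousOn g0 Ipi :=
    hs.cont.mul ((((continuousOn_const.mul hs.cont).mul hlc).mul (continuousOn_const.sub hlc)).mul
      ((hbc.sub hac).pow 2))
  have hss := Icc_sub_Ipi hxaI hxbI
  have hlow : ∀ x ∈ Ipi, x ≤ xa → p x * U x ≤ -2 := by
    intro x hx hle
    have : lam x = 0 := Real.smoothTransition.zero_of_nonpos
      (div_nonpos_of_nonpos_of_nonneg (by linarith) hd.le)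
    simp only [hU, this, zero_mul, add_zero]
    exact (hxa x hx (by linarith)).2
  have hhigh : ∀ x ∈ Ipi, xb ≤ x → 2 ≤ p x * U x := by
    intro x hx hle
    have : lam x = 1 := Real.smoothTransition.one_of_one_le
      ((one_le_div hd).2 (by linarith))
    simp only [hU, this, one_mul, add_sub_cancel]
    exact (hxb x hx (by linarith)).2
  have hgpos : ∀ x ∈ Ioo xa xb, 0 < g0 x := by
    intro x hx
    have hxI := hss ⟨hx.1.le, hx.2.le⟩
    have p0 := hs.pos x hxI
    have l0 : 0 < lam x := Real.smoothTransition.pos_of_pos (div_pos (by linarith [hx.1]) hd)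
    have l1 : lam x < 1 := Real.smoothTransition.lt_one_of_lt_one
      ((div_lt_one hd).2 (by linarith [hx.2]))
    have d0 := sub_pos.2 (hab x hxI)
    have d1 := sub_pos.2 l1
    simp only [hg0]
    positivity
  obtain ⟨m, hm0, hm⟩ : ∃ m > 0, ∀ x ∈ Ipi, (p x * U x) ^ 2 ≤ 1 → m ≤ g0 x := by
    set S := Icc xa xb ∩ (fun x => (p x * U x) ^ 2) ⁻¹' Iic 1 with hS
    have hcl : IsClosed S := by
      apply ContinuousOn.preimage_isClosed_of_isClosed _ isClosed_Icc isClosed_Iic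
      exact ((hs.cont.mono hss).mul (hUc.mono hss)).pow 2
    have hcomp : IsCompact S := isCompact_Icc.of_isClosed_subset hcl inter_subset_left
    have hin : ∀ x ∈ Ipi, (p x * U x) ^ 2 ≤ 1 → x ∈ S ∧ x ∈ Ioo xa xb := by
      intro x hx h
      have q1 : xa < x := by
        by_contra hcon; push Not at hcon
        have := hlow x hx hcon; nlinarith
      have q2 : x < xb := by
        by_contra hcon; push Not at hcon
        have := hhigh x hx hcon; nlinarith
      exact ⟨⟨⟨q1.le, q2.le⟩, h⟩, q1, q2⟩
    rcases S.eq_empty_or_nonempty with he | hne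
    · refine ⟨1, one_pos, fun x hx h => ?_⟩
      have := (hin x hx h).1
      rw [he] at this; exact this.elim
    · obtain ⟨x0, hx0, hmin⟩ := hcomp.exists_isMinOn hne (hg0c.mono (inter_subset_left.trans hss))
      refine ⟨g0 x0, hgpos x0 (hin x0 (hss hx0.1) hx0.2).2, fun x hx h => hmin (hin x hx h).1⟩
  set η := min (m / 2) (1 / 2) with hη
  have hη0 : 0 < η := lt_min (by linarith) (by norm_num)
  have hη1 : η ≤ m / 2 := min_le_left _ _
  have hη2 : η ≤ 1 / 2 := min_le_right _ _
  have hκ : 0 < 1 - η := by linarith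
  set μ := (3 - 2 * η) / (1 - η) with hμ
  have hμ3 : 3 < μ := by rw [hμ, lt_div_iff₀ hκ]; linarith
  obtain ⟨c, hc, hc0⟩ : ∃ c ∈ Icc xa xb, U c = 0 := by
    have q1 := hlow xa hxaI le_rfl
    have q2 := hhigh xb hxbI le_rfl
    have p1 := hs.pos xa hxaI
    have p2 := hs.pos xb hxbI
    have r1 : U xa ≤ 0 := by
      by_contra hcon; push Not at hcon
      have := mul_pos p1 hcon; linarith
    have r2 : 0 ≤ U xb := by
      by_contra hcon; push Not at hcon
      have := mul_neg_of_pos_of_neg p2 hcon; linarith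
    exact intermediate_value_Icc (by linarith) (hUc.mono hss) ⟨r1, r2⟩
  have := mu1_ge (W := fun x => (1 - η) * U x)
    (W' := fun x => (1 - η) * (1 / p x + 3 * p x * U x ^ 2 + gain x)) (μ := μ) (hss hc) hs.pos hs.cont
    hint (fun x hx => (hUd x hx).const_mul _) (by linarith) ?_ (by simp [hc0])
  · refine lt_of_lt_of_le ?_ this
    have h3 : (3 : ℝ≥0∞) = ENNReal.ofReal 3 := by simp
    rw [h3]
    exact (ENNReal.ofReal_lt_ofReal_iff (by linarith)).2 hμ3
  · intro x hx
    have px := hs.pos x hx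
    have hgg : g0 x ≤ p x * gain x := by
      simp only [hg0, hgain]
      have := mul_nonneg (hlam' x) (sub_pos.2 (hab x hx)).le
      nlinarith
    have hg00 : 0 ≤ g0 x := by
      have := sub_nonneg.2 (hl1 x)
      have := hl0 x
      simp only [hg0]; positivity
    have e : (1 - η) * (1 / p x + 3 * p x * U x ^ 2 + gain x) -
        (1 / p x + μ * p x * ((1 - η) * U x) ^ 2) =
        (-η + 2 * η * (1 - η) * (p x * U x) ^ 2 + (1 - η) * (p x * gain x)) / p x := by
      rw [hμ]; field_simp; ring
    have hnn : 0 ≤ -η + 2 * η * (1 - η) * (p x * U x) ^ 2 + (1 - η) * (p x * gain x) := by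
      rcases le_total ((p x * U x) ^ 2) 1 with h | h
      · have := hm x hx h
        have q : (1 - η) * m ≤ (1 - η) * (p x * gain x) := by
          apply mul_le_mul_of_nonneg_left _ hκ.le; linarith
        have q2 : 0 ≤ 2 * η * (1 - η) * (p x * U x) ^ 2 := by positivity
        nlinarith
      · have q : 0 ≤ (1 - η) * (p x * gain x) := mul_nonneg hκ.le (by linarith)
        have q2 : 2 * η * (1 - η) * 1 ≤ 2 * η * (1 - η) * (p x * U x) ^ 2 := by gcongr
        nlinarith
    have := div_nonneg hnn px.le
    rw [← e] at this
    linarith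

end

noncomputable section
open MeasureTheory Real Set Filter
open scoped ENNReal Topology NNReal

lemma alg_match {R r T ψx ψy : ℝ} (hR : 0 < R) (hr : r < 0) (hg : 2 * T ≤ ψy - ψx)
    (hM : R - r = 2 * T) (h1 : 3 * R ^ 2 - T ^ 2 - 2 * ψy * R = 0)
    (h2 : 3 * r ^ 2 - T ^ 2 - 2 * ψx * r = 0) : R = T ∧ r = -T ∧ ψy = T ∧ ψx = -T := by
  obtain ⟨L, rfl⟩ : ∃ L, r = -L := ⟨-r, by ring⟩
  have hL : 0 < L := by linarith
  have e1 : 2 * ψy = 3 * R - T ^ 2 / R := by field_simp; linarith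
  have e2 : -(2 * ψx) = 3 * L - T ^ 2 / L := by field_simp; linarith
  have hT : T = (R + L) / 2 := by linarith
  have h3 : T ^ 2 / R + T ^ 2 / L ≤ R + L := by linarith
  have h4 : T ^ 2 / R + T ^ 2 / L = T ^ 2 * (R + L) / (R * L) := by field_simp; ring
  rw [h4, div_le_iff₀ (by positivity), mul_comm (T ^ 2)] at h3
  have h5 : T ^ 2 ≤ R * L := le_of_mul_le_mul_left h3 (by positivity)
  have h6 : (R - L) ^ 2 ≤ 0 := by rw [hT] at h5; nlinarith
  have h7 : R = L := by
    have : (R - L) ^ 2 = 0 := le_antisymm h6 (sq_nonneg _)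
    have := pow_eq_zero_iff (two_ne_zero) |>.1 this
    linarith
  subst h7
  have h8 : R = T := by linarith
  subst h8
  refine ⟨rfl, rfl, ?_, ?_⟩
  · have : R * (R - ψy) = 0 := by nlinarith
    rcases mul_eq_zero.1 this with h | h <;> linarith
  · have : R * (R + ψx) = 0 := by nlinarith
    rcases mul_eq_zero.1 this with h | h <;> linarith

section
variable {p ψ θ : ℝ → ℝ} {c : ℝ}

lemma eqJ (hr : PS p θ) (hl : PSL p θ) : ∀ x ∈ Ipi, x ∈ Jset θ := fun x hx =>
  ⟨hx, hl.gt x hx, hr.lt x hx⟩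

lemma arctan_ric (hs : Su p ψ) {x : ℝ} (hx : x ∈ Jset θ) : arctan (ric p θ x / p x) = θ x := by
  have : ric p θ x / p x = tan (θ x) := by
    have := (hs.pos x hx.1).ne'
    unfold ric; field_simp
  rw [this, arctan_tan hx.2.1 hx.2.2]

lemma ric_arctan (hs : Su p ψ) {φ : ℝ → ℝ} {x A : ℝ} (hx : x ∈ Ipi) (h : φ x = arctan (A / p x)) :
    ric p φ x = A := by
  have := (hs.pos x hx).ne'
  unfold ric; rw [h, tan_arctan]; field_simp

lemma eq_lower (hs : Su p ψ) (hr : PS p θ) (hl : PSL p θ) (hc : c ∈ Ipi) (hc0 : θ c = 0)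
    {x y : ℝ} (hx : x ∈ Ipi) (hy : y ∈ Ipi) (hxc : x < c) (hcy : c < y) :
    2 * tan ((y - x) / 2) ≤ ric p θ y - ric p θ x := by
  by_contra hcon
  push Not at hcon
  have hm := hr.sol.strictMono hs
  have hJ := eqJ hr hl
  have py := hs.pos y hy
  have px := hs.pos x hx
  have hRp : 0 < ric p θ y := ric_pos hs (hJ y hy) (by rw [← hc0]; exact hm hc hy hcy)
  have hLn : ric p θ x < 0 := ric_neg hs (hJ x hx) (by rw [← hc0]; exact hm hx hc hxc)
  set δ := (2 * tan ((y - x) / 2) - (ric p θ y - ric p θ x)) / 2 with hδ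
  have hδ0 : 0 < δ := by rw [hδ]; linarith
  obtain ⟨φR, eR, hφR⟩ := exists_sol hs hy (arctan ((ric p θ y + δ) / p y))
  obtain ⟨φL, eL, hφL⟩ := exists_sol hs hx (arctan ((ric p θ x - δ) / p x))
  refine blow2 hs hφR hφL hx hy (by linarith) ?_ ?_ ?_ ?_ ?_ ?_ ?_
  · rw [eR, arctan_nonneg]; positivity
  · rw [eR]; exact arctan_lt_pi_div_two _
  · rw [eL, ← arctan_zero]
    exact arctan_strictMono.monotone (div_nonpos_of_nonpos_of_nonneg (by linarith) px.le)
  · rw [eL]; exact neg_pi_div_two_lt_arctan _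
  · refine hr.maxi φR hφR y hy ?_
    rw [eR, ← arctan_ric hs (hJ y hy)]
    apply arctan_strictMono
    gcongr; linarith
  · refine hl.mini φL hφL x hx ?_
    rw [eL, ← arctan_ric hs (hJ x hx)]
    apply arctan_strictMono
    gcongr; linarith
  · rw [ric_arctan hs hy eR, ric_arctan hs hx eL]
    linarith

lemma eqCfg (hr : PS p θ) (hl : PSL p θ) (hc : c ∈ Ipi) (hc0 : θ c = 0) :
    Cfg p θ θ (-(π / 2)) c c (π / 2) where
  solR := hr.sol
  solL := hr.sol
  hx := hc.1
  hxy := le_rfl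
  hy := hc.2
  hx1 := le_rfl
  hy1 := le_rfl
  R0 := hc0.ge
  Rlt y hy := hr.lt y ⟨hc.1.trans hy.1, hy.2⟩
  L0 := hc0.le
  Lgt x hx := hl.gt x ⟨hx.1, hx.2.trans hc.2⟩

lemma match_pt (hs : Su p ψ) (hr : PS p θ) (hl : PSL p θ) (hc : c ∈ Ipi) (hc0 : θ c = 0)
    {x y : ℝ} (hx : x ∈ Ioo (-(π / 2)) c) (hy : y ∈ Ioo c (π / 2)) (hm : Mat p θ θ c c x y) :
    ric p θ y = tan ((y - x) / 2) ∧ ric p θ x = -tan ((y - x) / 2) ∧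
      ψ y = tan ((y - x) / 2) ∧ ψ x = -tan ((y - x) / 2) := by
  have cf := eqCfg hr hl hc hc0
  have hxI : x ∈ Ipi := ⟨hx.1, hx.2.trans hc.2⟩
  have hyI : y ∈ Ipi := ⟨hc.1.trans hy.1, hy.2⟩
  have hJ := eqJ hr hl
  have h1 := cf.curve hs hy hx hm (by simp)
  have h2 := eq_lower hs hr hl hc hc0 hxI hyI hx.2 hy.1
  have heq : ric p θ y - ric p θ x = 2 * tan ((y - x) / 2) := le_antisymm h1 h2
  have hcos : cos ((y - x) / 2) ≠ 0 := by
    apply cos_ne_of <;> linarith [hx.1, hx.2, hy.1, hy.2, pi_pos]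
  have esec : 1 / cos ((y - x) / 2) ^ 2 = 1 + tan ((y - x) / 2) ^ 2 := by
    rw [← Real.inv_one_add_tan_sq hcos]; simp
  have hRp := ric_pos hs (hJ y hyI) (cf.Rpos hs hy)
  have hLn := ric_neg hs (hJ x hxI) (cf.Lneg hs hx)
  refine alg_match hRp hLn (hs.gap x hxI y hyI (hx.2.trans hy.1)) heq ?_ ?_
  · have d1 := hr.sol.maj hs hyI (Jset_cos (hJ y hyI)).ne'
    have d3 := ((Real.hasDerivAt_tan hcos).comp y
        (((hasDerivAt_id y).sub_const x).div_const 2)).const_mul 2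
    have d := (d1.sub_const (ric p θ x)).sub d3
    have hmin : IsLocalMin ((fun z => p y * exp (-2 * ψ y * (z - y)) * tan (θ z) - ric p θ x) -
        fun z => 2 * (tan ∘ fun z => (id z - x) / 2) z) y := by
      filter_upwards [Ioo_mem_nhds hy.1 hy.2] with z hz
      have hzI : z ∈ Ipi := ⟨hc.1.trans hz.1, hz.2⟩
      have q1 := eq_lower hs hr hl hc hc0 hxI hzI hx.2 hz.1
      have q2 : 0 ≤ tan (θ z) := tan_nonneg_of_nonneg_of_le_pi_div_two (cf.Rpos hs hz).le
        (hr.lt z hzI).le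
      have q3 := mul_le_mul_of_nonneg_right (hs.tang y hyI z hzI) q2
      simp only [Pi.sub_apply, Function.comp_apply, id, sub_self, mul_zero, exp_zero, mul_one]
      unfold ric at *
      linarith
    have := hmin.hasDerivAt_eq_zero d
    rw [esec] at this
    unfold ric
    linarith
  · have d1 := hr.sol.maj hs hxI (Jset_cos (hJ x hxI)).ne'
    have d3 := ((Real.hasDerivAt_tan hcos).comp x
        (((hasDerivAt_id x).const_sub y).div_const 2)).const_mul 2
    have d := (d1.const_sub (ric p θ y)).sub d3
    have hmin : IsLocalMin ((fun z => ric p θ y - p x * exp (-2 * ψ x * (z - x)) * tan (θ z)) -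
        fun z => 2 * (tan ∘ fun z => (y - id z) / 2) z) x := by
      filter_upwards [Ioo_mem_nhds hx.1 hx.2] with z hz
      have hzI : z ∈ Ipi := ⟨hz.1, hz.2.trans hc.2⟩
      have q1 := eq_lower hs hr hl hc hc0 hzI hyI hz.2 hy.1
      have q2 : tan (θ z) ≤ 0 := tan_nonpos_of_nonpos_of_neg_pi_div_two_le (cf.Lneg hs hz).le
        (hl.gt z hzI).le
      have q3 := mul_le_mul_of_nonpos_right (hs.tang x hxI z hzI) q2
      simp only [Pi.sub_apply, Function.comp_apply, id, sub_self, mul_zero, exp_zero, mul_one]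
      unfold ric at *
      linarith
    have := hmin.hasDerivAt_eq_zero d
    rw [esec] at this
    unfold ric
    linarith

lemma match_sum (hs : Su p ψ) (hr : PS p θ) (hl : PSL p θ) (hc : c ∈ Ipi) (hc0 : θ c = 0)
    {x y : ℝ} (hx : x ∈ Ioo (-(π / 2)) c) (hy : y ∈ Ioo c (π / 2)) (hm : Mat p θ θ c c x y) :
    x = 2 * c - y := by
  have cf := eqCfg hr hl hc hc0
  obtain ⟨X, hXc, hX0, hXe, hXm, hX⟩ := cf.exX hs hy hx hm
  have hcon := MeasureTheory.integral_eq_of_hasDerivAt_off_countable_of_le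
    (fun z => X z + z) (fun _ => (0:ℝ)) hy.1.le (s := ∅) countable_empty
    (hXc.add continuousOn_id) (by
      intro z hz
      have hz1 : z ∈ Ioo c y := hz.1
      obtain ⟨hXo, hMat, hXd⟩ := hX z hz1
      have hzy : z ∈ Ioo c (π / 2) := ⟨hz1.1, hz1.2.trans hy.2⟩
      have h := match_pt hs hr hl hc hc0 ⟨hx.1.trans hXo.1, hXo.2⟩ hzy hMat
      have hp := ric_pos hs (eqJ hr hl z ⟨hc.1.trans hzy.1, hzy.2⟩) (cf.Rpos hs hzy)
      have e : ric p θ z / ric p θ (X z) = -1 := by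
        rw [h.1] at hp
        rw [h.1, h.2.1]
        field_simp
      rw [e] at hXd
      have := hXd.add (hasDerivAt_id z)
      rw [neg_add_cancel] at this; exact this) (by simp)
  have this : X y + y - (X c + c) = 0 := by
    rw [← hcon]; simp
  rw [hXe, hX0] at this
  linarith

lemma match_all (hs : Su p ψ) (hr : PS p θ) (hl : PSL p θ) (hc : c ∈ Ipi) (hc0 : θ c = 0)
    {x y : ℝ} (hx : x ∈ Ioo (-(π / 2)) c) (hy : y ∈ Ioo c (π / 2)) (hm : Mat p θ θ c c x y) :
    x = 2 * c - y ∧ ric p θ y = tan (y - c) ∧ ric p θ x = tan (x - c) ∧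
      ψ y = tan (y - c) ∧ ψ x = tan (x - c) := by
  have e := match_sum hs hr hl hc hc0 hx hy hm
  have h := match_pt hs hr hl hc hc0 hx hy hm
  have e1 : (y - x) / 2 = y - c := by rw [e]; ring
  have e2 : -tan ((y - x) / 2) = tan (x - c) := by rw [← tan_neg]; congr 1; rw [e]; ring
  rw [e2, e1] at h
  exact ⟨e, h⟩

lemma eq_tan (hs : Su p ψ) (hr : PS p θ) (hl : PSL p θ) :
    ∀ x ∈ Ipi, ric p θ x = tan x ∧ (x ≠ 0 → ψ x = tan x) := by
  -- the zero
  obtain ⟨ya, hyaI, hya0, hya⟩ := hr.E hs 0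
  obtain ⟨xa, hxaI, hxa0, hxa⟩ := hl.E hs 0
  obtain ⟨yb, h1, h2⟩ := exists_between hyaI.2
  obtain ⟨xb, h3, h4⟩ := exists_between hxaI.1
  have hyb : yb ∈ Ipi := ⟨hyaI.1.trans h1, h2⟩
  have hxb : xb ∈ Ipi := ⟨h3, h4.trans hxaI.2⟩
  obtain ⟨c, hc, hc0⟩ := convex_Ipi.isPreconnected.intermediate_value hxb hyb hr.sol.cont
    (show (0:ℝ) ∈ Icc _ _ from ⟨(hxa xb hxb h4).1.le, (hya yb hyb h1).1.le⟩)
  have cf := eqCfg hr hl hc hc0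
  have hc00 : c = 0 := by
    rcases cf.dich hs with h | h
    · have hc1 : 0 ≤ c := by
        by_contra hcon
        push Not at hcon
        obtain ⟨y, hy1, hy2⟩ := exists_between (show max c (π / 2 + 2 * c) < π / 2 from
          max_lt hc.2 (by linarith))
        have q1 := (le_max_left _ _).trans_lt hy1
        have q2 := (le_max_right _ _).trans_lt hy1
        obtain ⟨x, hx, hm⟩ := h y ⟨q1, hy2⟩
        have := match_sum hs hr hl hc hc0 hx ⟨q1, hy2⟩ hm
        linarith [hx.1]
      by_contra hne
      have hcp : 0 < c := lt_of_le_of_ne hc1 (Ne.symm hne)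
      obtain ⟨yA, hyA, -, hA⟩ := hr.E hs (tan (π / 2 - c) + 1)
      obtain ⟨y, hy1, hy2⟩ := exists_between (show max c yA < π / 2 from max_lt hc.2 hyA.2)
      have q1 := (le_max_left _ _).trans_lt hy1
      have q2 := (le_max_right _ _).trans_lt hy1
      obtain ⟨x, hx, hm⟩ := h y ⟨q1, hy2⟩
      have e := (match_all hs hr hl hc hc0 hx ⟨q1, hy2⟩ hm).2.1
      have e2 := (hA y ⟨hc.1.trans q1, hy2⟩ q2).2
      have e3 : tan (y - c) ≤ tan (π / 2 - c) := by
        apply strictMonoOn_tan.monotoneOn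
        · constructor <;> linarith [pi_pos, hc.2]
        · constructor <;> linarith [pi_pos, hc.2]
        · linarith
      unfold ric at e
      linarith
    · have hc1 : c ≤ 0 := by
        by_contra hcon
        push Not at hcon
        obtain ⟨x, hx1, hx2⟩ := exists_between (show -(π / 2) < min c (-(π / 2) + 2 * c) from
          lt_min hc.1 (by linarith))
        have q1 := hx2.trans_le (min_le_left _ _)
        have q2 := hx2.trans_le (min_le_right _ _)
        obtain ⟨y, hy, hm⟩ := h x ⟨hx1, q1⟩
        have := match_sum hs hr hl hc hc0 ⟨hx1, q1⟩ hy hm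
        linarith [hy.2]
      by_contra hne
      have hcp : c < 0 := lt_of_le_of_ne hc1 hne
      obtain ⟨xA, hxA, -, hA⟩ := hl.E hs (tan (π / 2 + c) + 1)
      obtain ⟨x, hx1, hx2⟩ := exists_between (show -(π / 2) < min c xA from lt_min hc.1 hxA.1)
      have q1 := hx2.trans_le (min_le_left _ _)
      have q2 := hx2.trans_le (min_le_right _ _)
      obtain ⟨y, hy, hm⟩ := h x ⟨hx1, q1⟩
      have e := (match_all hs hr hl hc hc0 ⟨hx1, q1⟩ hy hm).2.2.1
      have e2 := (hA x ⟨hx1, q1.trans hc.2⟩ q2).2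
      have e3 : tan (-(π / 2 + c)) ≤ tan (x - c) := by
        apply strictMonoOn_tan.monotoneOn
        · constructor <;> linarith [pi_pos, hc.1]
        · constructor <;> linarith [pi_pos, hc.1]
        · linarith
      rw [tan_neg] at e3
      unfold ric at e
      linarith
  subst hc00
  have main : ∀ t ∈ Ioo 0 (π / 2), (ric p θ t = tan t ∧ ψ t = tan t) ∧
      (ric p θ (-t) = tan (-t) ∧ ψ (-t) = tan (-t)) := by
    intro t ht
    have hm : Mat p θ θ 0 0 (-t) t := by
      rcases cf.dich hs with h | h
      · obtain ⟨x, hx, hm⟩ := h t ht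
        have := match_sum hs hr hl hc hc0 hx ht hm
        have e : x = -t := by linarith
        rwa [← e]
      · obtain ⟨y, hy, hm⟩ := h (-t) ⟨by linarith [ht.2], by linarith [ht.1]⟩
        have := match_sum hs hr hl hc hc0 ⟨by linarith [ht.2], by linarith [ht.1]⟩ hy hm
        have e : y = t := by linarith
        rwa [e] at hm
    obtain ⟨-, a1, a2, a3, a4⟩ := match_all hs hr hl hc hc0
      ⟨by linarith [ht.2], by linarith [ht.1]⟩ ht hm
    simp only [sub_zero] at a1 a2 a3 a4
    exact ⟨⟨a1, a3⟩, a2, a4⟩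
  intro x hx
  rcases lt_trichotomy x 0 with h | h | h
  · have := (main (-x) ⟨by linarith, by linarith [hx.1]⟩).2
    rw [neg_neg] at this
    exact ⟨this.1, fun _ => this.2⟩
  · subst h
    exact ⟨by simp [ric, hc0], fun h => (h rfl).elim⟩
  · have := (main x ⟨h, hx.2⟩).1
    exact ⟨this.1, fun _ => this.2⟩

lemma eq_p (hs : Su p ψ) (hr : PS p θ) (hl : PSL p θ) :
    ∀ x ∈ Ipi, p x = p 0 * cos x ^ 2 := by
  have hric := fun x hx => (eq_tan hs hr hl x hx).1
  have hJ := eqJ hr hl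
  set f : ℝ → ℝ := fun x => cos x ^ 2 / p x with hf
  have hfc : ContinuousOn f Ipi :=
    ((continuous_cos.pow 2).continuousOn).div hs.cont (fun x hx => (hs.pos x hx).ne')
  have hfd : ∀ x ∈ Ipi, x ≠ 0 → HasDerivAt f 0 x := by
    intro x hx hne
    have hcos : ∀ z ∈ Ipi, cos z ≠ 0 := fun z hz => cos_ne_of hz.1 hz.2
    have hsin : ∀ z ∈ Ipi, z ≠ 0 → sin z ≠ 0 := by
      intro z hz h0 h
      have := (sin_eq_zero_iff_of_lt_of_lt (by linarith [hz.1, pi_pos]) (by linarith [hz.2, pi_pos])).1 h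
      exact h0 this
    have hu : ∀ z ∈ Ipi, z ≠ 0 → f z = tan (θ z) * cos z ^ 3 / sin z := by
      intro z hz h0
      have h1 := hric z hz
      unfold ric at h1
      rw [tan_eq_sin_div_cos z] at h1
      have h2 := hcos z hz
      have h3 := hsin z hz h0
      have h4 := (hs.pos z hz).ne'
      simp only [hf]
      have h5 : tan (θ z) = sin z / (cos z * p z) := by field_simp at h1 ⊢; linarith
      rw [h5]; field_simp
    have hd := ((hr.sol.dtan hs hx (Jset_cos (hJ x hx)).ne').mul ((hasDerivAt_cos x).pow 3)).div
      (hasDerivAt_sin x) (hsin x hx hne)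
    have hev : f =ᶠ[𝓝 x] fun z => tan (θ z) * cos z ^ 3 / sin z := by
      filter_upwards [Ipi_nhds hx, isOpen_ne.mem_nhds hne] with z h1 h2 using hu z h1 h2
    refine (HasDerivAt.congr_of_eventuallyEq ?_ hev)
    refine hd.congr_deriv ?_
    have h1 := hric x hx
    unfold ric at h1
    rw [tan_eq_sin_div_cos x] at h1
    have h2 := hcos x hx
    have h3 := hsin x hx hne
    have h4 := (hs.pos x hx).ne'
    have h5 : tan (θ x) = sin x / (cos x * p x) := by field_simp at h1 ⊢; linarith
    simp only [Pi.mul_apply, Pi.pow_apply]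
    rw [h5]
    field_simp
    have := sin_sq_add_cos_sq x
    ring_nf
    try linear_combination (0:ℝ) * this
  intro x hx
  have hss : uIcc 0 x ⊆ Ipi := (ordConnected_Ioo).uIcc_subset zero_mem_Ipi hx
  have hint := integral_eq_of_hasDerivAt_off_countable f (fun _ => 0) (a := 0) (b := x)
    (countable_singleton (0:ℝ)) (hfc.mono hss) ?_ (by simp)
  · simp only [intervalIntegral.integral_zero] at hint
    have h0 := hs.pos 0 zero_mem_Ipi
    have hx0 := hs.pos x hx
    simp only [hf, cos_zero] at hint
    have : cos x ^ 2 / p x = 1 / p 0 := by linarith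
    field_simp at this
    linarith
  · intro z hz
    refine hfd z (hss ?_) hz.2
    exact ⟨hz.1.1.le, hz.1.2.le⟩

end

end

noncomputable section
open MeasureTheory Real Set Filter
open scoped ENNReal Topology NNReal

lemma mkSu (p ψ : ℝ → ℝ)
    (hpos : ∀ x ∈ Ipi, 0 < p x)
    (hlc : ConcaveOn ℝ Ipi (fun x => Real.log (p x)))
    (hmono : MonotoneOn ψ Ipi)
    (hψ : ∀ x ∈ Ipi, ∀ y ∈ Ipi,
      Real.log (p y) - Real.log (p x) = -2 * ∫ t in x..y, ψ t)
    (hgap : ∀ x ∈ Ipi, ∀ y ∈ Ipi, x < y →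
      2 * tan ((y - x) / 2) ≤ ψ y - ψ x) : Su p ψ where
  pos := hpos
  cont := by
    have h : ContinuousOn (fun x => Real.log (p x)) Ipi := hlc.continuousOn isOpen_Ioo
    exact (continuous_exp.comp_continuousOn h).congr fun x hx => (exp_log (hpos x hx)).symm
  mono := hmono
  gap := hgap
  tang := by
    intro y hy z hz
    have hsub : uIcc y z ⊆ Ipi := ordConnected_Ioo.uIcc_subset hy hz
    have hii : IntervalIntegrable ψ volume y z := (hmono.mono hsub).intervalIntegrable
    have key : ψ y * (z - y) ≤ ∫ t in y..z, ψ t := by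
      rcases le_total y z with h | h
      · have := intervalIntegral.integral_mono_on h (intervalIntegrable_const (c := ψ y)) hii
          (fun t ht => hmono hy (hsub (by rwa [uIcc_of_le h])) ht.1)
        simp at this
        linarith
      · have := intervalIntegral.integral_mono_on h hii.symm (intervalIntegrable_const (c := ψ y))
          (fun t ht => hmono (hsub (by rwa [uIcc_of_ge h])) hy ht.2)
        rw [intervalIntegral.integral_symm]
        simp at this
        linarith
    have h1 := hψ y hy z hz
    rw [← exp_log (hpos z hz), ← exp_log (hpos y hy), ← exp_add, exp_le_exp]
    linarith

lemma rigid_final {p ψ : ℝ → ℝ} (hs : Su p ψ) (hint : IntegrableOn p Ipi)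
    (heig : mu1 (-(π / 2)) (π / 2) p = 3) :
    (∀ x ∈ Ipi, ψ x = tan x) ∧ ∃ k : ℝ, 0 < k ∧ ∀ x ∈ Ipi, p x = k * cos x ^ 2 := by
  obtain ⟨θr, hr⟩ := exists_PS hs
  obtain ⟨θl, hl⟩ := exists_PSL hs
  by_cases hne : ∃ x ∈ Ipi, θl x = θr x
  · obtain ⟨x, hx, he⟩ := hne
    have heq := hl.sol.unique hs hr.sol hx he
    have hl' : PSL p θr := ⟨hr.sol, fun x hx => by rw [← heq hx]; exact hl.gt x hx,
      fun φ hφ y hy h => hl.mini φ hφ y hy (by rw [heq hy]; exact h)⟩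
    have ht := eq_tan hs hr hl'
    refine ⟨?_, p 0, hs.pos 0 zero_mem_Ipi, eq_p hs hr hl'⟩
    have hc : Tendsto tan (𝓝 0) (𝓝 0) := by
      have : ContinuousAt tan 0 := continuousAt_tan.2 (by simp)
      simpa [ContinuousAt] using this
    have hI : Ipi ∈ 𝓝 (0:ℝ) := isOpen_Ioo.mem_nhds zero_mem_Ipi
    have h0 : ψ 0 = 0 := by
      apply le_antisymm
      · refine ge_of_tendsto (hc.mono_left (nhdsWithin_le_nhds (s := Ioi 0))) ?_
        filter_upwards [self_mem_nhdsWithin, mem_nhdsWithin_of_mem_nhds hI] with y hy hyI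
        rw [← (ht y hyI).2 (ne_of_gt hy)]
        exact hs.mono zero_mem_Ipi hyI (le_of_lt hy)
      · refine le_of_tendsto (hc.mono_left (nhdsWithin_le_nhds (s := Iio 0))) ?_
        filter_upwards [self_mem_nhdsWithin, mem_nhdsWithin_of_mem_nhds hI] with y hy hyI
        rw [← (ht y hyI).2 (ne_of_lt hy)]
        exact hs.mono hyI zero_mem_Ipi (le_of_lt hy)
    intro x hx
    by_cases hx0 : x = 0
    · rw [hx0, h0, tan_zero]
    · exact (ht x hx).2 hx0
  · push Not at hne
    have := strict_case hs hint hl hr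
      (fun x hx => lt_of_le_of_ne (PSL_le_PS hs hl hr x hx) (hne x hx))
    rw [heig] at this
    exact (lt_irrefl _ this).elim

end

/-- Corollary 2.5 / `c:sharpmu`: if `μ₁(I_π, p) = 3` for a positive
log-concave weight `p ∈ L¹(I_π)` such that `ψ_p = -(1/2)(log p)' ∈ 𝒜(I_π)` (i.e. `ψ_p`
satisfies the improved-monotonicity gap condition), then `ψ_p(x) = tan x` and
`p(x) = k cos² x` for some positive constant `k`. -/
theorem rigidity_weighted_neumann
    (p : ℝ → ℝ)
    (hpos : ∀ x ∈ Ioo (-(π / 2)) (π / 2), 0 < p x)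
    (hint : IntegrableOn p (Ioo (-(π / 2)) (π / 2)))
    (hlc : ConcaveOn ℝ (Ioo (-(π / 2)) (π / 2)) (fun x => Real.log (p x)))
    (ψ : ℝ → ℝ)
    (hmono : MonotoneOn ψ (Ioo (-(π / 2)) (π / 2)))
    (hψ : ∀ x ∈ Ioo (-(π / 2)) (π / 2), ∀ y ∈ Ioo (-(π / 2)) (π / 2),
      Real.log (p y) - Real.log (p x) = -2 * ∫ t in x..y, ψ t)
    (hgap : ∀ x ∈ Ioo (-(π / 2)) (π / 2), ∀ y ∈ Ioo (-(π / 2)) (π / 2), x < y →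
      2 * tan ((y - x) / 2) ≤ ψ y - ψ x)
    (heig : mu1 (-(π / 2)) (π / 2) p = 3) :
    (∀ x ∈ Ioo (-(π / 2)) (π / 2), ψ x = tan x) ∧
    ∃ k : ℝ, 0 < k ∧ ∀ x ∈ Ioo (-(π / 2)) (π / 2), p x = k * cos x ^ 2 := by
  exact rigid_final (mkSu p ψ hpos hlc hmono hψ hgap) hint heig
end
end

section
/- There exists an absolute constant C > 0 such that, for any q = ψ' + ψ² with ψ ∈ 𝒜(I_π) whose finiteness domain is I_d with d ≤ π, it holds λ₁(I_d, q) ≥ 3 + C(π − d)³. -/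
open MeasureTheory Real Set Filter
open scoped ENNReal

noncomputable section

def FF (c s : ℝ) : ℝ := (1 + c) * sin s - c * tan s
def FF1 (c s : ℝ) : ℝ := (1 + c) * cos s - c / cos s ^ 2
def FF2 (c s : ℝ) : ℝ := -(1 + c) * sin s - 2 * c * sin s / cos s ^ 3

lemma FF_deriv (c s : ℝ) (h : 0 < cos s) : HasDerivAt (FF c) (FF1 c s) s := by
  have h1 := (hasDerivAt_sin s).const_mul (1 + c)
  have h2 := (hasDerivAt_tan h.ne').const_mul c
  have := h1.sub h2
  refine this.congr_deriv ?_
  unfold FF1; ring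

lemma FF1_deriv (c s : ℝ) (h : 0 < cos s) : HasDerivAt (FF1 c) (FF2 c s) s := by
  have h1 := (hasDerivAt_cos s).const_mul (1 + c)
  have h2 := (((hasDerivAt_cos s).pow 2).inv (pow_ne_zero 2 h.ne')).const_mul c
  have := h1.sub h2
  refine (this.congr_deriv ?_)
  unfold FF2; simp; field_simp; ring

/-- the supersolution inequality -/
lemma FF_super (c lam s : ℝ) (hc : 0 < c) (hl : lam = 3 + 2 * c) (hs : 0 ≤ s) (hs2 : s < π / 2) :
    c * sin s ≤ 2 * tan s * FF1 c s - lam * FF c s - FF2 c s := by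
  have hcos : 0 < cos s := cos_pos_of_mem_Ioo ⟨by linarith [pi_pos], hs2⟩
  have hsin : 0 ≤ sin s := sin_nonneg_of_nonneg_of_le_pi hs (by linarith [pi_pos])
  have ht : tan s = sin s / cos s := tan_eq_sin_div_cos s
  have htge : sin s ≤ tan s := by
    rw [ht, le_div_iff₀ hcos]; nlinarith [cos_le_one s]
  have e : 2 * tan s * FF1 c s - lam * FF c s - FF2 c s
      = c * (3 + 2 * c) * tan s - 2 * c * (1 + c) * sin s := by
    unfold FF1 FF FF2; rw [hl, ht]; field_simp; ring
  rw [e]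
  nlinarith [mul_nonneg (mul_nonneg hc.le (by linarith : (0:ℝ) ≤ 3 + 2 * c)) (sub_nonneg.2 htge)]

lemma FF1_pos (a c s : ℝ) (ha : a < π / 2) (hc : c = cos a ^ 3) (hs : 0 ≤ s) (hsa : s ≤ a) :
    0 < FF1 c s := by
  have hcosa : 0 < cos a := cos_pos_of_mem_Ioo ⟨by linarith [pi_pos], ha⟩
  have hle : cos a ≤ cos s := cos_le_cos_of_nonneg_of_le_pi hs (by linarith [pi_pos]) hsa
  have hcos : 0 < cos s := by linarith
  have h3 : cos a ^ 3 ≤ cos s ^ 3 := pow_le_pow_left₀ hcosa.le hle 3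
  have hc0 : 0 < c := by rw [hc]; positivity
  have : FF1 c s = ((1 + c) * cos s ^ 3 - c) / cos s ^ 2 := by
    unfold FF1; field_simp
  rw [this]
  apply div_pos _ (by positivity)
  nlinarith

lemma FF1_le_one (c s : ℝ) (hc : 0 < c) (hs : 0 < cos s) : FF1 c s ≤ 1 := by
  unfold FF1
  have h1 : cos s ≤ 1 := cos_le_one s
  have h2 : 1 ≤ 1 / cos s ^ 2 := by
    rw [le_div_iff₀ (by positivity)]; nlinarith
  have h3 : c / cos s ^ 2 = c * (1 / cos s ^ 2) := by ring
  rw [h3]; nlinarith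

lemma FF_zero (c : ℝ) : FF c 0 = 0 := by simp [FF]
lemma FF1_zero (c : ℝ) : FF1 c 0 = 1 := by simp [FF1]

lemma FF_pos (a c s : ℝ) (ha : a < π / 2) (hc : c = cos a ^ 3) (hs : 0 < s) (hsa : s ≤ a) :
    0 < FF c s := by
  have hcos : ∀ x ∈ Icc 0 a, 0 < cos x := fun x hx =>
    cos_pos_of_mem_Ioo ⟨by linarith [pi_pos, hx.1], by linarith [hx.2]⟩
  have : StrictMonoOn (FF c) (Icc 0 a) := by
    apply strictMonoOn_of_deriv_pos (convex_Icc _ _)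
    · intro x hx
      exact (FF_deriv c x (hcos x hx)).continuousAt.continuousWithinAt
    · intro x hx
      rw [interior_Icc] at hx
      rw [(FF_deriv c x (hcos x ⟨hx.1.le, hx.2.le⟩)).deriv]
      exact FF1_pos a c x ha hc hx.1.le hx.2.le
  have h := this (left_mem_Icc.2 (by linarith)) ⟨hs.le, hsa⟩ hs
  rwa [FF_zero] at h

/-- second derivative criterion for a strict increase -/
lemma second_incr (k k1 : ℝ → ℝ) (k2 r : ℝ) (hr : 0 < r)
    (hk : ∀ t ∈ Ico 0 r, HasDerivAt k (k1 t) t) (h1 : k1 0 = 0) (h2 : HasDerivAt k1 k2 0)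
    (hk2 : 0 < k2) : ∃ t ∈ Ioo 0 r, k 0 < k t := by
  have : ∀ᶠ t in nhdsWithin 0 (Ioi 0), 0 < k1 t := by
    have h := h2.tendsto_slope
    have h' := (h.eventually (lt_mem_nhds hk2))
    have h'' : ∀ᶠ t in nhdsWithin (0:ℝ) (Ioi 0), 0 < slope k1 0 t :=
      h'.filter_mono (nhdsWithin_mono _ (fun x hx => ne_of_gt hx))
    filter_upwards [h'', self_mem_nhdsWithin] with t ht ht0
    rw [slope_def_field, h1] at ht
    have ht0' : 0 < t := ht0
    have := mul_pos ht ht0'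
    simp only [sub_zero] at this
    rwa [div_mul_cancel₀ _ ht0'.ne'] at this
  obtain ⟨e, he, hE⟩ := (mem_nhdsGT_iff_exists_Ioo_subset).1 this
  have he' : 0 < e := he
  set t := min e r / 2 with ht
  have hm : 0 < min e r := lt_min he' hr
  have t0 : 0 < t := by positivity
  have te : t < e := by have := min_le_left e r; linarith
  have tr : t < r := by have := min_le_right e r; linarith
  refine ⟨t, ⟨t0, tr⟩, ?_⟩
  have : StrictMonoOn k (Icc 0 t) := by
    apply strictMonoOn_of_deriv_pos (convex_Icc _ _)
    · intro x hx
      exact (hk x ⟨hx.1, by linarith [hx.2]⟩).continuousAt.continuousWithinAt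
    · intro x hx
      rw [interior_Icc] at hx
      rw [(hk x ⟨hx.1.le, by linarith [hx.2]⟩).deriv]
      exact hE ⟨hx.1, by linarith [hx.2]⟩
  exact this (left_mem_Icc.2 t0.le) (right_mem_Icc.2 t0.le) t0


set_option maxHeartbeats 1000000 in
lemma AC_diag (a c lam : ℝ) (ha : a < π / 2) (hc : c = cos a ^ 3)
    (hlam : lam = 3 + 2 * c) (ψ u f : ℝ → ℝ) (p q : ℝ) (hp : -a ≤ p) (hq : q ≤ a)
    (hψ : Continuous ψ)
    (gap : ∀ x y, p ≤ x → x < y → y ≤ q → 2 * tan ((y - x) / 2) ≤ ψ y - ψ x)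
    (hu : ∀ x ∈ Icc p q, HasDerivAt u (f x) x)
    (hf : ∀ x ∈ Icc p q, HasDerivAt f (2 * ψ x * f x - lam * u x) x)
    (x0 : ℝ) (hx0 : x0 ∈ Ioo p q) (hM : 0 < f x0) (hmax : ∀ x ∈ Icc p q, f x ≤ f x0) :
    ∃ x y, p ≤ x ∧ x < y ∧ y ≤ q ∧ 2 * f x0 * FF c ((y - x) / 2) < u y - u x := by
  set M := f x0 with hMdef
  have ha0 : 0 < a := by linarith [hx0.1, hx0.2]
  have hcosa : 0 < cos a := cos_pos_of_mem_Ioo ⟨by linarith [pi_pos], ha⟩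
  have hc0 : 0 < c := by rw [hc]; positivity
  obtain ⟨B, hB⟩ := (isCompact_Icc (a := p) (b := q)).exists_bound_of_continuousOn hψ.continuousOn
  have hf0 : HasDerivAt f 0 x0 := by
    have h1 := hf x0 ⟨hx0.1.le, hx0.2.le⟩
    have : IsLocalMax f x0 := by
      filter_upwards [Icc_mem_nhds hx0.1 hx0.2] with x hx using hmax x hx
    rwa [this.hasDerivAt_eq_zero h1] at h1
  have hB0 : 0 ≤ B := (norm_nonneg _).trans (hB x0 ⟨hx0.1.le, hx0.2.le⟩)
  set e := M * c / (8 * (B + 1)) with he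
  have hepos : 0 < e := by positivity
  have hloc : ∀ᶠ x in nhds x0, |f x - M| ≤ e * |x - x0| := by
    have := hf0.isLittleO.def hepos
    filter_upwards [this] with x hx
    simpa using hx
  obtain ⟨r0, hr0, hr⟩ := Metric.eventually_nhds_iff.1 hloc
  set r := min r0 (min (x0 - p) (q - x0)) with hrdef
  have hrpos : 0 < r := lt_min hr0 (lt_min (by linarith [hx0.1]) (by linarith [hx0.2]))
  have hr1 : r ≤ r0 := min_le_left _ _
  have hr2 : r ≤ x0 - p := (min_le_right _ _).trans (min_le_left _ _)
  have hr3 : r ≤ q - x0 := (min_le_right _ _).trans (min_le_right _ _)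
  have hra : r ≤ a := by linarith
  have mem1 : ∀ t ∈ Icc 0 r, x0 + t ∈ Icc p q := fun t ht =>
    ⟨by linarith [ht.1, hx0.1], by linarith [ht.2]⟩
  have mem2 : ∀ t ∈ Icc 0 r, x0 - t ∈ Icc p q := fun t ht =>
    ⟨by linarith [ht.2], by linarith [ht.1, hx0.2]⟩
  have hcos : ∀ t ∈ Icc 0 r, 0 < cos t := fun t ht =>
    cos_pos_of_mem_Ioo ⟨by linarith [pi_pos, ht.1], by linarith [ht.2]⟩
  set k : ℝ → ℝ := fun t => u (x0 + t) - u (x0 - t) - 2 * M * FF c t with hk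
  set k1 : ℝ → ℝ := fun t => f (x0 + t) + f (x0 - t) - 2 * M * FF1 c t with hk1
  set D : ℝ → ℝ := fun x => 2 * ψ x * f x - lam * u x with hD
  have dk : ∀ t ∈ Icc 0 r, HasDerivAt k (k1 t) t := by
    intro t ht
    have h1 := (hu _ (mem1 t ht)).comp_const_add x0 t
    have h2 := (hu _ (mem2 t ht)).comp_const_sub x0 t
    have h3 := (FF_deriv c t (hcos t ht)).const_mul (2 * M)
    refine ((h1.sub h2).sub h3).congr_deriv ?_
    simp only [hk1]; ring
  have dk1 : ∀ t ∈ Icc 0 r, HasDerivAt k1 (D (x0 + t) - D (x0 - t) - 2 * M * FF2 c t) t := by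
    intro t ht
    have h1 := (hf _ (mem1 t ht)).comp_const_add x0 t
    have h2 := (hf _ (mem2 t ht)).comp_const_sub x0 t
    have h3 := (FF1_deriv c t (hcos t ht)).const_mul (2 * M)
    refine ((h1.add h2).sub h3).congr_deriv ?_
    simp only [hD]; ring
  have uM : ∀ t ∈ Icc 0 r, u (x0 + t) - u (x0 - t) ≤ 2 * M * t := by
    intro t ht
    have := Convex.image_sub_le_mul_sub_of_deriv_le (convex_Icc p q)
      (f := u) (C := M) (fun x hx => (hu x hx).continuousAt.continuousWithinAt)
      (fun x hx => (hu x (interior_subset hx)).differentiableAt.differentiableWithinAt)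
      (fun x hx => by rw [(hu x (interior_subset hx)).deriv]; exact hmax x (interior_subset hx))
      _ (mem2 t ht) _ (mem1 t ht) (by linarith [ht.1])
    linarith
  by_contra hcon
  push Not at hcon
  have kle : ∀ t ∈ Ioc 0 r, u (x0 + t) - u (x0 - t) ≤ 2 * M * FF c t := by
    intro t ht
    have := hcon (x0 - t) (x0 + t) (mem2 t ⟨ht.1.le, ht.2⟩).1 (by linarith [ht.1])
      (mem1 t ⟨ht.1.le, ht.2⟩).2
    have e1 : (x0 + t - (x0 - t)) / 2 = t := by ring
    rwa [e1] at this
  have k2pos : ∀ t ∈ Ioo 0 r, 0 < D (x0 + t) - D (x0 - t) - 2 * M * FF2 c t := by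
    intro t ht
    have htI : t ∈ Icc 0 r := ⟨ht.1.le, ht.2.le⟩
    have g := gap (x0 - t) (x0 + t) (mem2 t htI).1 (by linarith [ht.1]) (mem1 t htI).2
    have e1 : (x0 + t - (x0 - t)) / 2 = t := by ring
    rw [e1] at g
    have a1 : |f (x0 + t) - M| ≤ e * t := by
      have := hr (y := x0 + t) (by rw [Real.dist_eq, add_sub_cancel_left, abs_of_pos ht.1]; linarith [ht.2])
      rwa [add_sub_cancel_left, abs_of_pos ht.1] at this
    have a2 : |f (x0 - t) - M| ≤ e * t := by
      have e2 : x0 - t - x0 = -t := by ring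
      have := hr (y := x0 - t) (by rw [Real.dist_eq, e2, abs_neg, abs_of_pos ht.1]; linarith [ht.2])
      rwa [e2, abs_neg, abs_of_pos ht.1] at this
    have b1 : |ψ (x0 + t)| ≤ B := hB _ (mem1 t htI)
    have b2 : |ψ (x0 - t)| ≤ B := hB _ (mem2 t htI)
    have c1 : -(B * (e * t)) ≤ ψ (x0 + t) * (f (x0 + t) - M) := by
      have : |ψ (x0 + t) * (f (x0 + t) - M)| ≤ B * (e * t) := by
        rw [abs_mul]; exact mul_le_mul b1 a1 (abs_nonneg _) hB0
      exact (abs_le.1 this).1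
    have c2 : ψ (x0 - t) * (f (x0 - t) - M) ≤ B * (e * t) := by
      have : |ψ (x0 - t) * (f (x0 - t) - M)| ≤ B * (e * t) := by
        rw [abs_mul]; exact mul_le_mul b2 a2 (abs_nonneg _) hB0
      exact (abs_le.1 this).2
    have hs := FF_super c lam t hc0 hlam ht.1.le (by linarith [ht.2])
    have hF1 := FF1_le_one c t hc0 (hcos t htI)
    have htan : 0 ≤ tan t := tan_nonneg_of_nonneg_of_le_pi_div_two ht.1.le (by linarith [ht.2])
    have hsin : t / 2 < sin t := by
      have := mul_le_sin ht.1.le (by linarith [ht.2])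
      have h4 : 1 / 2 < 2 / π := by
        rw [div_lt_div_iff₀ (by norm_num) pi_pos]; linarith [pi_lt_four]
      nlinarith [ht.1]
    have hk := kle t ⟨ht.1, ht.2.le⟩
    have hlam0 : 0 < lam := by rw [hlam]; positivity
    have d1 : lam * (u (x0 + t) - u (x0 - t)) ≤ lam * (2 * M * FF c t) :=
      mul_le_mul_of_nonneg_left hk hlam0.le
    have d2 : M * (2 * tan t) ≤ M * (ψ (x0 + t) - ψ (x0 - t)) :=
      mul_le_mul_of_nonneg_left g hM.le
    have d3 : M * (c * sin t) ≤ M * (2 * tan t * FF1 c t - lam * FF c t - FF2 c t) :=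
      mul_le_mul_of_nonneg_left hs hM.le
    have d4 : M * (tan t * FF1 c t) ≤ M * (tan t * 1) :=
      mul_le_mul_of_nonneg_left (mul_le_mul_of_nonneg_left hF1 htan) hM.le
    have d5 : M * c * (t / 2) ≤ M * c * sin t :=
      mul_le_mul_of_nonneg_left hsin.le (by positivity)
    have d6 : B * (e * t) < M * c * t / 8 := by
      have : B * e < M * c / 8 := by
        rw [he, mul_div_assoc', div_lt_div_iff₀ (by positivity) (by norm_num)]
        nlinarith [mul_pos hM hc0]
      nlinarith [ht.1]
    have d7 : 0 < M * c * t := by have := ht.1; positivity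
    simp only [hD]
    linarith
  have k10 : k1 0 = 0 := by simp [hk1, FF1_zero, ← hMdef]; ring
  have k0 : k 0 = 0 := by simp [hk, FF_zero]
  have s1 : StrictMonoOn k1 (Icc 0 r) := by
    apply strictMonoOn_of_deriv_pos (convex_Icc _ _)
    · intro x hx
      exact (dk1 x hx).continuousAt.continuousWithinAt
    · intro x hx
      rw [(dk1 x (interior_subset hx)).deriv]
      rw [interior_Icc] at hx
      exact k2pos x hx
  have s2 : StrictMonoOn k (Icc 0 r) := by
    apply strictMonoOn_of_deriv_pos (convex_Icc _ _)
    · intro x hx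
      exact (dk x hx).continuousAt.continuousWithinAt
    · intro x hx
      rw [(dk x (interior_subset hx)).deriv]
      rw [interior_Icc] at hx
      rw [← k10]
      exact s1 (left_mem_Icc.2 hrpos.le) ⟨hx.1.le, hx.2.le⟩ hx.1
  have := s2 (left_mem_Icc.2 hrpos.le) (right_mem_Icc.2 hrpos.le) hrpos
  rw [k0] at this
  have h := kle r ⟨hrpos, le_rfl⟩
  simp only [hk] at this
  linarith

set_option maxHeartbeats 1000000 in
lemma AC_off (a c lam : ℝ) (ha : a < π / 2) (hc : c = cos a ^ 3)
    (hlam : lam = 3 + 2 * c) (ψ u f : ℝ → ℝ) (p q : ℝ) (hp : -a ≤ p) (hq : q ≤ a)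
    (gap : ∀ x y, p ≤ x → x < y → y ≤ q → 2 * tan ((y - x) / 2) ≤ ψ y - ψ x)
    (hu : ∀ x ∈ Icc p q, HasDerivAt u (f x) x)
    (hf : ∀ x ∈ Icc p q, HasDerivAt f (2 * ψ x * f x - lam * u x) x)
    (fp : f p = 0) (fq : f q = 0) (m : ℝ) (hm : 0 < m) (x0 y0 : ℝ) (hpx : p ≤ x0) (hxy : x0 < y0)
    (hyq : y0 ≤ q) (heq : u y0 - u x0 = 2 * m * FF c ((y0 - x0) / 2))
    (hle : ∀ x y, p ≤ x → x < y → y ≤ q → u y - u x ≤ 2 * m * FF c ((y - x) / 2)) : False := by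
  have ha0 : 0 < a := by linarith
  have hcosa : 0 < cos a := cos_pos_of_mem_Ioo ⟨by linarith [pi_pos], ha⟩
  have hc0 : 0 < c := by rw [hc]; positivity
  set s := (y0 - x0) / 2 with hs
  have hs0 : 0 < s := by rw [hs]; linarith
  have hsa : s ≤ a := by rw [hs]; linarith
  have hcos : 0 < cos s := cos_pos_of_mem_Ioo ⟨by linarith [pi_pos], by linarith⟩
  have hF1 := FF1_pos a c s ha hc hs0.le hsa
  have hx0 : x0 ∈ Icc p q := ⟨hpx, by linarith⟩
  have hy0 : y0 ∈ Icc p q := ⟨by linarith, hyq⟩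
  have dx : HasDerivAt (fun x => u y0 - u x - 2 * m * FF c ((y0 - x) / 2))
      (- f x0 + m * FF1 c s) x0 := by
    have h1 : HasDerivAt (fun x : ℝ => (y0 - x) / 2) (-1 / 2) x0 := by
      simpa using ((hasDerivAt_id x0).const_sub y0).div_const 2
    have h2 := HasDerivAt.comp x0 (FF_deriv c ((y0 - x0) / 2) hcos) h1
    refine (((hu x0 hx0).const_sub (u y0)).sub (h2.const_mul (2 * m))).congr_deriv ?_
    ring
  have dy : HasDerivAt (fun y => u y - u x0 - 2 * m * FF c ((y - x0) / 2))
      (f y0 - m * FF1 c s) y0 := by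
    have h1 : HasDerivAt (fun y : ℝ => (y - x0) / 2) (1 / 2) y0 := by
      simpa using ((hasDerivAt_id y0).sub_const x0).div_const 2
    have h2 := HasDerivAt.comp y0 (FF_deriv c ((y0 - x0) / 2) hcos) h1
    refine (((hu y0 hy0).sub_const (u x0)).sub (h2.const_mul (2 * m))).congr_deriv ?_
    ring
  have hx1 : p < x0 := by
    rcases hpx.lt_or_eq with h | h
    · exact h
    exfalso
    rw [← h, fp] at dx
    have hpos : 0 < - 0 + m * FF1 c s := by have := mul_pos hm hF1; linarith
    have h' := (hasDerivAt_iff_tendsto_slope.1 dx).eventually (lt_mem_nhds hpos)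
    have h'' := h'.filter_mono (nhdsWithin_mono p (fun x (hx : x ∈ Ioi p) => ne_of_gt hx))
    obtain ⟨x, hx, hxp, hxy'⟩ := (h''.and (Ioo_mem_nhdsGT (show p < y0 by linarith))).exists
    rw [slope_def_field] at hx
    have h3 := mul_pos hx (sub_pos.2 hxp)
    rw [div_mul_cancel₀ _ (sub_pos.2 hxp).ne'] at h3
    have h4 := hle x y0 hxp.le hxy' hyq
    rw [← h] at hs heq
    rw [← hs, heq] at h3
    linarith
  have hy1 : y0 < q := by
    rcases hyq.lt_or_eq with h | h
    · exact h
    exfalso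
    rw [h, fq] at dy
    have hneg : 0 - m * FF1 c s < 0 := by have := mul_pos hm hF1; linarith
    have h' := (hasDerivAt_iff_tendsto_slope.1 dy).eventually (gt_mem_nhds hneg)
    have h'' := h'.filter_mono (nhdsWithin_mono q (fun x (hx : x ∈ Iio q) => ne_of_lt hx))
    obtain ⟨x, hx, hxp, hxy'⟩ := (h''.and (Ioo_mem_nhdsLT (show x0 < q by linarith))).exists
    rw [slope_def_field] at hx
    have h3 := mul_pos_of_neg_of_neg hx (sub_neg.2 hxy')
    rw [div_mul_cancel₀ _ (sub_neg.2 hxy').ne] at h3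
    have h4 := hle x0 x hpx hxp hxy'.le
    rw [h] at hs heq
    rw [← hs, heq] at h3
    linarith
  have fx : f x0 = m * FF1 c s := by
    have : IsLocalMax (fun x => u y0 - u x - 2 * m * FF c ((y0 - x) / 2)) x0 := by
      filter_upwards [Ioo_mem_nhds hx1 hxy] with x hx
      have := hle x y0 hx.1.le hx.2 hyq
      simp only [← hs]; linarith
    have := this.hasDerivAt_eq_zero dx
    linarith
  have fy : f y0 = m * FF1 c s := by
    have : IsLocalMax (fun y => u y - u x0 - 2 * m * FF c ((y - x0) / 2)) y0 := by
      filter_upwards [Ioo_mem_nhds hxy hy1] with y hy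
      have := hle x0 y hpx hy.1 hy.2.le
      simp only [← hs]; linarith
    have := this.hasDerivAt_eq_zero dy
    linarith
  set r := min (x0 - p) (q - y0) with hrdef
  have hrpos : 0 < r := lt_min (by linarith) (by linarith)
  have hr2 : r ≤ x0 - p := min_le_left _ _
  have hr3 : r ≤ q - y0 := min_le_right _ _
  set D : ℝ → ℝ := fun x => 2 * ψ x * f x - lam * u x with hD
  have mem1 : ∀ t ∈ Ico 0 r, y0 + t ∈ Icc p q := fun t ht =>
    ⟨by linarith [ht.1], by linarith [ht.2]⟩
  have mem2 : ∀ t ∈ Ico 0 r, x0 - t ∈ Icc p q := fun t ht =>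
    ⟨by linarith [ht.2], by linarith [ht.1]⟩
  have hcost : ∀ t ∈ Ico 0 r, 0 < cos (s + t) := fun t ht =>
    cos_pos_of_mem_Ioo ⟨by linarith [pi_pos, ht.1], by rw [hs]; linarith [ht.2]⟩
  obtain ⟨t, ht, hlt⟩ := second_incr (fun t => u (y0 + t) - u (x0 - t) - 2 * m * FF c (s + t))
    (fun t => f (y0 + t) + f (x0 - t) - 2 * m * FF1 c (s + t))
    (D y0 - D x0 - 2 * m * FF2 c s) r hrpos
    (by
      intro t ht
      have h1 := (hu _ (mem1 t ht)).comp_const_add y0 t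
      have h2 := (hu _ (mem2 t ht)).comp_const_sub x0 t
      have h3 := ((FF_deriv c _ (hcost t ht)).comp_const_add s t).const_mul (2 * m)
      refine ((h1.sub h2).sub h3).congr_deriv ?_
      ring)
    (by simp [fx, fy]; ring)
    (by
      have h0 : (0:ℝ) ∈ Ico 0 r := ⟨le_rfl, hrpos⟩
      have h1 := (hf _ (mem1 0 h0)).comp_const_add y0 0
      have h2 := (hf _ (mem2 0 h0)).comp_const_sub x0 0
      have h3 := ((FF1_deriv c _ (hcost 0 h0)).comp_const_add s 0).const_mul (2 * m)
      refine ((h1.add h2).sub h3).congr_deriv ?_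
      simp only [hD, add_zero, sub_zero]; ring)
    (by
      have g := gap x0 y0 hpx hxy hyq
      rw [← hs] at g
      have hsup := FF_super c lam s hc0 hlam hs0.le (by linarith)
      have hsin : 0 < sin s := sin_pos_of_pos_of_lt_pi hs0 (by linarith [pi_pos])
      have d2 : m * FF1 c s * (2 * tan s) ≤ m * FF1 c s * (ψ y0 - ψ x0) :=
        mul_le_mul_of_nonneg_left g (by positivity)
      have d3 : m * (c * sin s) ≤ m * (2 * tan s * FF1 c s - lam * FF c s - FF2 c s) :=
        mul_le_mul_of_nonneg_left hsup hm.le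
      have d4 : 0 < m * (c * sin s) := by positivity
      have d5 : lam * (u y0 - u x0) = lam * (2 * m * FF c s) := by rw [heq]
      simp only [hD, fx, fy]
      nlinarith)
  have h := hle (x0 - t) (y0 + t) (mem2 t ⟨ht.1.le, ht.2⟩).1 (by linarith [ht.1])
    (mem1 t ⟨ht.1.le, ht.2⟩).2
  have e1 : (y0 + t - (x0 - t)) / 2 = s + t := by rw [hs]; ring
  rw [e1] at h
  simp only [add_zero, sub_zero] at hlt
  linarith


lemma AC_main (a c lam : ℝ) (ha : a < π / 2) (hc : c = cos a ^ 3)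
    (hlam : lam = 3 + 2 * c) (ψ u f : ℝ → ℝ) (p q : ℝ) (hp : -a ≤ p) (hq : q ≤ a)
    (hψ : Continuous ψ)
    (gap : ∀ x y, p ≤ x → x < y → y ≤ q → 2 * tan ((y - x) / 2) ≤ ψ y - ψ x)
    (hu : ∀ x ∈ Icc p q, HasDerivAt u (f x) x)
    (hf : ∀ x ∈ Icc p q, HasDerivAt f (2 * ψ x * f x - lam * u x) x)
    (fp : f p = 0) (fq : f q = 0) (hpos : ∃ x ∈ Icc p q, 0 < f x) : False := by
  obtain ⟨xp, hxp, hfxp⟩ := hpos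
  obtain ⟨x0, hx0, hmax⟩ := (isCompact_Icc (a := p) (b := q)).exists_isMaxOn ⟨xp, hxp⟩
    (fun x hx => (hf x hx).continuousAt.continuousWithinAt : ContinuousOn f (Icc p q))
  have hmax' : ∀ x ∈ Icc p q, f x ≤ f x0 := fun x hx => hmax hx
  have hM : 0 < f x0 := hfxp.trans_le (hmax' xp hxp)
  have hx0' : x0 ∈ Ioo p q := by
    refine ⟨lt_of_le_of_ne hx0.1 ?_, lt_of_le_of_ne hx0.2 ?_⟩
    · intro h; rw [← h, fp] at hM; exact lt_irrefl _ hM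
    · intro h; rw [h, fq] at hM; exact lt_irrefl _ hM
  obtain ⟨x1, y1, hpx1, hxy1, hyq1, hlt1⟩ := AC_diag a c lam ha hc hlam ψ u f p q hp hq hψ gap hu hf
    x0 hx0' hM hmax'
  set M := f x0
  set s1 := (y1 - x1) / 2 with hs1
  have hs10 : 0 < s1 := by rw [hs1]; linarith
  have hF1 : 0 < FF c s1 := FF_pos a c s1 ha hc hs10 (by rw [hs1]; linarith)
  set m0 := (u y1 - u x1) / (2 * FF c s1) with hm0
  have hMm : M < m0 := by
    rw [hm0, lt_div_iff₀ (by positivity)]; linarith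
  have hm0pos : 0 < m0 := hM.trans hMm
  have hder := FF_deriv c 0 (by simp)
  rw [FF1_zero] at hder
  have hlim := (hasDerivAt_iff_tendsto_slope.1 hder).eventually
    (lt_mem_nhds (show M / m0 < 1 by rw [div_lt_one hm0pos]; exact hMm))
  have hlim' := hlim.filter_mono (nhdsWithin_mono 0 (fun x (hx : x ∈ Ioi 0) => ne_of_gt hx))
  obtain ⟨δ, hδ, hδ'⟩ := (mem_nhdsGT_iff_exists_Ioo_subset).1 hlim'
  have hδ0 : 0 < δ := hδ
  have hsmall : ∀ s, 0 < s → s < δ → M * s < m0 * FF c s := by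
    intro s h1 h2
    have : M / m0 < slope (FF c) 0 s := hδ' ⟨h1, h2⟩
    rw [slope_def_field, FF_zero, sub_zero, sub_zero, div_lt_div_iff₀ hm0pos h1] at this
    linarith
  have uM : ∀ x y, p ≤ x → x < y → y ≤ q → u y - u x ≤ M * (y - x) := by
    intro x y h1 h2 h3
    exact Convex.image_sub_le_mul_sub_of_deriv_le (convex_Icc p q)
      (f := u) (C := M) (fun x hx => (hu x hx).continuousAt.continuousWithinAt)
      (fun x hx => (hu x (interior_subset hx)).differentiableAt.differentiableWithinAt)
      (fun x hx => by rw [(hu x (interior_subset hx)).deriv]; exact hmax' x (interior_subset hx))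
      _ ⟨h1, by linarith⟩ _ ⟨by linarith, h3⟩ h2.le
  set ε := min δ s1 with hε
  have hε0 : 0 < ε := lt_min hδ0 hs10
  set K : Set (ℝ × ℝ) := (Icc p q ×ˢ Icc p q) ∩ {z | ε ≤ (z.2 - z.1) / 2} with hK
  have Kc : IsCompact K := by
    apply (isCompact_Icc.prod isCompact_Icc).inter_right
    exact isClosed_le (by fun_prop) (by fun_prop)
  have hFpos : ∀ z ∈ K, 0 < FF c ((z.2 - z.1) / 2) := by
    rintro ⟨x, y⟩ ⟨⟨h1, h2⟩, h3⟩
    simp only [mem_ofPred_eq] at h1 h2 h3 ⊢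
    exact FF_pos a c _ ha hc (by linarith) (by linarith [h1.1, h2.2])
  have hcont : ContinuousOn (fun z : ℝ × ℝ => (u z.2 - u z.1) / (2 * FF c ((z.2 - z.1) / 2))) K := by
    have hucont : ContinuousOn u (Icc p q) := fun x hx => (hu x hx).continuousAt.continuousWithinAt
    apply ContinuousOn.div
    · apply ContinuousOn.sub
      · exact hucont.comp continuous_snd.continuousOn (fun z hz => hz.1.2)
      · exact hucont.comp continuous_fst.continuousOn (fun z hz => hz.1.1)
    · apply ContinuousOn.mul continuousOn_const
      intro z hz
      have hcos : 0 < cos ((z.2 - z.1) / 2) := by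
        obtain ⟨⟨h1, h2⟩, h3⟩ := hz
        simp only [mem_ofPred_eq] at h1 h2 h3
        exact cos_pos_of_mem_Ioo ⟨by linarith [pi_pos], by linarith [h1.1, h2.2]⟩
      apply ContinuousAt.continuousWithinAt
      exact ContinuousAt.comp (f := fun z : ℝ × ℝ => (z.2 - z.1) / 2) (g := FF c)
        (FF_deriv c _ hcos).continuousAt (by fun_prop)
    · intro z hz
      have := hFpos z hz
      positivity
  have h1K : (x1, y1) ∈ K :=
    ⟨⟨⟨hpx1, by linarith⟩, ⟨by linarith, hyq1⟩⟩, by simp only [mem_ofPred_eq]; exact min_le_right _ _⟩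
  obtain ⟨⟨xm, ym⟩, hzK, hzmax⟩ := Kc.exists_isMaxOn ⟨_, h1K⟩ hcont
  set m := (u ym - u xm) / (2 * FF c ((ym - xm) / 2)) with hm
  have hm0m : m0 ≤ m := hzmax h1K
  have hFz := hFpos _ hzK
  simp only at hFz
  obtain ⟨⟨h1, h2⟩, h3⟩ := hzK
  simp only [mem_ofPred_eq] at h1 h2 h3
  refine AC_off a c lam ha hc hlam ψ u f p q hp hq gap hu hf fp fq m (by linarith) xm ym
    h1.1 (by linarith) h2.2 ?_ ?_
  · rw [hm]; field_simp
  · intro x y hpx hxy hyq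
    by_cases hs : ε ≤ (y - x) / 2
    · have hzK' : (x, y) ∈ K := ⟨⟨⟨hpx, by linarith⟩, ⟨by linarith, hyq⟩⟩, by simp only [mem_ofPred_eq]; exact hs⟩
      have hF := hFpos _ hzK'
      simp only at hF
      have : (u y - u x) / (2 * FF c ((y - x) / 2)) ≤ m := hzmax hzK'
      rw [div_le_iff₀ (by positivity)] at this
      linarith
    · push Not at hs
      have hF : 0 < FF c ((y - x) / 2) := FF_pos a c _ ha hc (by linarith) (by linarith)
      have := hsmall ((y - x) / 2) (by linarith) (hs.trans_le (min_le_left _ _))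
      have h4 := uM x y hpx hxy hyq
      nlinarith

lemma ode_exists (ψ : ℝ → ℝ) (hψ : Continuous ψ) (lam a : ℝ) (ha : 0 < a) :
    ∃ u f : ℝ → ℝ, (∀ x ∈ Icc (-a) a, HasDerivAt u (f x) x) ∧
      (∀ x ∈ Icc (-a) a, HasDerivAt f (2 * ψ x * f x - lam * u x) x) ∧
      f (-a) = 0 ∧ u (-a) = -1 := by
  obtain ⟨B, hB⟩ := (isCompact_Icc (a := -a - 1) (b := a + 1)).exists_bound_of_continuousOn
    hψ.continuousOn
  have hB0 : 0 ≤ B := (norm_nonneg _).trans (hB 0 ⟨by linarith, by linarith⟩)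
  set G : ℝ → ℝ → ℝ := fun t θ =>
    cos θ ^ 2 - 2 * ψ t * sin θ * cos θ + lam * sin θ ^ 2 with hG
  set L : ℝ := 1 + 2 * B + |lam| with hL
  set K : ℝ := 2 + 4 * B + 2 * |lam| with hK
  have hL0 : 0 ≤ L := by positivity
  have hK0 : 0 ≤ K := by positivity
  have dG : ∀ t θ, HasDerivAt (G t) (-2 * sin θ * cos θ - 2 * ψ t * (cos θ ^ 2 - sin θ ^ 2)
      + 2 * lam * sin θ * cos θ) θ := by
    intro t θ
    have h1 := (hasDerivAt_cos θ).pow 2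
    have h2 := ((hasDerivAt_sin θ).const_mul (2 * ψ t)).mul (hasDerivAt_cos θ)
    have h3 := ((hasDerivAt_sin θ).pow 2).const_mul lam
    refine ((h1.sub h2).add h3).congr_deriv ?_
    push_cast; ring
  have hsc : ∀ θ, |sin θ * cos θ| ≤ 1 := fun θ => by
    rw [abs_mul]; exact mul_le_one₀ (abs_sin_le_one θ) (abs_nonneg _) (abs_cos_le_one θ)
  have t0mem : (-a) ∈ Icc (-a - 1) (a + 1) := ⟨by linarith, by linarith⟩
  have hPL : IsPicardLindelof G (⟨-a, t0mem⟩ : Icc (-a - 1) (a + 1)) (-(π / 2))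
      (NNReal.mk (L * (2 * a + 1)) (by positivity)) 0 (NNReal.mk L hL0) (NNReal.mk K hK0) := by
    refine ⟨?_, ?_, ?_, ?_⟩
    · intro t ht
      apply LipschitzWith.lipschitzOnWith
      apply lipschitzWith_of_nnnorm_deriv_le (fun θ => (dG t θ).differentiableAt)
      intro θ
      rw [(dG t θ).deriv]
      rw [← NNReal.coe_le_coe, coe_nnnorm, Real.norm_eq_abs, NNReal.coe_mk]
      have e1 : |cos θ ^ 2 - sin θ ^ 2| ≤ 1 := by
        rw [← cos_two_mul' ]; exact abs_cos_le_one _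
      have b := hB t ht
      rw [Real.norm_eq_abs] at b
      have e2 : |ψ t * (cos θ ^ 2 - sin θ ^ 2)| ≤ B * 1 := by
        rw [abs_mul]; exact mul_le_mul b e1 (abs_nonneg _) hB0
      have e3 : |lam * (sin θ * cos θ)| ≤ |lam| * 1 := by
        rw [abs_mul]; exact mul_le_mul le_rfl (hsc θ) (abs_nonneg _) (abs_nonneg _)
      have e4 := hsc θ
      rw [abs_le] at *
      constructor <;> nlinarith
    · intro x _
      simp only [hG]
      fun_prop
    · intro t ht θ _
      rw [Real.norm_eq_abs, NNReal.coe_mk]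
      have b := hB t ht
      rw [Real.norm_eq_abs] at b
      have e2 : |ψ t * (sin θ * cos θ)| ≤ B * 1 := by
        rw [abs_mul]; exact mul_le_mul b (hsc θ) (abs_nonneg _) hB0
      have e3 : |lam * sin θ ^ 2| ≤ |lam| * 1 := by
        rw [abs_mul]
        exact mul_le_mul le_rfl (by rw [abs_of_nonneg (sq_nonneg _)]; exact sin_sq_le_one θ)
          (abs_nonneg _) (abs_nonneg _)
      have e4 := cos_sq_le_one θ
      have e5 := sq_nonneg (cos θ)
      have e6 := abs_nonneg lam
      rw [abs_le] at e2 e3 ⊢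
      simp only [hG]
      constructor <;> nlinarith
    · simp only [NNReal.coe_mk, NNReal.coe_zero, sub_zero]
      apply mul_le_mul_of_nonneg_left _ hL0
      apply max_le <;> linarith
  obtain ⟨θ, hθ0, hθ⟩ := hPL.exists_eq_forall_mem_Icc_hasDerivWithinAt₀
  simp only at hθ0
  have dθ : ∀ t ∈ Ioo (-a - 1) (a + 1), HasDerivAt θ (G t (θ t)) t := fun t ht =>
    (hθ t ⟨ht.1.le, ht.2.le⟩).hasDerivAt (Icc_mem_nhds ht.1 ht.2)
  have hθc : ContinuousOn θ (Ioo (-a - 1) (a + 1)) := fun t ht =>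
    (dθ t ht).continuousAt.continuousWithinAt
  set g : ℝ → ℝ := fun t => sin (θ t) * cos (θ t) + 2 * ψ t * cos (θ t) ^ 2
    - lam * sin (θ t) * cos (θ t) with hg
  have hgc : ContinuousOn g (Ioo (-a - 1) (a + 1)) := by
    simp only [hg]
    have := hψ.continuousOn (s := Ioo (-a - 1) (a + 1))
    fun_prop
  set R : ℝ → ℝ := fun t => ∫ x in (-a)..t, g x with hR
  have sub : Icc (-a) a ⊆ Ioo (-a - 1) (a + 1) := fun x hx => ⟨by linarith [hx.1], by linarith [hx.2]⟩
  have dR : ∀ t ∈ Icc (-a) a, HasDerivAt R (g t) t := by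
    intro t ht
    have hO : Ioo (-a - 1) (a + 1) ∈ nhds t := Ioo_mem_nhds (sub ht).1 (sub ht).2
    apply intervalIntegral.integral_hasDerivAt_right
    · apply ContinuousOn.intervalIntegrable
      rw [uIcc_of_le ht.1]
      exact hgc.mono (fun x hx => sub ⟨hx.1, hx.2.trans ht.2⟩)
    · exact hgc.stronglyMeasurableAtFilter isOpen_Ioo t (sub ht)
    · exact hgc.continuousAt hO
  refine ⟨fun t => exp (R t) * sin (θ t), fun t => exp (R t) * cos (θ t), ?_, ?_, ?_, ?_⟩
  · intro t ht
    have h1 := (dR t ht).exp.mul (dθ t (sub ht)).sin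
    refine h1.congr_deriv ?_
    simp only [hg, hG]
    have := sin_sq_add_cos_sq (θ t)
    linear_combination (exp (R t) * cos (θ t)) * this
  · intro t ht
    have h1 := (dR t ht).exp.mul (dθ t (sub ht)).cos
    refine h1.congr_deriv ?_
    simp only [hg, hG]
    have := sin_sq_add_cos_sq (θ t)
    linear_combination (exp (R t) * (2 * ψ t * cos (θ t) - lam * sin (θ t))) * this
  · simp [hθ0]
  · simp [hθ0, hR]

/-- positivity of `f` : the shooting argument -/
lemma shoot (a c lam : ℝ) (ha0 : 0 < a) (ha : a < π / 2) (hc : c = cos a ^ 3)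
    (hlam : lam = 3 + 2 * c) (ψ u f : ℝ → ℝ) (hψ : Continuous ψ)
    (gap : ∀ x y, -a ≤ x → x < y → y ≤ a → 2 * tan ((y - x) / 2) ≤ ψ y - ψ x)
    (hu : ∀ x ∈ Icc (-a) a, HasDerivAt u (f x) x)
    (hf : ∀ x ∈ Icc (-a) a, HasDerivAt f (2 * ψ x * f x - lam * u x) x)
    (f0 : f (-a) = 0) (u0 : u (-a) = -1) : ∀ x ∈ Ioc (-a) a, 0 < f x := by
  have hcosa : 0 < cos a := cos_pos_of_mem_Ioo ⟨by linarith [pi_pos], ha⟩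
  have hlam0 : 0 < lam := by rw [hlam, hc]; positivity
  have h1 := hf (-a) ⟨le_rfl, by linarith⟩
  rw [f0, u0] at h1
  have hpos : 0 < 2 * ψ (-a) * 0 - lam * -1 := by linarith
  have h' := (hasDerivAt_iff_tendsto_slope.1 h1).eventually (lt_mem_nhds hpos)
  have h'' := h'.filter_mono (nhdsWithin_mono (-a) (fun x (hx : x ∈ Ioi (-a)) => ne_of_gt hx))
  intro x hx
  by_contra hneg
  push Not at hneg
  obtain ⟨y, hy, hy1, hy2⟩ := (h''.and (Ioo_mem_nhdsGT hx.1)).exists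
  rw [slope_def_field, f0, sub_zero] at hy
  have fy : 0 < f y := by
    have := mul_pos hy (sub_pos.2 hy1)
    rwa [div_mul_cancel₀ _ (sub_pos.2 hy1).ne'] at this
  have hcont : ContinuousOn f (Icc y x) := fun z hz =>
    (hf z ⟨by linarith [hz.1], hz.2.trans hx.2⟩).continuousAt.continuousWithinAt
  obtain ⟨q, hq, hfq⟩ := intermediate_value_Icc' hy2.le hcont ⟨hneg, fy.le⟩
  have hqa : q ≤ a := hq.2.trans hx.2
  exact AC_main a c lam ha hc hlam ψ u f (-a) q le_rfl hqa hψ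
    (fun x y h1 h2 h3 => gap x y h1 h2 (h3.trans hqa))
    (fun z hz => hu z ⟨hz.1, hz.2.trans hqa⟩) (fun z hz => hf z ⟨hz.1, hz.2.trans hqa⟩) f0 hfq
    ⟨y, ⟨hy1.le, hq.1⟩, fy⟩

/-- Picone: the inequality for continuous `ψ`. -/
lemma core_cont (a b lam : ℝ) (hb : 0 < b) (hba : b < a) (ha : a < π / 2)
    (hlam : lam = 3 + 2 * cos a ^ 3) (ψ : ℝ → ℝ) (hψ : Continuous ψ)
    (gap : ∀ x y, -a ≤ x → x < y → y ≤ a → 2 * tan ((y - x) / 2) ≤ ψ y - ψ x)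
    (v : ℝ → ℝ) (hv : ContDiff ℝ 1 v) (hv1 : v (-b) = 0) (hv2 : v b = 0) :
    lam * ∫ x in (-b)..b, v x ^ 2 ≤ ∫ x in (-b)..b, (deriv v x - ψ x * v x) ^ 2 := by
  obtain ⟨u, f, hu, hf, f0, u0⟩ := ode_exists ψ hψ lam a (by linarith)
  have fpos := shoot a _ lam (by linarith) ha rfl hlam ψ u f hψ gap hu hf f0 u0
  have sub1 : ∀ x ∈ Icc (-b) b, x ∈ Icc (-a) a := fun x hx => ⟨by linarith [hx.1], by linarith [hx.2]⟩
  have fpos' : ∀ x ∈ Icc (-b) b, 0 < f x := fun x hx => fpos x ⟨by linarith [hx.1], by linarith [hx.2]⟩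
  have dv : ∀ x, HasDerivAt v (deriv v x) x := fun x =>
    (hv.differentiable (by norm_num) x).hasDerivAt
  have dvc : Continuous (deriv v) := hv.continuous_deriv (by norm_num)
  have hvc : Continuous v := hv.continuous
  set τ : ℝ → ℝ := fun x => lam * u x / f x with hτ
  have dτ : ∀ x ∈ Icc (-b) b, HasDerivAt τ (lam - 2 * ψ x * τ x + τ x ^ 2) x := by
    intro x hx
    have hfx := fpos' x hx
    have := ((hu x (sub1 x hx)).const_mul lam).div (hf x (sub1 x hx)) hfx.ne'
    refine this.congr_deriv ?_
    simp only [hτ]; field_simp; ring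
  have τc : ContinuousOn τ (Icc (-b) b) := fun x hx => (dτ x hx).continuousAt.continuousWithinAt
  set W : ℝ → ℝ := fun x => (lam - 2 * ψ x * τ x + τ x ^ 2) * v x ^ 2 + τ x * (2 * v x * deriv v x)
    with hW
  have hIcc : uIcc (-b) b = Icc (-b) b := uIcc_of_le (by linarith)
  have Wc : ContinuousOn W (Icc (-b) b) := by
    simp only [hW]
    have h1 := hψ.continuousOn (s := Icc (-b) b)
    have h2 := hvc.continuousOn (s := Icc (-b) b)
    have h3 := dvc.continuousOn (s := Icc (-b) b)
    fun_prop
  have hint : ∫ x in (-b)..b, W x = 0 := by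
    have := intervalIntegral.integral_eq_sub_of_hasDerivAt (a := -b) (b := b)
      (f := fun x => τ x * v x ^ 2) (f' := W) (by
        intro x hx
        rw [hIcc] at hx
        refine ((dτ x hx).mul ((dv x).pow 2)).congr_deriv ?_
        simp only [hW, Pi.pow_apply]; push_cast; ring) (by
        apply ContinuousOn.intervalIntegrable; rwa [hIcc])
    rw [this, hv1, hv2]; simp
  have i1 : IntervalIntegrable (fun x => (deriv v x - ψ x * v x) ^ 2) volume (-b) b := by
    apply Continuous.intervalIntegrable; fun_prop
  have i2 : IntervalIntegrable (fun x => lam * v x ^ 2) volume (-b) b := by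
    apply Continuous.intervalIntegrable; fun_prop
  have i3 : IntervalIntegrable W volume (-b) b := by
    apply ContinuousOn.intervalIntegrable; rwa [hIcc]
  have key : 0 ≤ ∫ x in (-b)..b, ((deriv v x - ψ x * v x) ^ 2 - lam * v x ^ 2 + W x) := by
    apply intervalIntegral.integral_nonneg (by linarith)
    intro x hx
    have : (deriv v x - ψ x * v x) ^ 2 - lam * v x ^ 2 + W x
      = (deriv v x - ψ x * v x + τ x * v x) ^ 2 := by
      simp only [hW]; ring
    rw [this]; positivity
  rw [intervalIntegral.integral_add (i1.sub i2) i3, intervalIntegral.integral_sub i1 i2, hint,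
    intervalIntegral.integral_const_mul] at key
  linarith


lemma core_mono (a b e lam : ℝ) (hb : 0 < b) (hba : b < a) (hae : a < e) (he : e < π / 2)
    (hlam : lam = 3 + 2 * cos a ^ 3) (ψ : ℝ → ℝ) (hψ : Monotone ψ)
    (gap : ∀ x y, -e ≤ x → x < y → y ≤ e → 2 * tan ((y - x) / 2) ≤ ψ y - ψ x)
    (v : ℝ → ℝ) (hv : ContDiff ℝ 1 v) (hv1 : v (-b) = 0) (hv2 : v b = 0) :
    lam * ∫ x in (-b)..b, v x ^ 2 ≤ ∫ x in (-b)..b, (deriv v x - ψ x * v x) ^ 2 := by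
  have hII : ∀ x y, IntervalIntegrable ψ volume x y := fun x y => hψ.intervalIntegrable
  set ε : ℕ → ℝ := fun n => (e - a) / (n + 1) with hε
  have hεpos : ∀ n, 0 < ε n := fun n => by
    simp only [hε]; have : 0 < e - a := by linarith
    positivity
  have hεle : ∀ n, ε n ≤ e - a := fun n => by
    simp only [hε]
    apply div_le_self (by linarith)
    have : (0:ℝ) ≤ n := Nat.cast_nonneg n
    linarith
  have hεlim : Tendsto ε atTop (nhds 0) := by
    have := (tendsto_one_div_add_atTop_nhds_zero_nat (𝕜 := ℝ)).const_mul (e - a)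
    simp only [mul_zero] at this
    refine this.congr (fun n => ?_)
    simp only [hε]; ring
  set Ψ : ℕ → ℝ → ℝ := fun n x => (ε n)⁻¹ * ∫ t in x..(x + ε n), ψ t with hΨ
  have Ψc : ∀ n, Continuous (Ψ n) := by
    intro n
    have h0 := intervalIntegral.continuous_primitive hII 0
    have : Ψ n = fun x => (ε n)⁻¹ * ((∫ t in (0:ℝ)..(x + ε n), ψ t) - ∫ t in (0:ℝ)..x, ψ t) := by
      funext x
      simp only [hΨ]
      rw [intervalIntegral.integral_interval_sub_left (hII _ _) (hII _ _)]
    rw [this]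
    exact continuous_const.mul ((h0.comp (continuous_id.add continuous_const)).sub h0)
  have Ψlo : ∀ n x, ψ x ≤ Ψ n x := by
    intro n x
    have h1 : ∫ t in x..(x + ε n), ψ x ≤ ∫ t in x..(x + ε n), ψ t := by
      apply intervalIntegral.integral_mono_on (by linarith [hεpos n]) (by simp) (hII _ _)
      intro t ht; exact hψ ht.1
    rw [intervalIntegral.integral_const, smul_eq_mul, add_sub_cancel_left] at h1
    simp only [hΨ]
    rw [inv_mul_eq_div, le_div_iff₀ (hεpos n)]; linarith
  have Ψhi : ∀ n x, Ψ n x ≤ ψ (x + ε n) := by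
    intro n x
    have h1 : ∫ t in x..(x + ε n), ψ t ≤ ∫ t in x..(x + ε n), ψ (x + ε n) := by
      apply intervalIntegral.integral_mono_on (by linarith [hεpos n]) (hII _ _) (by simp)
      intro t ht; exact hψ ht.2
    rw [intervalIntegral.integral_const, smul_eq_mul, add_sub_cancel_left] at h1
    simp only [hΨ]
    rw [inv_mul_eq_div, div_le_iff₀ (hεpos n)]; linarith
  have Ψgap : ∀ n x y, -a ≤ x → x < y → y ≤ a → 2 * tan ((y - x) / 2) ≤ Ψ n y - Ψ n x := by
    intro n x y h1 h2 h3
    have e1 : ∫ t in y..(y + ε n), ψ t = ∫ t in x..(x + ε n), ψ (t + (y - x)) := by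
      rw [intervalIntegral.integral_comp_add_right]
      congr 1 <;> ring
    have e2 : ∫ t in x..(x + ε n), (2 * tan ((y - x) / 2)) ≤
        ∫ t in x..(x + ε n), (ψ (t + (y - x)) - ψ t) := by
      have hm : Monotone fun t => ψ (t + (y - x)) := fun s t hst => hψ (by linarith)
      apply intervalIntegral.integral_mono_on (by linarith [hεpos n]) (by simp)
        (hm.intervalIntegrable.sub (hII _ _))
      intro t ht
      have := gap t (t + (y - x)) (by linarith [ht.1]) (by linarith)
        (by linarith [ht.2, hεle n])
      rwa [add_sub_cancel_left] at this
    have hm : Monotone fun t => ψ (t + (y - x)) := fun s t hst => hψ (by linarith)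
    rw [intervalIntegral.integral_sub hm.intervalIntegrable (hII _ _), ← e1,
      intervalIntegral.integral_const, smul_eq_mul, add_sub_cancel_left] at e2
    simp only [hΨ]
    rw [← mul_sub, inv_mul_eq_div, le_div_iff₀ (hεpos n)]; linarith
  have hineq : ∀ n, lam * ∫ x in (-b)..b, v x ^ 2 ≤
      ∫ x in (-b)..b, (deriv v x - Ψ n x * v x) ^ 2 := fun n =>
    core_cont a b lam hb hba (by linarith) hlam (Ψ n) (Ψc n) (Ψgap n) v hv hv1 hv2
  have dvc : Continuous (deriv v) := hv.continuous_deriv (by norm_num)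
  have hvc : Continuous v := hv.continuous
  have hlim : Tendsto (fun n => ∫ x in (-b)..b, (deriv v x - Ψ n x * v x) ^ 2) atTop
      (nhds (∫ x in (-b)..b, (deriv v x - ψ x * v x) ^ 2)) := by
    set B := max |ψ (-b)| |ψ (b + (e - a))| with hB
    apply intervalIntegral.tendsto_integral_filter_of_dominated_convergence
      (fun x => (|deriv v x| + B * |v x|) ^ 2)
    · refine Eventually.of_forall fun n => ?_
      have := Ψc n
      apply Continuous.aestronglyMeasurable
      fun_prop
    · refine Eventually.of_forall fun n => Eventually.of_forall fun x hx => ?_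
      rw [uIoc_of_le (by linarith)] at hx
      have hbd : |Ψ n x| ≤ B := by
        have l1 := Ψlo n x
        have l2 := Ψhi n x
        have l3 : ψ (-b) ≤ ψ x := hψ hx.1.le
        have l4 : ψ (x + ε n) ≤ ψ (b + (e - a)) := hψ (by linarith [hx.2, hεle n])
        rw [abs_le]
        have l5 := (abs_le.1 (le_max_left |ψ (-b)| |ψ (b + (e - a))|)).1
        have l6 := (le_abs_self _).trans (le_max_right |ψ (-b)| |ψ (b + (e - a))|)
        rw [← hB] at l5 l6
        constructor <;> linarith
      rw [norm_pow]
      apply pow_le_pow_left₀ (norm_nonneg _)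
      rw [Real.norm_eq_abs]
      refine (abs_sub _ _).trans ?_
      rw [abs_mul]
      gcongr
    · apply Continuous.intervalIntegrable; fun_prop
    · have hct : ∀ᵐ x ∂(volume : Measure ℝ), ContinuousAt ψ x := by
        have := hψ.countable_not_continuousAt.measure_zero volume
        exact this
      filter_upwards [hct] with x hx _
      have h1 : Tendsto (fun n => Ψ n x) atTop (nhds (ψ x)) := by
        have h2 : Tendsto (fun n => ψ (x + ε n)) atTop (nhds (ψ x)) := by
          have h3 : Tendsto (fun n => x + ε n) atTop (nhds x) := by
            simpa using hεlim.const_add x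
          exact hx.tendsto.comp h3
        exact tendsto_of_tendsto_of_tendsto_of_le_of_le tendsto_const_nhds h2
          (fun n => Ψlo n x) (fun n => Ψhi n x)
      exact ((tendsto_const_nhds.sub (h1.mul_const _)).pow 2)
  exact ge_of_tendsto' hlim hineq

/-- Integration by parts against the Stieltjes measure. -/
lemma ibp_nu (e : ℝ) (he : 0 < e) (nu : Measure ℝ) (ψ : ℝ → ℝ) (hψ : Monotone ψ)
    (hnu : ∀ y ∈ Icc (-e) e, nu (Ioc (-e) y) = ENNReal.ofReal (ψ y - ψ (-e)))
    (v : ℝ → ℝ) (hv : ContDiff ℝ 1 v) (hv1 : v (-e) = 0) (hv2 : v e = 0) :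
    Integrable (fun x => v x ^ 2) (nu.restrict (Ioc (-e) e)) ∧
    ∫ x in Ioc (-e) e, v x ^ 2 ∂nu = - ∫ x in (-e)..e, 2 * v x * deriv v x * ψ x := by
  have dv : ∀ x, HasDerivAt v (deriv v x) x := fun x =>
    (hv.differentiable (by norm_num) x).hasDerivAt
  have dvc : Continuous (deriv v) := hv.continuous_deriv (by norm_num)
  have hvc : Continuous v := hv.continuous
  set g : ℝ → ℝ := fun x => 2 * v x * deriv v x with hg
  have gc : Continuous g := by simp only [hg]; fun_prop
  have dg : ∀ x, HasDerivAt (fun x => v x ^ 2) (g x) x := fun x => by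
    refine ((dv x).pow 2).congr_deriv ?_
    simp only [hg]; push_cast; ring
  set μ := nu.restrict (Ioc (-e) e) with hμ
  haveI : IsFiniteMeasure μ := ⟨by
    rw [hμ, Measure.restrict_apply_univ, hnu e ⟨by linarith, le_rfl⟩]
    exact ENNReal.ofReal_lt_top⟩
  set ρ := (volume : Measure ℝ).restrict (Ioc (-e) e) with hρ
  have hFTC : ∀ x y, ∫ t in x..y, g t = v y ^ 2 - v x ^ 2 := fun x y =>
    intervalIntegral.integral_eq_sub_of_hasDerivAt (fun t _ => dg t) (gc.intervalIntegrable _ _)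
  obtain ⟨G, hG⟩ := (isCompact_Icc (a := -e) (b := e)).exists_bound_of_continuousOn gc.continuousOn
  obtain ⟨V, hV⟩ := (isCompact_Icc (a := -e) (b := e)).exists_bound_of_continuousOn
    (hvc.pow 2).continuousOn
  have hint : Integrable (fun x => v x ^ 2) μ := by
    apply Integrable.of_bound (hvc.pow 2).aestronglyMeasurable V
    rw [hμ, ae_restrict_iff' measurableSet_Ioc]
    exact Eventually.of_forall fun x hx => hV x ⟨hx.1.le, hx.2⟩
  refine ⟨hint, ?_⟩
  -- kernel
  set k : ℝ → ℝ → ℝ := fun x t => (Ici x).indicator g t with hk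
  have hkm : Measurable (Function.uncurry k) := by
    have : Function.uncurry k = ({z : ℝ × ℝ | z.1 ≤ z.2}).indicator (fun z => g z.2) := by
      funext z
      rcases z with ⟨x, t⟩
      simp only [hk, Function.uncurry, indicator]
      rfl
    rw [this]
    exact (gc.comp continuous_snd).measurable.indicator (measurableSet_le measurable_fst measurable_snd)
  have hki : Integrable (Function.uncurry k) (μ.prod ρ) := by
    apply Integrable.of_bound hkm.aestronglyMeasurable |G|
    have h2 : ∀ᵐ z ∂(μ.prod ρ), z.2 ∈ Ioc (-e) e := by
      have : ∀ᵐ t ∂ρ, t ∈ Ioc (-e) e := ae_restrict_mem measurableSet_Ioc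
      exact Measure.quasiMeasurePreserving_snd.ae this
    filter_upwards [h2] with z hz
    rcases z with ⟨x, t⟩
    simp only [Function.uncurry, hk]
    refine (norm_indicator_le_norm_self _ _).trans ?_
    exact (hG t ⟨hz.1.le, hz.2⟩).trans (le_abs_self _)
  have hswap := integral_integral_swap hki
  have hL : ∫ x, ∫ t, k x t ∂ρ ∂μ = - ∫ x, v x ^ 2 ∂μ := by
    rw [← integral_neg]
    apply integral_congr_ae
    rw [hμ]
    filter_upwards [ae_restrict_mem measurableSet_Ioc] with x hx
    simp only [hk]
    rw [integral_indicator measurableSet_Ici, hρ, Measure.restrict_restrict measurableSet_Ici]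
    have : Ici x ∩ Ioc (-e) e = Icc x e := by
      ext t; simp only [mem_inter_iff, mem_Ici, mem_Ioc, mem_Icc]
      constructor
      · rintro ⟨h1, h2, h3⟩; exact ⟨h1, h3⟩
      · rintro ⟨h1, h2⟩; exact ⟨h1, by linarith [hx.1], h2⟩
    rw [this, integral_Icc_eq_integral_Ioc, ← intervalIntegral.integral_of_le hx.2, hFTC, hv2]
    ring
  have hR : ∫ t, ∫ x, k x t ∂μ ∂ρ = ∫ x in (-e)..e, g x * (ψ x - ψ (-e)) := by
    rw [intervalIntegral.integral_of_le (by linarith)]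
    apply integral_congr_ae
    rw [hρ]
    filter_upwards [ae_restrict_mem measurableSet_Ioc] with t ht
    have e1 : (fun x => k x t) = (Iic t).indicator (fun _ => g t) := by
      funext x
      simp only [hk, indicator, mem_Ici, mem_Iic]
    rw [e1, integral_indicator measurableSet_Iic, setIntegral_const, hμ, smul_eq_mul]
    have e2 : (nu.restrict (Ioc (-e) e)).real (Iic t) = ψ t - ψ (-e) := by
      rw [measureReal_def, Measure.restrict_apply measurableSet_Iic]
      have : Iic t ∩ Ioc (-e) e = Ioc (-e) t := by
        ext s; simp only [mem_inter_iff, mem_Iic, mem_Ioc]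
        constructor
        · rintro ⟨h1, h2, h3⟩; exact ⟨h2, h1⟩
        · rintro ⟨h1, h2⟩; exact ⟨h2, h1, h2.trans ht.2⟩
      rw [this, hnu t ⟨ht.1.le, ht.2⟩, ENNReal.toReal_ofReal]
      exact sub_nonneg.2 (hψ ht.1.le)
    rw [e2]; ring
  rw [hL, hR] at hswap
  have i1 : IntervalIntegrable (fun x => g x * ψ x) volume (-e) e :=
    (hψ.intervalIntegrable).continuousOn_mul gc.continuousOn
  have i2 : IntervalIntegrable (fun x => g x * ψ (-e)) volume (-e) e :=
    (gc.mul continuous_const).intervalIntegrable _ _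
  simp only [mul_sub] at hswap
  rw [intervalIntegral.integral_sub i1 i2, intervalIntegral.integral_mul_const, hFTC, hv1, hv2] at hswap
  simp only [hg] at hswap
  linarith




/-- cutoff derivative -/
def rhoC (ε t : ℝ) : ℝ := max 0 (min 1 (|t| / ε - 1))
/-- smooth soft-threshold -/
def Tcut (ε t : ℝ) : ℝ := ∫ s in (0:ℝ)..t, rhoC ε s

lemma rhoC_cont (ε : ℝ) : Continuous (rhoC ε) := by unfold rhoC; fun_prop
lemma rhoC_nonneg (ε t : ℝ) : 0 ≤ rhoC ε t := le_max_left _ _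
lemma rhoC_le (ε t : ℝ) : rhoC ε t ≤ 1 := max_le zero_le_one (min_le_left _ _)
lemma rhoC_zero (ε t : ℝ) (hε : 0 < ε) (h : |t| ≤ ε) : rhoC ε t = 0 := by
  unfold rhoC
  apply max_eq_left
  refine (min_le_right _ _).trans ?_
  rw [sub_nonpos, div_le_one hε]; exact h
lemma rhoC_one (ε t : ℝ) (hε : 0 < ε) (h : 2 * ε ≤ |t|) : rhoC ε t = 1 := by
  unfold rhoC
  have : 1 ≤ |t| / ε - 1 := by
    have : 2 ≤ |t| / ε := by rw [le_div_iff₀ hε]; exact h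
    linarith
  rw [min_eq_left this]; simp

lemma Tcut_deriv (ε t : ℝ) : HasDerivAt (Tcut ε) (rhoC ε t) t :=
  intervalIntegral.integral_hasDerivAt_right ((rhoC_cont ε).intervalIntegrable _ _)
    ((rhoC_cont ε).stronglyMeasurableAtFilter _ _) (rhoC_cont ε).continuousAt

lemma Tcut_contDiff (ε : ℝ) : ContDiff ℝ 1 (Tcut ε) := by
  rw [contDiff_one_iff_deriv]
  refine ⟨fun t => (Tcut_deriv ε t).differentiableAt, ?_⟩
  have : deriv (Tcut ε) = rhoC ε := funext fun t => (Tcut_deriv ε t).deriv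
  rw [this]; exact rhoC_cont ε

lemma Tcut_abs (ε t : ℝ) : |Tcut ε t| ≤ |t| := by
  have := intervalIntegral.norm_integral_le_of_norm_le_const (a := 0) (b := t) (C := 1)
    (f := rhoC ε) (fun s _ => by
      rw [Real.norm_eq_abs, abs_of_nonneg (rhoC_nonneg ε s)]; exact rhoC_le ε s)
  simpa [Tcut] using this

lemma Tcut_zero (ε t : ℝ) (hε : 0 < ε) (h : |t| ≤ ε) : Tcut ε t = 0 := by
  unfold Tcut
  rw [intervalIntegral.integral_congr (g := fun _ => 0)]
  · simp
  · intro s hs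
    apply rhoC_zero ε s hε
    refine le_trans ?_ h
    have := abs_sub_left_of_mem_uIcc hs
    simpa using this

lemma Tcut_lim (ε : ℕ → ℝ) (hε : ∀ n, 0 < ε n) (hl : Tendsto ε atTop (nhds 0)) (t : ℝ) :
    Tendsto (fun n => Tcut (ε n) t) atTop (nhds t) := by
  have : Tendsto (fun n => ∫ s in (0:ℝ)..t, rhoC (ε n) s) atTop (nhds (∫ s in (0:ℝ)..t, (1:ℝ))) := by
    apply intervalIntegral.tendsto_integral_filter_of_dominated_convergence (fun _ => (1:ℝ))
    · exact Eventually.of_forall fun n => (rhoC_cont _).aestronglyMeasurable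
    · refine Eventually.of_forall fun n => Eventually.of_forall fun s _ => ?_
      rw [Real.norm_eq_abs, abs_of_nonneg (rhoC_nonneg _ s)]; exact rhoC_le _ s
    · simp
    · have h0 : ∀ᵐ s ∂(volume : Measure ℝ), s ≠ 0 := by
        simp [ae_iff]
      filter_upwards [h0] with s hs _
      apply tendsto_const_nhds.congr'
      have : 0 < |s| / 2 := by have := abs_pos.2 hs; linarith
      filter_upwards [hl.eventually (gt_mem_nhds this)] with n hn
      rw [rhoC_one _ _ (hε n) (by linarith)]
  simpa [Tcut] using this

lemma compact_case (d : ℝ) (hd : d ≤ π) (P : PsiA)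
    (hdom : P.dom = Ioo (-(d / 2)) (d / 2)) (b : ℝ) (hb : 0 < b) (hbd : b < d / 2)
    (v : ℝ → ℝ) (hv : ContDiff ℝ 1 v) (hv0 : ∀ x, b ≤ |x| → v x = 0) :
    ENNReal.ofReal (3 + 2 * cos (d / 2) ^ 3) *
      ∫⁻ x in Ioo (-(π / 2)) (π / 2), ENNReal.ofReal (v x ^ 2) ≤
    (∫⁻ x in Ioo (-(π / 2)) (π / 2), ENNReal.ofReal ((deriv v x) ^ 2)) +
      ∫⁻ x in Ioo (-(π / 2)) (π / 2), ENNReal.ofReal ((v x) ^ 2) ∂P.qM := by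
  obtain ⟨a, hba, had⟩ := exists_between hbd
  obtain ⟨e, hae, hed⟩ := exists_between had
  have he0 : 0 < e := by linarith
  set ψ : ℝ → ℝ := fun x => P.psi (max (-e) (min x e)) with hψdef
  have hclamp : ∀ x, max (-e) (min x e) ∈ P.dom := by
    intro x
    rw [hdom]
    refine ⟨lt_of_lt_of_le (by linarith) (le_max_left _ _), ?_⟩
    exact max_lt (by linarith) ((min_le_right _ _).trans_lt hed)
  have hψ : Monotone ψ := fun x y hxy => P.mono (hclamp x) (hclamp y)
    (max_le_max le_rfl (min_le_min hxy le_rfl))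
  have hψe : ∀ x ∈ Icc (-e) e, ψ x = P.psi x := by
    intro x hx
    simp only [hψdef]
    rw [min_eq_left hx.2, max_eq_right hx.1]
  have hedom : ∀ x ∈ Icc (-e) e, x ∈ P.dom := by
    intro x hx; rw [hdom]; exact ⟨by linarith [hx.1], by linarith [hx.2]⟩
  have gap : ∀ x y, -e ≤ x → x < y → y ≤ e → 2 * tan ((y - x) / 2) ≤ ψ y - ψ x := by
    intro x y h1 h2 h3
    have hx : x ∈ Icc (-e) e := ⟨h1, by linarith⟩
    have hy : y ∈ Icc (-e) e := ⟨by linarith, h3⟩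
    rw [hψe x hx, hψe y hy]
    exact P.gap (hedom x hx) (hedom y hy) h2
  have hvb : v b = 0 := hv0 b (le_abs_self b)
  have hvnb : v (-b) = 0 := hv0 (-b) (by rw [abs_neg]; exact le_abs_self b)
  have hcore := core_mono a b e _ hb hba hae (by linarith) rfl ψ hψ gap v hv hvnb hvb
  have hnu : ∀ y ∈ Icc (-b) b, P.nu (Ioc (-b) y) = ENNReal.ofReal (ψ y - ψ (-b)) := by
    intro y hy
    have h1 : -b ∈ Icc (-e) e := ⟨by linarith, by linarith⟩
    have h2 : y ∈ Icc (-e) e := ⟨by linarith [hy.1], by linarith [hy.2]⟩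
    rw [hψe _ h1, hψe _ h2]
    exact P.nu_eq (hedom _ h1) (hedom _ h2) hy.1
  obtain ⟨hnuint, hibp⟩ := ibp_nu b hb P.nu ψ hψ hnu v hv hvnb hvb
  have dvc : Continuous (deriv v) := hv.continuous_deriv (by norm_num)
  have hvc : Continuous v := hv.continuous
  set J := Ioc (-b) b with hJ
  have hJI : J ⊆ Ioo (-(π / 2)) (π / 2) := fun x hx => ⟨by linarith [hx.1], by linarith [hx.2]⟩
  have hJd : J ⊆ P.dom := fun x hx => hedom x ⟨by linarith [hx.1], by linarith [hx.2]⟩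
  have hψm : Measurable ψ := hψ.measurable
  have ic : ∀ g : ℝ → ℝ, Continuous g → Integrable g (volume.restrict J) := fun g hg =>
    (hg.integrableOn_Icc (a := -b) (b := b)).mono_set Ioc_subset_Icc_self
  -- ψ bounded on J
  have hψb : ∀ x, |ψ x| ≤ max |P.psi (-e)| |P.psi e| := by
    intro x
    have m1 : P.psi (-e) ≤ ψ x := P.mono (hedom _ ⟨le_rfl, by linarith⟩) (hclamp x) (le_max_left _ _)
    have m2 : ψ x ≤ P.psi e := P.mono (hclamp x) (hedom _ ⟨by linarith, le_rfl⟩)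
      (max_le (by linarith) (min_le_right _ _))
    rw [abs_le]
    have l5 := (abs_le.1 (le_max_left |P.psi (-e)| |P.psi e|)).1
    have l6 := (le_abs_self _).trans (le_max_right |P.psi (-e)| |P.psi e|)
    constructor <;> linarith
  set Bd := max |P.psi (-e)| |P.psi e|
  have hBd : 0 ≤ Bd := (abs_nonneg _).trans (hψb 0)
  have iψ1 : Integrable (fun x => 2 * v x * deriv v x * ψ x) (volume.restrict J) := by
    refine Integrable.mul_bdd (c := Bd) (ic (fun x => 2 * v x * deriv v x) (by fun_prop))
      hψm.aestronglyMeasurable (Eventually.of_forall fun x => hψb x)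
  have iψ2 : Integrable (fun x => v x ^ 2 * ψ x ^ 2) (volume.restrict J) := by
    refine Integrable.mul_bdd (c := Bd ^ 2) (ic (fun x => v x ^ 2) (by fun_prop))
      (hψm.pow_const 2).aestronglyMeasurable (Eventually.of_forall fun x => ?_)
    rw [norm_pow]; exact pow_le_pow_left₀ (norm_nonneg _) (hψb x) 2
  have hle : -b ≤ b := by linarith
  rw [intervalIntegral.integral_of_le hle, intervalIntegral.integral_of_le hle] at hcore
  rw [intervalIntegral.integral_of_le hle] at hibp
  have hexp : ∫ x in J, (deriv v x - ψ x * v x) ^ 2 =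
      (∫ x in J, deriv v x ^ 2) + ((∫ x in J, v x ^ 2 ∂P.nu) + ∫ x in J, v x ^ 2 * ψ x ^ 2) := by
    rw [hibp]
    have : (fun x => (deriv v x - ψ x * v x) ^ 2) =
        fun x => (deriv v x ^ 2 - 2 * v x * deriv v x * ψ x) + v x ^ 2 * ψ x ^ 2 := by
      funext x; ring
    have i0 := ic (fun x => deriv v x ^ 2) (by fun_prop)
    have i01 : Integrable (fun x => deriv v x ^ 2 - 2 * v x * deriv v x * ψ x)
      (volume.restrict J) := i0.sub iψ1
    rw [this, integral_add i01 iψ2, integral_sub i0 iψ1]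
    ring
  rw [hexp] at hcore
  have hcosle : cos (d / 2) ≤ cos a :=
    cos_le_cos_of_nonneg_of_le_pi (by linarith) (by linarith [pi_pos]) had.le
  have hcosd : 0 ≤ cos (d / 2) := cos_nonneg_of_mem_Icc ⟨by linarith, by linarith⟩
  have hlamle : 3 + 2 * cos (d / 2) ^ 3 ≤ 3 + 2 * cos a ^ 3 := by
    have := pow_le_pow_left₀ hcosd hcosle 3
    linarith
  have hv2nn : 0 ≤ ∫ x in J, v x ^ 2 := integral_nonneg fun x => sq_nonneg _
  have hreal : (3 + 2 * cos (d / 2) ^ 3) * ∫ x in J, v x ^ 2 ≤ (∫ x in J, deriv v x ^ 2) +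
      ((∫ x in J, v x ^ 2 ∂P.nu) + ∫ x in J, v x ^ 2 * ψ x ^ 2) :=
    (mul_le_mul_of_nonneg_right hlamle hv2nn).trans hcore
  -- to ENNReal
  have E1 : ∫⁻ x in Ioo (-(π / 2)) (π / 2), ENNReal.ofReal (v x ^ 2)
      = ENNReal.ofReal (∫ x in J, v x ^ 2) := by
    rw [ofReal_integral_eq_lintegral_ofReal (ic (fun x => v x ^ 2) (by fun_prop))
      (Eventually.of_forall fun x => sq_nonneg _)]
    symm
    rw [← lintegral_indicator measurableSet_Ioc, ← lintegral_indicator measurableSet_Ioo]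
    apply lintegral_congr
    intro x
    by_cases hx : x ∈ J
    · rw [indicator_of_mem hx, indicator_of_mem (hJI hx)]
    rw [indicator_of_notMem hx]
    have : v x = 0 := by
      apply hv0
      by_contra hcon
      push Not at hcon
      rw [abs_lt] at hcon
      exact hx ⟨hcon.1, hcon.2.le⟩
    simp [indicator, this]
  have E2 : ENNReal.ofReal (∫ x in J, deriv v x ^ 2) ≤
      ∫⁻ x in Ioo (-(π / 2)) (π / 2), ENNReal.ofReal ((deriv v x) ^ 2) := by
    rw [ofReal_integral_eq_lintegral_ofReal (ic (fun x => deriv v x ^ 2) (by fun_prop))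
      (Eventually.of_forall fun x => sq_nonneg _)]
    exact lintegral_mono_set hJI
  have hmeas : P.nu.restrict J + (volume.restrict J).withDensity (fun x => ENNReal.ofReal (ψ x ^ 2))
      ≤ P.qM.restrict (Ioo (-(π / 2)) (π / 2)) := by
    refine le_trans ?_ (Measure.restrict_mono hJI le_rfl)
    unfold PsiA.qM
    rw [Measure.restrict_add, Measure.restrict_add, Measure.restrict_restrict_of_subset hJd,
      restrict_withDensity measurableSet_Ioc, Measure.restrict_restrict_of_subset hJd]
    have hcongr : (volume.restrict J).withDensity (fun x => ENNReal.ofReal (ψ x ^ 2)) =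
        (volume.restrict J).withDensity (fun x => ENNReal.ofReal (P.psi x ^ 2)) := by
      apply withDensity_congr_ae
      filter_upwards [ae_restrict_mem measurableSet_Ioc] with x hx
      rw [hψe x ⟨by linarith [hx.1], by linarith [hx.2]⟩]
    rw [hcongr]
    exact Measure.le_add_right le_rfl
  have E3 : ENNReal.ofReal ((∫ x in J, v x ^ 2 ∂P.nu) + ∫ x in J, v x ^ 2 * ψ x ^ 2) ≤
      ∫⁻ x in Ioo (-(π / 2)) (π / 2), ENNReal.ofReal ((v x) ^ 2) ∂P.qM := by
    refine le_trans ?_ (lintegral_mono' hmeas le_rfl)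
    rw [lintegral_add_measure, ENNReal.ofReal_add (integral_nonneg fun x => sq_nonneg _)
      (integral_nonneg fun x => by positivity)]
    apply add_le_add
    · rw [ofReal_integral_eq_lintegral_ofReal hnuint (Eventually.of_forall fun x => sq_nonneg _)]
    · have hm1 : Measurable (fun x => ENNReal.ofReal (ψ x ^ 2)) :=
        (hψm.pow_const 2).ennreal_ofReal
      have hm2 : Measurable (fun x => ENNReal.ofReal (v x ^ 2)) :=
        (hvc.pow 2).measurable.ennreal_ofReal
      rw [ofReal_integral_eq_lintegral_ofReal iψ2
        (Eventually.of_forall fun x => by positivity),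
        lintegral_withDensity_eq_lintegral_mul _ hm1 hm2]
      apply lintegral_mono
      intro x
      simp only [Pi.mul_apply]
      rw [mul_comm, ENNReal.ofReal_mul (sq_nonneg _)]
  rw [E1, ← ENNReal.ofReal_mul (by positivity)]
  refine (ENNReal.ofReal_le_ofReal hreal).trans ?_
  rw [ENNReal.ofReal_add (integral_nonneg fun x => sq_nonneg _)
    (add_nonneg (integral_nonneg fun x => sq_nonneg _) (integral_nonneg fun x => by positivity))]
  exact add_le_add E2 E3

lemma full_case (d : ℝ) (hd0 : 0 < d) (hd : d ≤ π) (P : PsiA)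
    (hdom : P.dom = Ioo (-(d / 2)) (d / 2))
    (v : ℝ → ℝ) (hv : ContDiff ℝ 1 v) (hv0 : ∀ x, d / 2 ≤ |x| → v x = 0) :
    ENNReal.ofReal (3 + 2 * cos (d / 2) ^ 3) *
      ∫⁻ x in Ioo (-(π / 2)) (π / 2), ENNReal.ofReal (v x ^ 2) ≤
    (∫⁻ x in Ioo (-(π / 2)) (π / 2), ENNReal.ofReal ((deriv v x) ^ 2)) +
      ∫⁻ x in Ioo (-(π / 2)) (π / 2), ENNReal.ofReal ((v x) ^ 2) ∂P.qM := by
  set R := (∫⁻ x in Ioo (-(π / 2)) (π / 2), ENNReal.ofReal ((deriv v x) ^ 2)) +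
      ∫⁻ x in Ioo (-(π / 2)) (π / 2), ENNReal.ofReal ((v x) ^ 2) ∂P.qM with hR
  have hvc : Continuous v := hv.continuous
  have dv : ∀ x, HasDerivAt v (deriv v x) x := fun x =>
    (hv.differentiable (by norm_num) x).hasDerivAt
  set ε : ℕ → ℝ := fun n => 1 / ((n:ℝ) + 1) with hε
  have hεpos : ∀ n, 0 < ε n := fun n => by simp only [hε]; positivity
  have hεlim : Tendsto ε atTop (nhds 0) := tendsto_one_div_add_atTop_nhds_zero_nat
  have hn : ∀ n, ENNReal.ofReal (3 + 2 * cos (d / 2) ^ 3) *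
      ∫⁻ x in Ioo (-(π / 2)) (π / 2), ENNReal.ofReal (Tcut (ε n) (v x) ^ 2) ≤ R := by
    intro n
    have hw : ContDiff ℝ 1 (fun x => Tcut (ε n) (v x)) := (Tcut_contDiff _).comp hv
    have hsupp : ∃ b, 0 < b ∧ b < d / 2 ∧ ∀ x, b ≤ |x| → |v x| ≤ ε n := by
      set S := Icc (-(d / 2)) (d / 2) ∩ {x | ε n ≤ |v x|} with hS
      have hSc : IsCompact S := isCompact_Icc.inter_right
        (isClosed_le continuous_const hvc.abs)
      have hSlt : ∀ x ∈ S, |x| < d / 2 := by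
        intro x hx
        by_contra hcon
        push Not at hcon
        have h1 := hv0 x hcon
        have h2 : ε n ≤ |v x| := hx.2
        rw [h1, abs_zero] at h2
        linarith [hεpos n]
      obtain ⟨b0, hb0, hb0'⟩ : ∃ b0, b0 < d / 2 ∧ ∀ x ∈ S, |x| ≤ b0 := by
        rcases S.eq_empty_or_nonempty with h | h
        · exact ⟨0, by linarith, by rw [h]; simp⟩
        · obtain ⟨x, hx, hmax⟩ := hSc.exists_isMaxOn h continuous_abs.continuousOn
          exact ⟨|x|, hSlt x hx, fun y hy => hmax hy⟩
      obtain ⟨b, hb1, hb2⟩ := exists_between (max_lt hb0 (by linarith : (0:ℝ) < d / 2))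
      refine ⟨b, (le_max_right _ _).trans_lt hb1, hb2, fun x hx => ?_⟩
      by_contra hcon
      push Not at hcon
      have hxd : |x| < d / 2 := by
        by_contra h
        push Not at h
        rw [hv0 x h, abs_zero] at hcon
        linarith [hεpos n]
      have : x ∈ S := ⟨⟨(abs_lt.1 hxd).1.le, (abs_lt.1 hxd).2.le⟩, hcon.le⟩
      have := hb0' x this
      have := (le_max_left b0 0).trans_lt hb1
      linarith
    obtain ⟨b, hb0, hbd, hbv⟩ := hsupp
    refine (compact_case d hd P hdom b hb0 hbd _ hw
      (fun x hx => Tcut_zero _ _ (hεpos n) (hbv x hx))).trans ?_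
    apply add_le_add
    · apply lintegral_mono
      intro x
      apply ENNReal.ofReal_le_ofReal
      have : HasDerivAt (fun x => Tcut (ε n) (v x)) (rhoC (ε n) (v x) * deriv v x) x :=
        (Tcut_deriv (ε n) (v x)).comp x (dv x)
      rw [this.deriv, mul_pow]
      have h1 : rhoC (ε n) (v x) ^ 2 ≤ 1 := pow_le_one₀ (rhoC_nonneg _ _) (rhoC_le _ _)
      nlinarith [sq_nonneg (deriv v x)]
    · apply lintegral_mono
      intro x
      apply ENNReal.ofReal_le_ofReal
      exact sq_le_sq.2 (Tcut_abs _ _)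
  have hptw : ∀ x, Tendsto (fun n => ENNReal.ofReal (Tcut (ε n) (v x) ^ 2)) atTop
      (nhds (ENNReal.ofReal (v x ^ 2))) := fun x =>
    ENNReal.tendsto_ofReal ((Tcut_lim ε hεpos hεlim (v x)).pow 2)
  have hm2 : Measurable (fun x => ENNReal.ofReal (v x ^ 2)) :=
    (hvc.pow 2).measurable.ennreal_ofReal
  have hm3 : ∀ n, Measurable (fun x => ENNReal.ofReal (Tcut (ε n) (v x) ^ 2)) := fun n =>
    (((Tcut_contDiff (ε n)).continuous.comp hvc).pow 2).measurable.ennreal_ofReal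
  set κ := ENNReal.ofReal (3 + 2 * cos (d / 2) ^ 3) with hκ
  calc κ * ∫⁻ x in Ioo (-(π / 2)) (π / 2), ENNReal.ofReal (v x ^ 2)
      = ∫⁻ x in Ioo (-(π / 2)) (π / 2), κ * ENNReal.ofReal (v x ^ 2) := by
        rw [lintegral_const_mul _ hm2]
    _ = ∫⁻ x in Ioo (-(π / 2)) (π / 2),
          liminf (fun n => κ * ENNReal.ofReal (Tcut (ε n) (v x) ^ 2)) atTop := by
        apply lintegral_congr
        intro x
        exact ((ENNReal.Tendsto.const_mul (hptw x) (Or.inr ENNReal.ofReal_ne_top)).liminf_eq).symm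
    _ ≤ liminf (fun n => ∫⁻ x in Ioo (-(π / 2)) (π / 2),
          κ * ENNReal.ofReal (Tcut (ε n) (v x) ^ 2)) atTop := by
        apply lintegral_liminf_le
        intro n
        exact (hm3 n).const_mul _
    _ ≤ R := by
        apply liminf_le_of_le (by isBoundedDefault)
        intro B hB
        obtain ⟨n, hBn⟩ := hB.exists
        refine hBn.trans ?_
        rw [lintegral_const_mul _ (hm3 n)]
        exact hn n

lemma vanish_outside (d : ℝ) (hd0 : 0 < d) (P : PsiA)
    (hdom : P.dom = Ioo (-(d / 2)) (d / 2))
    (v : ℝ → ℝ) (hv : Continuous v) (hv0 : ∀ x ∉ Ioo (-(π / 2)) (π / 2), v x = 0)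
    (hfin : ∫⁻ x in Ioo (-(π / 2)) (π / 2), ENNReal.ofReal ((v x) ^ 2) ∂P.qM ≠ ⊤) :
    ∀ x, d / 2 ≤ |x| → v x = 0 := by
  set I := Ioo (-(π / 2)) (π / 2) with hI
  have hmeas : (∞ : ℝ≥0∞) • (volume.restrict (I \ P.dom)) ≤ P.qM.restrict I := by
    unfold PsiA.qM
    rw [Measure.restrict_add, Measure.restrict_smul, Measure.restrict_restrict measurableSet_Ioo,
      inter_eq_right.2 sdiff_subset]
    exact Measure.le_add_left le_rfl
  have h1 : (∞ : ℝ≥0∞) * ∫⁻ x in I \ P.dom, ENNReal.ofReal (v x ^ 2) ≠ ⊤ := by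
    rw [← smul_eq_mul, ← lintegral_smul_measure]
    exact ne_top_of_le_ne_top hfin (lintegral_mono' hmeas le_rfl)
  have h2 : ∫⁻ x in I \ P.dom, ENNReal.ofReal (v x ^ 2) = 0 := by
    by_contra hne
    exact h1 (ENNReal.top_mul hne)
  have hmI : MeasurableSet (I \ P.dom) := by
    rw [hdom]; exact measurableSet_Ioo.diff measurableSet_Ioo
  have hm2 : Measurable (fun x => ENNReal.ofReal (v x ^ 2)) :=
    (hv.pow 2).measurable.ennreal_ofReal
  rw [lintegral_eq_zero_iff hm2] at h2
  have h3 : ∀ᵐ x ∂(volume : Measure ℝ), x ∈ I \ P.dom → v x = 0 := by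
    rw [← ae_restrict_iff' hmI]
    filter_upwards [h2] with x hx
    have : v x ^ 2 ≤ 0 := by simpa using hx
    exact pow_eq_zero_iff (two_ne_zero) |>.1 (le_antisymm this (sq_nonneg _))
  -- every interval in I \ dom contains a zero
  have h4 : ∀ s t, s < t → Ioo s t ⊆ I \ P.dom → ∃ y ∈ Ioo s t, v y = 0 := by
    intro s t hst hsub
    by_contra hcon
    push Not at hcon
    have : volume (Ioo s t) = 0 := by
      refine measure_mono_null ?_ h3
      intro y hy hy'
      exact hcon y hy (hy' (hsub hy))
    rw [Real.volume_Ioo, ENNReal.ofReal_eq_zero] at this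
    linarith
  intro x hx
  by_contra hne
  have hxI : x ∈ I := by
    by_contra h; exact hne (hv0 x h)
  have hopen : ∀ᶠ y in nhds x, v y ≠ 0 := hv.continuousAt.eventually_ne hne
  obtain ⟨r, hr, hball⟩ := Metric.eventually_nhds_iff.1 hopen
  rcases le_abs.1 hx with h | h
  · obtain ⟨y, hy, hy0⟩ := h4 x (min (x + r) (π / 2)) (lt_min (by linarith) hxI.2) (by
      intro y hy
      have hy2 := hy.2.trans_le (min_le_right _ _)
      refine ⟨⟨by linarith [hxI.1, hy.1], hy2⟩, ?_⟩
      rw [hdom]; intro hy3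
      linarith [hy3.2, hy.1])
    have hy2 := hy.2.trans_le (min_le_left _ _)
    refine hball (y := y) ?_ hy0
    rw [Real.dist_eq, abs_lt]; constructor <;> linarith [hy.1]
  · obtain ⟨y, hy, hy0⟩ := h4 (max (x - r) (-(π / 2))) x (max_lt (by linarith) hxI.1) (by
      intro y hy
      have hy2 := (le_max_right _ _).trans_lt hy.1
      refine ⟨⟨hy2, by linarith [hxI.2, hy.2]⟩, ?_⟩
      rw [hdom]; intro hy3
      linarith [hy3.1, hy.2])
    have hy2 := (le_max_left _ _).trans_lt hy.1
    refine hball (y := y) ?_ hy0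
    rw [Real.dist_eq, abs_lt]; constructor <;> linarith [hy.2]

/-- Theorem 2.8 (i) / `t:1dextra` (i): there exists an absolute constant
`C > 0` such that, for any `q = ψ' + ψ²` with `ψ ∈ 𝒜(I_π)` whose finiteness domain is
`I_d = (-d/2, d/2)` with `d ≤ π`, it holds `λ₁(I_d, q) ≥ 3 + C (π - d)³`. -/
theorem refined_lower_bound_small_domain :
    ∃ C : ℝ, 0 < C ∧
      ∀ d : ℝ, 0 < d → d ≤ π →
        ∀ P : PsiA, P.dom = Ioo (-(d / 2)) (d / 2) →
          3 + ENNReal.ofReal (C * (π - d) ^ 3) ≤ lam1 (-(π / 2)) (π / 2) P.qM := by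
  refine ⟨2 / π ^ 3, by positivity, ?_⟩
  intro d hd0 hd P hdom
  unfold lam1
  refine le_iInf fun v => le_iInf fun hv => ?_
  obtain ⟨⟨hvC, hv0⟩, hN⟩ := hv
  unfold dirRQ
  have hvc : Continuous v := hvC.continuous
  have hNtop : (∫⁻ x in Ioo (-(π / 2)) (π / 2), ENNReal.ofReal ((v x) ^ 2)) ≠ ⊤ := by
    have hi : Integrable (fun x => v x ^ 2) (volume.restrict (Ioo (-(π / 2)) (π / 2))) :=
      ((hvc.pow 2).integrableOn_Icc (a := -(π / 2)) (b := π / 2)).mono_set Ioo_subset_Icc_self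
    exact hi.lintegral_lt_top.ne
  rw [ENNReal.le_div_iff_mul_le (Or.inl hN) (Or.inl hNtop)]
  by_cases hfin : ∫⁻ x in Ioo (-(π / 2)) (π / 2), ENNReal.ofReal ((v x) ^ 2) ∂P.qM = ⊤
  · rw [hfin, add_top]; exact le_top
  have hvan := vanish_outside d hd0 P hdom v hvc hv0 hfin
  refine le_trans ?_ (full_case d hd0 hd P hdom v hvC hvan)
  refine mul_le_mul_left ?_ _
  have hsin : (π - d) / π ≤ cos (d / 2) := by
    have h1 := mul_le_sin (x := (π - d) / 2) (by linarith) (by linarith)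
    have h2 : sin ((π - d) / 2) = cos (d / 2) := by
      rw [← sin_pi_div_two_sub]; congr 1; ring
    rw [h2] at h1
    have h3 : 2 / π * ((π - d) / 2) = (π - d) / π := by ring
    linarith
  have h0 : 0 ≤ (π - d) / π := div_nonneg (by linarith) pi_pos.le
  have hcube := pow_le_pow_left₀ h0 hsin 3
  have h3 : (3 : ℝ≥0∞) = ENNReal.ofReal 3 := by simp
  have hC : 2 / π ^ 3 * (π - d) ^ 3 = 2 * ((π - d) / π) ^ 3 := by
    rw [div_pow]; ring
  rw [h3, ← ENNReal.ofReal_add (by norm_num) (by rw [hC]; positivity), hC]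
  apply ENNReal.ofReal_le_ofReal
  linarith
end
end
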